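/- arXiv:1201.1139 — 2 statements merged into one kernel-verified Lean document; each statement's English description precedes it below -/
import Mathlib

section
/- Let S ⊂ SL₂(ℤ) be a finite symmetric set with |S| ≥ 4 which freely generates a free subgroup of rank |S|/2. Let Δ = max_{s∈S} ‖s‖, τ = 1/log Δ, δ = 1/3024, δ₂ = τ·log(|S|−1)/8, and A = log(1/δ₂)/log(1+δ). Then for every prime p ≥ 17 with p > exp(2/τ) such that the reduction of S modulo p generates SL₂(𝔽_p), there exists a natural number n with (n : ℝ) ≤ 3^(max(⌈A⌉,0)) · τ · log(p/2) such that ((S mod p) ∪ {1})^(n) = SL₂(𝔽_p); that is, the diameter of the Cayley graph of SL₂(𝔽_p) with respect to S mod p is at most 3^(max(⌈A⌉,0)) · τ · log(p/2). -/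
open Pointwise

instance {n : Type*} [DecidableEq n] [Fintype n] {R : Type*} [CommRing R] [DecidableEq R] :
    DecidableEq (Matrix.SpecialLinearGroup n R) := Subtype.instDecidableEq

/-- The ℓ² operator norm of an integer matrix in `SL₂(ℤ)`, i.e. the norm of the induced
linear operator on Euclidean `ℝ²`. -/
noncomputable def sl2zOpNorm (g : Matrix.SpecialLinearGroup (Fin 2) ℤ) : ℝ :=
  ‖Matrix.toEuclideanCLM (𝕜 := ℝ)
    ((g : Matrix (Fin 2) (Fin 2) ℤ).map (Int.cast : ℤ → ℝ))‖

/-!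
The engine is a product theorem in the style of Helfgott: a symmetric generating set `H ∋ 1` of
`SL₂(F)` which is neither bounded nor of size at least about `|F|^(8/3)` satisfies
`|H|^101 ≤ |H^72|^100`.

Fix a trace `t ≠ 0, ±2`. For given `x, y`, the conditions `tr b = tr (bx) = tr (by) = t` put `b` on
a line meeting the quadric `det = 1`, so apart from degenerate triples at most two such `b` exist.
Counting triples `(b⁻¹a, b⁻¹c)` shows that `H^k` has at most about `|H^(4k+2)|^(2/3)` elements of
trace `t`. By orbit-stabilizer, every regular semisimple element of `H²` of nonzero trace then has
a centralizer which is rich in elements of `H²`, say at least `M` of them. Now pivot on a torus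
`T` which `H²` meets generically. Either some conjugate `T'` of `T` is met by `H²` but `hT'h⁻¹` is
not, for an `h ∈ H`; then the products of `H` with the `M` elements of `hT'h⁻¹ ∩ H⁴` hardly
collide, and `H⁵` is large. Or `H²` meets all conjugates of `T`, in at least `M` elements each,
so that `|H²|` is at least about `|F|² M`.

A set of size at least `4 |F|^(8/3)` generates in `64` steps: many upper and lower triangular
elements, together with a second-moment count of incidences between points and lines, produce all
transvections.

The starting size comes from freeness. Reduced words of length `m` have entries at most `Δ^m` in
absolute value, hence stay distinct modulo `p` as long as `Δ^m ≤ p / 2`, which gives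
`(|S| - 1)^m` elements.
-/

namespace SL2Growth

open Finset
open scoped MatrixGroups

section Group

variable {G : Type*} [Group G]

theorem card_le_card_mul_of_fiber {β : Type*} {A K : Finset G} {T : Finset β}
    {f : G → β} (hf : ∀ a ∈ A, f a ∈ T)
    (hK : ∀ a ∈ A, ∀ b ∈ A, f a = f b → a⁻¹ * b ∈ K) : #A ≤ #T * #K := by
  classical
  rw [mul_comm]
  refine card_le_mul_card_image_of_maps_to hf _ fun t _ ↦ ?_
  obtain h | ⟨a, ha⟩ := {a ∈ A | f a = t}.eq_empty_or_nonempty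
  · simp [h]
  rw [mem_filter] at ha
  refine card_le_card_of_injOn (a⁻¹ * ·) (fun b hb ↦ ?_) (mul_right_injective _).injOn
  obtain ⟨hbA, hb⟩ := mem_filter.mp hb
  exact hK a ha.1 b hbA (ha.2.trans hb.symm)

variable [DecidableEq G] {H : Finset G}

theorem mem_pow_of_mem {a b : G} {m n k : ℕ} (ha : a ∈ H ^ m) (hb : b ∈ H ^ n)
    (hk : m + n = k := by norm_num) : a * b ∈ H ^ k :=
  hk ▸ pow_add H m n ▸ mul_mem_mul ha hb

theorem inv_pow_eq (hs : H⁻¹ = H) (k : ℕ) : (H ^ k)⁻¹ = H ^ k := by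
  rw [← inv_pow, hs]

theorem inv_mem_pow (hs : H⁻¹ = H) {k : ℕ} {g : G} (hg : g ∈ H ^ k) : g⁻¹ ∈ H ^ k :=
  inv_pow_eq hs k ▸ inv_mem_inv hg

theorem inv_image_union_one {G' : Type*} [Group G'] [DecidableEq G'] (hs : H⁻¹ = H) (f : G →* G') :
    (H.image f ∪ {1})⁻¹ = H.image f ∪ {1} := by
  rw [union_comm, ← insert_eq, inv_insert, inv_one, ← image_inv, hs]

theorem closure_induction_of_inv_eq (hs : H⁻¹ = H) (hgen : Subgroup.closure (H : Set G) = ⊤)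
    {P : G → Prop} (one : P 1) (mul : ∀ h ∈ H, ∀ x, P x → P (h * x)) (x : G) : P x := by
  have hx : x ∈ Subgroup.closure (H : Set G) := hgen ▸ Subgroup.mem_top x
  induction hx using Subgroup.closure_induction_left with
  | one => exact one
  | mul_left h hh y _ ih => exact mul h hh y ih
  | inv_mul_cancel h hh y _ ih => exact mul _ (hs ▸ inv_mem_inv hh) y ih

theorem pow_eq_univ_or_lt_card [Fintype G] (hs : H⁻¹ = H) (h1 : 1 ∈ H)
    (hgen : Subgroup.closure (H : Set G) = ⊤) (r : ℕ) : H ^ r = univ ∨ r < #(H ^ r) := by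
  induction r with
  | zero => simp
  | succ r ih =>
    have hsub : H ^ r ⊆ H ^ (r + 1) := pow_subset_pow_right h1 r.le_succ
    rcases ih with h | h
    · exact .inl (univ_subset_iff.mp (h ▸ hsub))
    by_cases heq : H ^ r = H ^ (r + 1)
    · refine .inl (heq ▸ eq_univ_of_forall fun x ↦ ?_)
      refine closure_induction_of_inv_eq hs hgen (one_mem_pow h1) (fun h hh x hx ↦ ?_) x
      rw [heq, pow_succ']
      exact mul_mem_mul hh hx
    · exact .inr (by have := card_lt_card (hsub.ssubset_of_ne heq); lia)

theorem card_mul_card_le (A B : Finset G) :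
    #A * #B ≤ #(A * B) * #(A⁻¹ * A ∩ (B * B⁻¹)) := by
  rw [← card_product, mul_comm]
  refine card_le_mul_card_image_of_maps_to (f := fun x ↦ x.1 * x.2)
    (fun x hx ↦ mul_mem_mul (mem_product.mp hx).1 (mem_product.mp hx).2) _ fun t _ ↦ ?_
  obtain h | ⟨⟨a, b⟩, hab⟩ := {x ∈ A ×ˢ B | x.1 * x.2 = t}.eq_empty_or_nonempty
  · simp [h]
  simp only [mem_filter, mem_product] at hab
  refine card_le_card_of_injOn (fun x ↦ a⁻¹ * x.1) (fun x hx ↦ ?_) fun x hx y hy hxy ↦ ?_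
  · simp only [coe_filter, mem_product, Set.mem_ofPred_eq] at hx
    have hx_eq : a⁻¹ * x.1 = b * x.2⁻¹ := by
      rw [inv_mul_eq_iff_eq_mul, ← mul_assoc, hab.2, ← hx.2, mul_inv_cancel_right]
    exact mem_inter.mpr ⟨mul_mem_mul (inv_mem_inv hab.1.1) hx.1.1,
      mem_mul.mpr ⟨b, hab.1.2, x.2⁻¹, inv_mem_inv hx.1.2, hx_eq.symm⟩⟩
  · simp only [coe_filter, mem_product, Set.mem_ofPred_eq] at hx hy
    have h1 : x.1 = y.1 := mul_left_cancel hxy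
    exact Prod.ext h1 (mul_left_cancel (h1 ▸ hx.2.trans hy.2.symm))

theorem card_le_card_mul_card_commute {T : Finset G} {g : G} (hT : ∀ h ∈ H, h * g * h⁻¹ ∈ T)
    [DecidablePred (Commute · g)] : #H ≤ #T * #{x ∈ H⁻¹ * H | Commute x g} := by
  refine card_le_card_mul_of_fiber hT fun a ha b hb hab ↦ ?_
  refine mem_filter.mpr ⟨mul_mem_mul (inv_mem_inv ha) hb, ?_⟩
  rw [mul_inv_eq_iff_eq_mul] at hab
  rw [commute_iff_eq, mul_assoc, inv_mul_eq_iff_eq_mul, ← mul_assoc, ← mul_assoc, hab]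
  group

end Group

section ReducedWords

variable {G : Type*} [Group G] {S : Finset G}

/-- A word over `S` is reduced when no two consecutive letters are inverse to each other. For
symmetric `S` these are the reduced words of the free group on `S` modulo inversion. -/
def IsReducedWord (S : Finset G) (l : List G) : Prop :=
  (∀ x ∈ l, x ∈ S) ∧ l.IsChain fun a b ↦ a * b ≠ 1

theorem IsReducedWord.of_cons {a : G} {l : List G} (h : IsReducedWord S (a :: l)) :
    IsReducedWord S l :=
  ⟨(List.forall_mem_cons.mp h.1).2, (List.isChain_cons.mp h.2).2⟩

variable [DecidableEq G]

/-- The reduced words of length `m` over `S`, built by prepending letters. -/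
def reducedWords (S : Finset G) : ℕ → Finset (List G)
  | 0 => {[]}
  | m + 1 => ((reducedWords S m).sigma fun l ↦ {s ∈ S | ∀ b ∈ l.head?, s * b ≠ 1}).image
      fun x ↦ x.2 :: x.1

theorem mem_reducedWords {m : ℕ} {l : List G} (hl : l ∈ reducedWords S m) :
    l.length = m ∧ IsReducedWord S l := by
  induction m generalizing l with
  | zero => simp_all [reducedWords, IsReducedWord]
  | succ m ih =>
    simp only [reducedWords, mem_image, mem_sigma, mem_filter] at hl
    obtain ⟨⟨t, s⟩, ⟨ht, hs, hst⟩, rfl⟩ := hl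
    obtain ⟨hlen, hmem, hchain⟩ := ih ht
    exact ⟨by simp [hlen], List.forall_mem_cons.mpr ⟨hs, hmem⟩,
      List.isChain_cons.mpr ⟨hst, hchain⟩⟩

theorem pow_le_card_reducedWords (S : Finset G) (m : ℕ) :
    (#S - 1) ^ m ≤ #(reducedWords S m) := by
  induction m with
  | zero => simp [reducedWords]
  | succ m ih =>
    have hnext (l : List G) : #S - 1 ≤ #{s ∈ S | ∀ b ∈ l.head?, s * b ≠ 1} := by
      cases l with
      | nil => simp
      | cons b t =>
        refine (pred_card_le_card_erase (a := b⁻¹)).trans (card_le_card fun s hs ↦ ?_)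
        rw [mem_erase] at hs
        simpa [hs.2] using fun h ↦ hs.1 (eq_inv_of_mul_eq_one_left h)
    have hinj : Function.Injective fun x : (_ : List G) × G ↦ x.2 :: x.1 := by
      rintro ⟨t, s⟩ ⟨t', s'⟩ h
      obtain ⟨rfl, rfl⟩ := List.cons.inj h
      rfl
    rw [reducedWords, card_image_of_injective _ hinj, card_sigma, pow_succ]
    calc (#S - 1) ^ m * (#S - 1) ≤ #(reducedWords S m) * (#S - 1) := Nat.mul_le_mul_right _ ih
      _ ≤ _ := by
        rw [← smul_eq_mul]
        exact card_nsmul_le_sum _ _ _ fun l _ ↦ hnext l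

theorem IsReducedWord.inv_append (hs : S⁻¹ = S) {a b : G} {l l' : List G}
    (h : IsReducedWord S (a :: l)) (h' : IsReducedWord S (b :: l')) (hab : a ≠ b) :
    IsReducedWord S (((a :: l).map (·⁻¹)).reverse ++ b :: l') := by
  refine ⟨fun x hx ↦ ?_, List.isChain_append.mpr ⟨?_, h'.2, fun x hx y hy ↦ ?_⟩⟩
  · rcases List.mem_append.mp hx with hx | hx
    · rw [List.mem_reverse, List.mem_map] at hx
      obtain ⟨y, hy, rfl⟩ := hx
      exact hs ▸ inv_mem_inv (h.1 y hy)
    · exact h'.1 x hx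
  · rw [List.isChain_reverse, List.isChain_map]
    exact h.2.imp fun x y hxy hyx ↦ hxy (by rwa [← mul_inv_rev, inv_eq_one] at hyx)
  · obtain rfl : a⁻¹ = x := by simpa using hx
    obtain rfl : b = y := by simpa using hy
    exact fun h1 ↦ hab (inv_mul_eq_one.mp h1)

theorem IsReducedWord.prod_injective (hs : S⁻¹ = S)
    (hfree : ∀ l, l ≠ [] → IsReducedWord S l → l.prod ≠ 1) {l l' : List G}
    (hl : IsReducedWord S l) (hl' : IsReducedWord S l') (hlen : l.length = l'.length)
    (hprod : l.prod = l'.prod) : l = l' := by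
  induction l generalizing l' with
  | nil => exact (List.length_eq_zero_iff.mp hlen.symm).symm
  | cons a t ih =>
    obtain - | ⟨b, t'⟩ := l'
    · simp at hlen
    obtain rfl | hab := eq_or_ne a b
    · rw [ih hl.of_cons hl'.of_cons (by simpa using hlen) (by simpa using hprod)]
    · refine absurd ?_ (hfree _ (by simp) (hl.inv_append hs hl' hab))
      rw [List.prod_append, ← hprod, ← List.prod_inv_reverse, inv_mul_cancel]

theorem pow_le_card_pow_of_free (hs : S⁻¹ = S)
    (hfree : ∀ l, l ≠ [] → IsReducedWord S l → l.prod ≠ 1) (m : ℕ) :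
    (#S - 1) ^ m ≤ #(S ^ m) := by
  refine (pow_le_card_reducedWords S m).trans
    (card_le_card_of_injOn List.prod (fun l hl ↦ ?_) fun l hl l' hl' hprod ↦ ?_)
  · obtain ⟨rfl, hred⟩ := mem_reducedWords hl
    clear hl
    induction l with
    | nil => simp
    | cons a t ih =>
      rw [List.prod_cons, List.length_cons, pow_succ']
      exact mul_mem_mul (hred.1 a List.mem_cons_self) (ih hred.of_cons)
  · obtain ⟨hlen, hred⟩ := mem_reducedWords hl
    obtain ⟨hlen', hred'⟩ := mem_reducedWords hl'
    exact hred.prod_injective hs hfree hred' (hlen.trans hlen'.symm) hprod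

end ReducedWords

section Incidence

variable {F : Type*} [Field F] [Fintype F] [DecidableEq F]

/-- The number of lines `y = c + a * x` with slope `a ∈ A` that pass over `b` at a height in `D`.
Its deviation from the average `|A| |D| / q`, measured in `ℓ²` over all `(b, c)`, is what the
incidence bound rests on. -/
def lineHits (A D : Finset F) (x : F × F) : ℕ := #{a ∈ A | x.2 + a * x.1 ∈ D}

theorem card_filter_line (D : Finset F) (a : F) :
    #{x : F × F | x.2 + a * x.1 ∈ D} = Fintype.card F * #D := by
  rw [← card_univ, ← card_product]
  refine card_nbij' (fun x ↦ (x.1, x.2 + a * x.1)) (fun x ↦ (x.1, x.2 - a * x.1)) ?_ ?_ ?_ ?_ <;>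
    simp [Set.MapsTo, Set.LeftInvOn]

theorem card_filter_two_lines_le (D : Finset F) {a a' : F} (h : a ≠ a') :
    #{x : F × F | x.2 + a * x.1 ∈ D ∧ x.2 + a' * x.1 ∈ D} ≤ #D ^ 2 := by
  rw [sq, ← card_product]
  refine card_le_card_of_injOn (fun x ↦ (x.2 + a * x.1, x.2 + a' * x.1)) (fun x hx ↦ ?_) ?_
  · simpa using hx
  · rintro ⟨b, c⟩ - ⟨b', c'⟩ - hx
    obtain ⟨h₁, h₂⟩ := Prod.ext_iff.mp hx
    obtain rfl : b = b' := mul_left_cancel₀ (sub_ne_zero.mpr h) (by linear_combination h₁ - h₂)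
    simpa using h₁

theorem sum_lineHits (A D : Finset F) :
    ∑ x, lineHits A D x = #A * (Fintype.card F * #D) := by
  have := sum_card_bipartiteAbove_eq_sum_card_bipartiteBelow (s := (univ : Finset (F × F)))
    (t := A) fun x a ↦ x.2 + a * x.1 ∈ D
  simpa [bipartiteAbove, bipartiteBelow, card_filter_line, lineHits] using this

theorem sum_lineHits_sq_le (A D : Finset F) :
    ∑ x, lineHits A D x ^ 2 ≤ #A * (Fintype.card F * #D) + #A ^ 2 * #D ^ 2 := by
  have hpairs (x : F × F) : lineHits A D x ^ 2 =
      #{y ∈ A ×ˢ A | x.2 + y.1 * x.1 ∈ D ∧ x.2 + y.2 * x.1 ∈ D} := by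
    rw [lineHits, sq, ← card_product, ← filter_product]
  have hswap := sum_card_bipartiteAbove_eq_sum_card_bipartiteBelow (s := (univ : Finset (F × F)))
    (t := A ×ˢ A) fun x y ↦ x.2 + y.1 * x.1 ∈ D ∧ x.2 + y.2 * x.1 ∈ D
  simp only [bipartiteAbove, bipartiteBelow, ← hpairs] at hswap
  rw [hswap, sum_product]
  calc _ ≤ ∑ a ∈ A, ∑ a' ∈ A, ((if a = a' then Fintype.card F * #D else 0) + #D ^ 2) := by
        refine sum_le_sum fun a _ ↦ sum_le_sum fun a' _ ↦ ?_
        obtain rfl | h := eq_or_ne a a'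
        · simp [card_filter_line]
        · simpa [h] using card_filter_two_lines_le D h
    _ = _ := by
        simp only [sum_add_distrib, sum_ite_eq, sum_ite_mem, inter_self, sum_const, smul_eq_mul]
        ring

theorem sum_lineHits_variance_le (A D : Finset F) :
    ∑ x, ((Fintype.card F : ℤ) * lineHits A D x - #A * #D) ^ 2 ≤
      (Fintype.card F : ℤ) ^ 3 * (#A * #D) := by
  set q := Fintype.card F
  have hcard : Fintype.card (F × F) = q ^ 2 := by rw [Fintype.card_prod, sq]
  have h1 : ∑ x, (lineHits A D x : ℤ) = #A * (q * #D) := mod_cast sum_lineHits A D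
  have h2 : ∑ x, (lineHits A D x : ℤ) ^ 2 ≤ #A * (q * #D) + #A ^ 2 * #D ^ 2 :=
    mod_cast sum_lineHits_sq_le A D
  calc ∑ x, ((q : ℤ) * lineHits A D x - #A * #D) ^ 2
      = q ^ 2 * ∑ x, (lineHits A D x : ℤ) ^ 2 - 2 * q * (#A * #D) * ∑ x, (lineHits A D x : ℤ)
          + q ^ 2 * (#A * #D) ^ 2 := by
        simp only [sub_sq, sum_add_distrib, sum_sub_distrib, mul_sum, sum_const, card_univ,
          hcard, nsmul_eq_mul]
        push_cast
        congr! 3 <;> ring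
    _ ≤ q ^ 2 * (#A * (q * #D) + #A ^ 2 * #D ^ 2) - 2 * q * (#A * #D) * (#A * (q * #D))
          + q ^ 2 * (#A * #D) ^ 2 := by rw [h1]; gcongr
    _ = (q : ℤ) ^ 3 * (#A * #D) := by ring

omit [DecidableEq F] in
theorem card_mul_le_card_pow_three {A B C D : Finset F}
    (h : ∀ a ∈ A, ∀ b ∈ B, ∀ c ∈ C, c + a * b ∉ D) :
    #A * #B * #C * #D ≤ Fintype.card F ^ 3 := by
  classical
  set q := Fintype.card F
  obtain hAD | hAD := (#A * #D).eq_zero_or_pos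
  · simp [show #A * #B * #C * #D = #A * #D * (#B * #C) by ring, hAD]
  have hmiss : ∀ x ∈ B ×ˢ C, lineHits A D x = 0 := fun x hx ↦ by
    rw [mem_product] at hx
    simpa [lineHits, filter_eq_empty_iff] using fun a ha ↦ h a ha _ hx.1 _ hx.2
  have hvar : (#B * #C * (#A * #D) ^ 2 : ℤ) ≤ (q : ℤ) ^ 3 * (#A * #D) :=
    calc (#B * #C * (#A * #D) ^ 2 : ℤ)
        = ∑ x ∈ B ×ˢ C, ((q : ℤ) * lineHits A D x - #A * #D) ^ 2 := by
          rw [sum_congr rfl fun x hx ↦ by rw [hmiss x hx]]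
          simp
      _ ≤ ∑ x, ((q : ℤ) * lineHits A D x - #A * #D) ^ 2 :=
          sum_le_univ_sum_of_nonneg fun _ ↦ sq_nonneg _
      _ ≤ _ := sum_lineHits_variance_le A D
  refine Nat.le_of_mul_le_mul_right (c := #A * #D) ?_ hAD
  zify
  linarith

end Incidence

open Matrix hiding transvection
open Matrix.SpecialLinearGroup (transvection transvection_coe transvection_add transvection_inv)

section Entries

variable {F : Type*} [CommRing F] {i j : Fin 2}

theorem det_entries (hij : i ≠ j) (g : SL(2, F)) : g i i * g j j - g i j * g j i = 1 := by
  have := g.det_coe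
  rw [det_fin_two] at this
  fin_cases i <;> fin_cases j <;> first
    | exact absurd rfl hij
    | (dsimp only [Fin.zero_eta, Fin.mk_one]; linear_combination this)

theorem mul_entry (hij : i ≠ j) (g h : SL(2, F)) (k l : Fin 2) :
    (g * h) k l = g k i * h i l + g k j * h j l := by
  rw [Matrix.SpecialLinearGroup.coe_mul, mul_apply, Fin.sum_univ_two]
  fin_cases i <;> fin_cases j <;> first | exact absurd rfl hij | simp [add_comm]

theorem inv_entry_diag (hij : i ≠ j) (g : SL(2, F)) : (g⁻¹) i i = g j j := by
  rw [Matrix.SpecialLinearGroup.coe_inv, adjugate_fin_two]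
  fin_cases i <;> fin_cases j <;> first | exact absurd rfl hij | simp

theorem inv_entry_off_diag (hij : i ≠ j) (g : SL(2, F)) : (g⁻¹) i j = -g i j := by
  rw [Matrix.SpecialLinearGroup.coe_inv, adjugate_fin_two]
  fin_cases i <;> fin_cases j <;> first | exact absurd rfl hij | simp

theorem ext_entries (hij : i ≠ j) {g h : SL(2, F)} (hii : g i i = h i i)
    (hij' : g i j = h i j) (hji : g j i = h j i) (hjj : g j j = h j j) : g = h := by
  refine g.ext h fun k l ↦ ?_
  fin_cases i <;> fin_cases j <;> fin_cases k <;> fin_cases l <;>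
    first | exact absurd rfl hij | assumption

theorem transvection_entries (hij : i ≠ j) (x : F) :
    (transvection hij x) i i = 1 ∧ (transvection hij x) i j = x ∧
      (transvection hij x) j i = 0 ∧ (transvection hij x) j j = 1 := by
  simp [transvection_coe, hij, hij.symm]

theorem conj_transvection (hij : i ≠ j) {b : SL(2, F)} (hb : b j i = 0) (x : F) :
    b * transvection hij x * b⁻¹ = transvection hij (x * b i i ^ 2) := by
  have hdet := det_entries hij b
  obtain ⟨hii, hij', hji, hjj⟩ := transvection_entries hij x
  rw [mul_inv_eq_iff_eq_mul]
  obtain ⟨hii', hij'', hji', hjj'⟩ := transvection_entries hij (x * b i i ^ 2)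
  apply ext_entries hij <;>
    simp only [mul_entry hij, hii, hij', hji, hjj, hii', hij'', hji', hjj', hb] at hdet ⊢
  · ring
  · linear_combination -x * b i i * hdet
  · ring
  · ring

end Entries

section LargeSets

variable {F : Type*} [Field F] [Fintype F] [DecidableEq F] {i j : Fin 2} {H : Finset SL(2, F)}

theorem card_le_card_transvections (hij : i ≠ j) (H : Finset SL(2, F)) :
    #H ≤ Fintype.card F ^ 2 * #{x | transvection hij x ∈ H⁻¹ * H} := by
  have hfiber := card_le_card_mul_of_fiber (A := H) (T := univ)
    (f := fun g ↦ (g i i, g j i))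
    (K := ({x | transvection hij x ∈ H⁻¹ * H} : Finset F).image (transvection hij))
    (fun _ _ ↦ mem_univ _) fun a ha b hb hab ↦ ?_
  · rw [card_univ, Fintype.card_prod, ← sq] at hfiber
    exact hfiber.trans (Nat.mul_le_mul_left _ card_image_le)
  obtain ⟨hii, hji⟩ := Prod.ext_iff.mp hab
  have hdet_a := det_entries hij a
  have hdet_b := det_entries hij b
  dsimp only at hii hji
  have heq : transvection hij ((a⁻¹ * b) i j) = a⁻¹ * b := by
    obtain ⟨tii, tij, tji, tjj⟩ := transvection_entries hij ((a⁻¹ * b) i j)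
    refine ext_entries hij ?_ tij ?_ ?_
    · rw [tii, mul_entry hij, inv_entry_diag hij, inv_entry_off_diag hij, ← hii, ← hji]
      linear_combination -hdet_a
    · rw [tji, mul_entry hij, inv_entry_diag hij.symm, inv_entry_off_diag hij.symm, ← hii, ← hji]
      ring
    · rw [tjj, mul_entry hij, inv_entry_diag hij.symm, inv_entry_off_diag hij.symm, hii, hji]
      linear_combination -hdet_b
  refine mem_image.mpr ⟨_, mem_filter.mpr ⟨mem_univ _, ?_⟩, heq⟩
  rw [heq]
  exact mul_mem_mul (inv_mem_inv ha) hb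

theorem card_le_card_borel (hij : i ≠ j) (H : Finset SL(2, F)) :
    #H ≤ (Fintype.card F + 1) * #{b ∈ H⁻¹ * H | b j i = 0} := by
  rw [← Fintype.card_option, ← card_univ]
  refine card_le_card_mul_of_fiber
    (f := fun g ↦ if g i i = 0 then none else some (g j i / g i i))
    (fun _ _ ↦ mem_univ _) fun a ha b hb hab ↦ ?_
  refine mem_filter.mpr ⟨mul_mem_mul (inv_mem_inv ha) hb, ?_⟩
  rw [mul_entry hij, inv_entry_diag hij.symm, inv_entry_off_diag hij.symm]
  by_cases hai : a i i = 0 <;> by_cases hbi : b i i = 0 <;> simp only [hai, hbi] at hab ⊢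
  · ring
  · simp at hab
  · simp at hab
  · simp only [if_false, Option.some.injEq] at hab
    field_simp at hab
    linear_combination -hab

omit [Fintype F] in
theorem card_le_two_mul_card_image_sq (X : Finset F) : #X ≤ 2 * #(X.image (· ^ 2)) := by
  refine card_le_mul_card_image X 2 fun y hy ↦ ?_
  obtain ⟨x, -, rfl⟩ := mem_image.mp hy
  refine (card_le_card fun z hz ↦ ?_).trans (card_le_two (a := x) (b := -x))
  simpa using sq_eq_sq_iff_eq_or_eq_neg.mp (mem_filter.mp hz).2

theorem card_borel_le (hij : i ≠ j) {B : Finset SL(2, F)} (hB : ∀ b ∈ B, b j i = 0) :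
    #B ≤ 2 * Fintype.card F * #(B.image fun b ↦ b i i ^ 2) := by
  have hinj : Set.InjOn (fun b : SL(2, F) ↦ (b i i, b i j)) B := by
    intro b hb b' hb' h
    obtain ⟨hii, hij'⟩ := Prod.ext_iff.mp h
    have hdet := det_entries hij b
    have hdet' := det_entries hij b'
    simp only [hB b hb, hB b' hb', mul_zero, sub_zero] at hii hij' hdet hdet'
    refine ext_entries hij hii hij' ((hB b hb).trans (hB b' hb').symm) ?_
    refine mul_left_cancel₀ (left_ne_zero_of_mul_eq_one hdet) ?_
    rw [hdet, hii, hdet']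
  calc #B ≤ #(B.image (fun b ↦ b i i) ×ˢ (univ : Finset F)) :=
        card_le_card_of_injOn _ (fun b hb ↦ mem_product.mpr
          ⟨mem_image_of_mem _ hb, mem_univ _⟩) hinj
    _ = #(B.image fun b ↦ b i i) * Fintype.card F := by rw [card_product, card_univ]
    _ ≤ 2 * #((B.image fun b ↦ b i i).image (· ^ 2)) * Fintype.card F :=
        Nat.mul_le_mul_right _ (card_le_two_mul_card_image_sq _)
    _ = 2 * Fintype.card F * #(B.image fun b ↦ b i i ^ 2) := by
        rw [image_image, mul_right_comm]; rfl

omit [DecidableEq F] in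
theorem exists_add_eq_of_card_compl_lt {Z : Finset F} [DecidablePred (· ∈ Z)]
    (hZ : #{x | x ∉ Z} < #Z) (x : F) : ∃ y ∈ Z, ∃ z ∈ Z, y + z = x := by
  by_contra! hno
  refine hZ.not_ge (card_le_card_of_injOn (x - ·) (fun z hz ↦ ?_) sub_right_injective.injOn)
  simpa using fun h ↦ hno z hz _ h (add_sub_cancel z x)

theorem card_not_transvection_mem_pow_le (hij : i ≠ j) (hs : H⁻¹ = H)
    (hbig : 64 * Fintype.card F ^ 8 ≤ #H ^ 3) :
    16 * #{x | transvection hij x ∉ H ^ 8} ≤ Fintype.card F := by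
  set q := Fintype.card F
  have hq : 0 < q := Fintype.card_pos
  set D : Finset F := {x | transvection hij x ∉ H ^ 8}
  set X : Finset F := {x | transvection hij x ∈ H ^ 2} with hX
  set B : Finset SL(2, F) := {b ∈ H ^ 2 | b j i = 0} with hB
  set Y : Finset F := B.image fun b ↦ b i i ^ 2
  have hHH : H⁻¹ * H = H ^ 2 := by rw [hs, sq]
  have hHX : #H ≤ q ^ 2 * #X := by simpa only [hHH] using card_le_card_transvections hij H
  have hHY : #H ≤ 4 * q ^ 2 * #Y := calc
    #H ≤ (q + 1) * #B := by simpa only [hHH] using card_le_card_borel hij H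
    _ ≤ (q + q) * (2 * q * #Y) := Nat.mul_le_mul (Nat.add_le_add_left hq q)
        (card_borel_le hij fun b hb ↦ (mem_filter.mp hb).2)
    _ = 4 * q ^ 2 * #Y := by ring
  have hXYXD : #X * #Y * #X * #D ≤ q ^ 3 := by
    refine card_mul_le_card_pow_three fun a ha y hy c hc ↦ ?_
    obtain ⟨b, hb, rfl⟩ := mem_image.mp hy
    simp only [hX, hB, mem_filter, mem_univ, true_and] at ha hb hc
    simp only [D, mem_filter, mem_univ, true_and, not_not]
    rw [transvection_add, ← conj_transvection hij hb.2]
    exact mem_pow_of_mem (n := 6) hc (mem_pow_of_mem (m := 4)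
      (mem_pow_of_mem hb.1 ha) (inv_mem_pow hs hb.1))
  have : 4 * q ^ 8 * (16 * #D) ≤ 4 * q ^ 8 * q := calc
    4 * q ^ 8 * (16 * #D) = 64 * q ^ 8 * #D := by ring
    _ ≤ #H * #H * #H * #D := Nat.mul_le_mul_right _ (hbig.trans_eq (pow_three' _))
    _ ≤ (q ^ 2 * #X) * (4 * q ^ 2 * #Y) * (q ^ 2 * #X) * #D := by gcongr
    _ = 4 * q ^ 6 * (#X * #Y * #X * #D) := by ring
    _ ≤ 4 * q ^ 6 * q ^ 3 := by gcongr
    _ = 4 * q ^ 8 * q := by ring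
  exact Nat.le_of_mul_le_mul_left this (by positivity)

theorem transvection_mem_pow (hij : i ≠ j) (hs : H⁻¹ = H)
    (hbig : 64 * Fintype.card F ^ 8 ≤ #H ^ 3) (x : F) : transvection hij x ∈ H ^ 16 := by
  have hD := card_not_transvection_mem_pow_le hij hs hbig
  have hsplit := card_filter_add_card_filter_not (s := univ)
    fun x : F ↦ transvection hij x ∈ H ^ 8
  have hq : 0 < Fintype.card F := Fintype.card_pos
  rw [card_univ] at hsplit
  obtain ⟨y, hy, z, hz, rfl⟩ := exists_add_eq_of_card_compl_lt
    (Z := {x | transvection hij x ∈ H ^ 8}) (by simp; lia) x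
  rw [transvection_add]
  exact mem_pow_of_mem (mem_filter.mp hy).2 (mem_filter.mp hz).2

omit [Fintype F] in
theorem mem_pow_of_entry_ne_zero {n : ℕ}
    (hT : ∀ {i j : Fin 2} (hij : i ≠ j) (x : F), transvection hij x ∈ H ^ n) {g : SL(2, F)}
    (hg : g 1 0 ≠ 0) : g ∈ H ^ (3 * n) := by
  have hdet := det_entries zero_ne_one g
  have hfactor : g = transvection zero_ne_one ((g 0 0 - 1) / g 1 0) *
      transvection one_ne_zero (g 1 0) *
      transvection zero_ne_one ((g 1 1 - 1) / g 1 0) := by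
    apply ext_entries zero_ne_one <;> simp [mul_entry zero_ne_one, transvection_coe] <;>
      field_simp <;>
      first | linear_combination hdet | linear_combination -hdet | ring
  rw [hfactor]
  exact mem_pow_of_mem (mem_pow_of_mem (hT _ _) (hT _ _) rfl) (hT _ _) (by ring)

theorem pow_eq_univ_of_transvection_mem (h1 : 1 ∈ H) {n : ℕ}
    (hT : ∀ {i j : Fin 2} (hij : i ≠ j) (x : F), transvection hij x ∈ H ^ n) :
    H ^ (4 * n) = univ := by
  refine eq_univ_of_forall fun g ↦ ?_
  by_cases hg : g 1 0 = 0
  · have hdet := det_entries zero_ne_one g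
    rw [hg, mul_zero, sub_zero] at hdet
    have hmem : g * transvection one_ne_zero 1 ∈ H ^ (3 * n) :=
      mem_pow_of_entry_ne_zero hT (by
        simpa [mul_entry zero_ne_one, transvection_coe, hg] using right_ne_zero_of_mul_eq_one hdet)
    rw [← mul_inv_cancel_right g (transvection one_ne_zero 1), transvection_inv]
    exact mem_pow_of_mem hmem (hT _ _) (by ring)
  · exact pow_subset_pow_right h1 (by lia) (mem_pow_of_entry_ne_zero hT hg)

theorem pow_eq_univ_of_le_card_pow (hs : H⁻¹ = H) (h1 : 1 ∈ H)
    (hbig : 64 * Fintype.card F ^ 8 ≤ #H ^ 3) : H ^ 64 = univ :=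
  pow_eq_univ_of_transvection_mem (n := 16) h1 fun hij ↦ transvection_mem_pow hij hs hbig

end LargeSets

section PlaneGeometry

variable {F : Type*} [Field F] {v w : Fin 2 → F} {M N : Matrix (Fin 2) (Fin 2) F}

/-- The oriented area (determinant) of a pair of vectors of the plane. It vanishes iff the vectors
are parallel, so `area v (M *ᵥ v) = 0` expresses that `v` is zero or an eigenvector of `M`. -/
def area (v w : Fin 2 → F) : F := v 0 * w 1 - v 1 * w 0

theorem mulVec_apply_fin_two (M : Matrix (Fin 2) (Fin 2) F) (v : Fin 2 → F) (i : Fin 2) :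
    (M *ᵥ v) i = M i 0 * v 0 + M i 1 * v 1 := by
  rw [mulVec, dotProduct, Fin.sum_univ_two]

theorem exists_eq_smul_of_area_eq_zero (hv : v ≠ 0) (h : area v w = 0) : ∃ c : F, w = c • v := by
  unfold area at h
  obtain ⟨i, hi⟩ := Function.ne_iff.mp hv
  refine ⟨w i / v i, funext fun k ↦ ?_⟩
  rw [Pi.smul_apply, smul_eq_mul, div_mul_eq_mul_div, eq_div_iff hi]
  fin_cases i <;> fin_cases k <;> dsimp only [Fin.zero_eta, Fin.mk_one] <;>
    first | ring1 | linear_combination h | linear_combination -h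

theorem area_self (v : Fin 2 → F) : area v v = 0 := by
  unfold area; ring

theorem area_smul_right (v w : Fin 2 → F) (c : F) : area v (c • w) = c * area v w := by
  simp only [area, Pi.smul_apply, smul_eq_mul]; ring

theorem area_smul_left (v w : Fin 2 → F) (c : F) : area (c • v) w = c * area v w := by
  simp only [area, Pi.smul_apply, smul_eq_mul]; ring

theorem eq_one_of_mulVec_eq_self (hvw : area v w ≠ 0) (hv : M *ᵥ v = v) (hw : M *ᵥ w = w) :
    M = 1 := by
  have hv' (i : Fin 2) := (mulVec_apply_fin_two M v i).symm.trans (congrFun hv i)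
  have hw' (i : Fin 2) := (mulVec_apply_fin_two M w i).symm.trans (congrFun hw i)
  ext i j
  refine mul_right_cancel₀ hvw ?_
  unfold area
  fin_cases j <;> dsimp only [Fin.zero_eta, Fin.mk_one]
  · trans v i * w 1 - v 1 * w i
    · linear_combination w 1 * hv' i - v 1 * hw' i
    · fin_cases i <;> simp
  · trans v 0 * w i - v i * w 0
    · linear_combination v 0 * hw' i - w 0 * hv' i
    · fin_cases i <;> simp

theorem area_mulVec_mul (hv : v ≠ 0) (hM : area v (M *ᵥ v) = 0) (hN : area v (N *ᵥ v) = 0) :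
    area v ((M * N) *ᵥ v) = 0 := by
  obtain ⟨c, hc⟩ := exists_eq_smul_of_area_eq_zero hv hN
  rw [← mulVec_mulVec, hc, mulVec_smul, area_smul_right, hM, mul_zero]

theorem area_mulVec_eq_zero_of_parallel (hv : v ≠ 0) (hvw : area v w = 0)
    (hM : area v (M *ᵥ v) = 0) : area w (M *ᵥ w) = 0 := by
  obtain ⟨c, rfl⟩ := exists_eq_smul_of_area_eq_zero hv hvw
  rw [mulVec_smul, area_smul_left, area_smul_right, hM, mul_zero, mul_zero]

theorem sq_sub_trace_mul_add_det_eq_zero (hv : v ≠ 0) {c : F} (h : M *ᵥ v = c • v) :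
    c ^ 2 - M.trace * c + M.det = 0 := by
  have hdet : (M - c • (1 : Matrix (Fin 2) (Fin 2) F)).det = 0 :=
    exists_mulVec_eq_zero_iff.mp ⟨v, hv, by rw [sub_mulVec, h, smul_mulVec, one_mulVec, sub_self]⟩
  rw [← hdet]
  simp [det_fin_two, trace_fin_two]
  ring

-- `area v (M *ᵥ v)` is a binary quadratic form in `v`, so three zeros force it to vanish.
theorem exists_eq_scalar_of_three_eigenvectors {v₁ v₂ v₃ : Fin 2 → F} (h₁ : area v₁ (M *ᵥ v₁) = 0)
    (h₂ : area v₂ (M *ᵥ v₂) = 0) (h₃ : area v₃ (M *ᵥ v₃) = 0) (h₁₂ : area v₁ v₂ ≠ 0)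
    (h₁₃ : area v₁ v₃ ≠ 0) (h₂₃ : area v₂ v₃ ≠ 0) : ∃ c : F, M = c • 1 := by
  have hne := mul_ne_zero (mul_ne_zero h₁₂ h₁₃) h₂₃
  simp only [area, mulVec_apply_fin_two] at h₁ h₂ h₃ hne
  have h10 : M 1 0 = 0 := by
    apply mul_right_cancel₀ hne
    linear_combination (v₂ 0 * v₂ 1 * v₃ 1 ^ 2 - v₂ 1 ^ 2 * v₃ 0 * v₃ 1) * h₁
      - (v₁ 0 * v₁ 1 * v₃ 1 ^ 2 - v₁ 1 ^ 2 * v₃ 0 * v₃ 1) * h₂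
      + (v₁ 0 * v₁ 1 * v₂ 1 ^ 2 - v₁ 1 ^ 2 * v₂ 0 * v₂ 1) * h₃
  have h01 : M 0 1 = 0 := by
    apply mul_right_cancel₀ hne
    linear_combination -(v₂ 0 ^ 2 * v₃ 0 * v₃ 1 - v₂ 0 * v₂ 1 * v₃ 0 ^ 2) * h₁
      + (v₁ 0 ^ 2 * v₃ 0 * v₃ 1 - v₁ 0 * v₁ 1 * v₃ 0 ^ 2) * h₂
      - (v₁ 0 ^ 2 * v₂ 0 * v₂ 1 - v₁ 0 * v₁ 1 * v₂ 0 ^ 2) * h₃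
  have hdiag : M 1 1 - M 0 0 = 0 := by
    apply mul_right_cancel₀ hne
    linear_combination -(v₂ 0 ^ 2 * v₃ 1 ^ 2 - v₂ 1 ^ 2 * v₃ 0 ^ 2) * h₁
      + (v₁ 0 ^ 2 * v₃ 1 ^ 2 - v₁ 1 ^ 2 * v₃ 0 ^ 2) * h₂
      - (v₁ 0 ^ 2 * v₂ 1 ^ 2 - v₁ 1 ^ 2 * v₂ 0 ^ 2) * h₃
  refine ⟨M 0 0, ?_⟩
  ext i j
  fin_cases i <;> fin_cases j <;> simp [h10, h01, sub_eq_zero.mp hdiag]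

end PlaneGeometry

section Pencils

variable {F : Type*} [Field F] {M N K X Y : Matrix (Fin 2) (Fin 2) F}

theorem exists_eq_smul_of_cross_eq_zero {x y : Fin 3 → F} (hx : x ≠ 0) (hxy : x ⨯₃ y = 0) :
    ∃ c : F, y = c • x := by
  have hdep := mt crossProduct_ne_zero_iff_linearIndependent.mpr (not_not.mpr hxy)
  rw [LinearIndependent.pair_iff' hx] at hdep
  push Not at hdep
  exact hdep.imp fun _ ↦ Eq.symm

theorem exists_eq_smul_of_dotProduct_eq_zero {x y m k : Fin 3 → F} (hx : x ≠ 0) (hm : m ≠ 0)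
    (hxm : x ⬝ᵥ m = 0) (hym : y ⬝ᵥ m = 0) (hxk : x ⬝ᵥ k = 0) (hyk : y ⬝ᵥ k = 0) :
    (∃ c : F, y = c • x) ∨ ∃ c : F, k = c • m := by
  have hpar {n : Fin 3 → F} (hxn : x ⬝ᵥ n = 0) (hyn : y ⬝ᵥ n = 0) : (x ⨯₃ y) ⨯₃ n = 0 := by
    rw [cross_cross_eq_smul_sub_smul, hxn, hyn, zero_smul, zero_smul, sub_zero]
  by_cases hxy : x ⨯₃ y = 0
  · exact .inl (exists_eq_smul_of_cross_eq_zero hx hxy)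
  obtain ⟨μ, rfl⟩ := exists_eq_smul_of_cross_eq_zero hxy (hpar hxm hym)
  obtain ⟨ν, rfl⟩ := exists_eq_smul_of_cross_eq_zero hxy (hpar hxk hyk)
  have hμ : μ ≠ 0 := fun h ↦ hm (by rw [h, zero_smul])
  exact .inr ⟨ν / μ, by rw [smul_smul, div_mul_cancel₀ _ hμ]⟩

/-- The coordinates `N₀₀, N₀₁, N₁₀` of a matrix, which determine it if its trace is zero. -/
def tracelessCoords (N : Matrix (Fin 2) (Fin 2) F) : Fin 3 → F := ![N 0 0, N 0 1, N 1 0]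

/-- Coordinates of a matrix modulo scalar matrices, dual to `tracelessCoords` under the pairing
`(N, M) ↦ (N * M).trace`. -/
def scalarFreeCoords (M : Matrix (Fin 2) (Fin 2) F) : Fin 3 → F := ![M 0 0 - M 1 1, M 1 0, M 0 1]

theorem scalarFreeCoords_dotProduct (hN : N.trace = 0) :
    scalarFreeCoords M ⬝ᵥ tracelessCoords N = (N * M).trace := by
  rw [trace_fin_two] at hN
  simp only [scalarFreeCoords, tracelessCoords, vec3_dotProduct, trace_fin_two, mul_apply,
    Fin.sum_univ_two, Matrix.cons_val]
  linear_combination -M 1 1 * hN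

theorem eq_smul_of_tracelessCoords_eq {c : F} (hN : N.trace = 0) (hK : K.trace = 0)
    (h : tracelessCoords K = c • tracelessCoords N) : K = c • N := by
  rw [trace_fin_two] at hN hK
  have h0 : K 0 0 = c * N 0 0 := congrFun h 0
  have h1 : K 0 1 = c * N 0 1 := congrFun h 1
  have h2 : K 1 0 = c * N 1 0 := congrFun h 2
  ext i j
  fin_cases i <;> fin_cases j <;> simp [h0, h1, h2]
  linear_combination hK - c * hN - h0

theorem exists_eq_smul_add_scalar_iff {c : F} :
    (∃ d : F, Y = c • X + d • 1) ↔ scalarFreeCoords Y = c • scalarFreeCoords X := by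
  constructor
  · rintro ⟨d, rfl⟩
    ext i
    fin_cases i <;> simp [scalarFreeCoords]
    ring
  · intro h
    have h0 : Y 0 0 - Y 1 1 = c * (X 0 0 - X 1 1) := congrFun h 0
    have h1 : Y 1 0 = c * X 1 0 := congrFun h 1
    have h2 : Y 0 1 = c * X 0 1 := congrFun h 2
    refine ⟨Y 1 1 - c * X 1 1, ?_⟩
    ext i j
    fin_cases i <;> fin_cases j <;> simp [h1, h2]
    linear_combination h0

theorem exists_eq_scalar_iff : (∃ d : F, X = d • 1) ↔ scalarFreeCoords X = 0 := by
  simpa using exists_eq_smul_add_scalar_iff (X := 0) (Y := X) (c := 0)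

theorem exists_eq_smul_of_trace_mul_eq_zero (hN : N ≠ 0) (hNt : N.trace = 0) (hKt : K.trace = 0)
    (hX : ¬∃ d : F, X = d • 1) (hNX : (N * X).trace = 0) (hNY : (N * Y).trace = 0)
    (hKX : (K * X).trace = 0) (hKY : (K * Y).trace = 0) :
    (∃ c d : F, Y = c • X + d • 1) ∨ ∃ c : F, K = c • N := by
  simp only [exists_eq_smul_add_scalar_iff]
  refine (exists_eq_smul_of_dotProduct_eq_zero (mt exists_eq_scalar_iff.mpr hX)
    (m := tracelessCoords N) (k := tracelessCoords K) (fun h ↦ hN ?_) ?_ ?_ ?_ ?_).imp_right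
    (Exists.imp fun c hc ↦ eq_smul_of_tracelessCoords_eq hNt hKt hc)
  · simpa using eq_smul_of_tracelessCoords_eq (c := 0) hNt hNt (by rw [h, smul_zero])
  all_goals rwa [scalarFreeCoords_dotProduct ‹_›]

theorem exists_eq_smul_add_scalar_of_commute (hM : ¬∃ d : F, M = d • 1) (h : Commute N M) :
    ∃ c d : F, N = c • M + d • 1 := by
  simp only [exists_eq_smul_add_scalar_iff]
  refine exists_eq_smul_of_cross_eq_zero (mt exists_eq_scalar_iff.mpr hM) ?_
  have hentry (i j : Fin 2) : N i 0 * M 0 j + N i 1 * M 1 j = M i 0 * N 0 j + M i 1 * N 1 j := by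
    simpa only [mul_apply, Fin.sum_univ_two] using congrFun₂ h.eq i j
  rw [cross_apply]
  ext k
  fin_cases k <;> simp [scalarFreeCoords]
  · linear_combination hentry 0 0
  · linear_combination hentry 0 1
  · linear_combination hentry 1 0

-- `det (M + x • N)` is a quadratic polynomial in `x` that takes its constant value three times.
theorem det_eq_zero_of_det_add_smul {c : F} (hN : N.trace = 0) (hc0 : c ≠ 0) (hc1 : c ≠ 1)
    (h1 : (M + N).det = M.det) (hc : (M + c • N).det = M.det) :
    N.det = 0 ∧ (N * M).trace = 0 := by
  have hexp (x : F) : (M + x • N).det = M.det - x * (N * M).trace + x ^ 2 * N.det := by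
    rw [trace_fin_two] at hN
    simp [det_fin_two, trace_fin_two, mul_apply]
    linear_combination x * (M 0 0 + M 1 1) * hN
  rw [← one_smul F N, hexp] at h1
  rw [hexp] at hc
  have hdet : N.det = 0 := by
    refine (mul_eq_zero.mp ?_).resolve_left (mul_ne_zero hc0 (sub_ne_zero.mpr hc1))
    linear_combination hc - c * h1
  exact ⟨hdet, by linear_combination hdet - h1⟩

theorem exists_eigenvector_of_nilpotent (hN : N ≠ 0) (htr : N.trace = 0) (hdet : N.det = 0) :
    ∃ v : Fin 2 → F, v ≠ 0 ∧ ∀ M, (N * M).trace = 0 → area v (M *ᵥ v) = 0 := by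
  obtain ⟨j, hj⟩ : ∃ j, Nᵀ j ≠ 0 := Function.ne_iff.mp (transpose_eq_zero.not.mpr hN)
  refine ⟨Nᵀ j, hj, fun M hM ↦ ?_⟩
  rw [trace_fin_two] at htr
  rw [det_fin_two] at hdet
  simp only [trace_fin_two, mul_apply, Fin.sum_univ_two] at hM
  simp only [area, mulVec_apply_fin_two, transpose_apply]
  fin_cases j <;> dsimp only [Fin.zero_eta, Fin.mk_one]
  · linear_combination (-N 1 0) * hM + (N 1 0 * M 1 1 + N 0 0 * M 1 0) * htr - M 1 0 * hdet
  · linear_combination N 0 1 * hM - (N 0 1 * M 0 0 + N 1 1 * M 0 1) * htr + M 0 1 * hdet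

/-- Two matrices have a common eigenvector, over the base field. -/
def HaveCommonEigenvector (M N : Matrix (Fin 2) (Fin 2) F) : Prop :=
  ∃ v : Fin 2 → F, v ≠ 0 ∧ area v (M *ᵥ v) = 0 ∧ area v (N *ᵥ v) = 0

theorem trace_mul_self_fin_two (M : Matrix (Fin 2) (Fin 2) F) :
    (M * M).trace = M.trace ^ 2 - 2 * M.det := by
  simp only [trace_fin_two, det_fin_two, mul_apply, Fin.sum_univ_two]
  ring

theorem HaveCommonEigenvector.of_det_add_smul {c : F} (hMN : N ≠ M) (htr : N.trace = M.trace)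
    (hdet : N.det = M.det) (hc0 : c ≠ 0) (hc1 : c ≠ 1) (hc : (M + c • (N - M)).det = M.det) :
    HaveCommonEigenvector M N := by
  have htr0 : (N - M).trace = 0 := by rw [trace_sub, htr, sub_self]
  obtain ⟨hdet0, hM⟩ := det_eq_zero_of_det_add_smul htr0 hc0 hc1
    (by rw [add_sub_cancel, hdet]) hc
  obtain ⟨v, hv, hv'⟩ := exists_eigenvector_of_nilpotent (sub_ne_zero.mpr hMN) htr0 hdet0
  refine ⟨v, hv, hv' M hM, hv' N ?_⟩
  have hsq := trace_mul_self_fin_two (N - M)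
  rw [mul_sub, trace_sub, hM, htr0, hdet0] at hsq
  linear_combination hsq

theorem HaveCommonEigenvector.of_trace_sub_mul {M' M'' : Matrix (Fin 2) (Fin 2) F} {c : F}
    (hM' : M' ≠ M) (hM'' : M'' ≠ M) (hMM : M'' ≠ M') (htr : M'.trace = M.trace)
    (hdet' : M'.det = M.det) (hdet'' : M''.det = M.det) (hc : M'' - M = c • (M' - M))
    (hX : ((M' - M) * X).trace = 0) : HaveCommonEigenvector M (M * X) := by
  have htr0 : (M' - M).trace = 0 := by rw [trace_sub, htr, sub_self]
  have hc0 : c ≠ 0 := fun h ↦ hM'' (sub_eq_zero.mp (by rw [hc, h, zero_smul]))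
  have hc1 : c ≠ 1 := fun h ↦ hMM (sub_left_injective (by simpa only [h, one_smul] using hc))
  obtain ⟨hdet0, hM⟩ := det_eq_zero_of_det_add_smul htr0 hc0 hc1
    (by rw [add_sub_cancel, hdet']) (by rw [← hc, add_sub_cancel, hdet''])
  obtain ⟨v, hv, hv'⟩ := exists_eigenvector_of_nilpotent (sub_ne_zero.mpr hM') htr0 hdet0
  exact ⟨v, hv, hv' M hM, area_mulVec_mul hv (hv' M hM) (hv' X hX)⟩

/- The conditions `(M * Z).trace = t` for `Z = 1, X, Y` cut out a line of matrices `M`, unless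
`1, X, Y` are collinear; either way three points of the quadric `det = 1` lie on one line. -/
theorem haveCommonEigenvector_mul_of_trace_eq {M' M'' : Matrix (Fin 2) (Fin 2) F} {t : F}
    (ht : t ≠ 0) (hdet : M.det = 1) (hdet' : M'.det = 1) (hdet'' : M''.det = 1)
    (hX : X.det = 1) (hY : Y.det = 1)
    (htr : ∀ K ∈ ({M, M', M''} : Set (Matrix (Fin 2) (Fin 2) F)),
      K.trace = t ∧ (K * X).trace = t ∧ (K * Y).trace = t)
    (hM' : M' ≠ M) (hM'' : M'' ≠ M) (hMM : M'' ≠ M') (hX1 : X ≠ 1) (hY1 : Y ≠ 1) (hXY : Y ≠ X) :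
    HaveCommonEigenvector M (M * X) := by
  obtain ⟨tr, trX, trY⟩ := htr M (by simp)
  obtain ⟨tr', trX', trY'⟩ := htr M' (by simp)
  obtain ⟨tr'', trX'', trY''⟩ := htr M'' (by simp)
  have hXscalar : ¬∃ d : F, X = d • 1 := by
    rintro ⟨d, rfl⟩
    rw [Matrix.mul_smul, mul_one, trace_smul, tr, smul_eq_mul, mul_eq_right₀ ht] at trX
    exact hX1 (by rw [trX, one_smul])
  have hM'X : ((M' - M) * X).trace = 0 := by rw [sub_mul, trace_sub, trX, trX', sub_self]
  obtain ⟨c, d, hcd⟩ | ⟨c, hc⟩ := exists_eq_smul_of_trace_mul_eq_zero (K := M'' - M) (Y := Y)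
    (sub_ne_zero.mpr hM') (by rw [trace_sub, tr, tr', sub_self])
    (by rw [trace_sub, tr, tr'', sub_self]) hXscalar hM'X
    (by rw [sub_mul, trace_sub, trY, trY', sub_self])
    (by rw [sub_mul, trace_sub, trX, trX'', sub_self])
    (by rw [sub_mul, trace_sub, trY, trY'', sub_self])
  · have hd : d = 1 - c := by
      rw [hcd, mul_add, Matrix.mul_smul, Matrix.mul_smul, mul_one, trace_add, trace_smul,
        trace_smul, trX, tr, smul_eq_mul, smul_eq_mul] at trY
      exact mul_right_cancel₀ ht (by linear_combination trY)
    have hMY : M + c • (M * X - M) = M * Y := by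
      rw [hcd, hd, mul_add, Matrix.mul_smul, Matrix.mul_smul, mul_one, smul_sub, sub_smul, one_smul]
      abel
    have hMX : M * X ≠ M := fun h ↦ hX1 <|
      ((isUnit_iff_isUnit_det M).mpr (hdet ▸ isUnit_one)).mul_left_cancel (h.trans (mul_one M).symm)
    refine .of_det_add_smul hMX (trX.trans tr.symm) (by rw [det_mul, hX, mul_one]) (c := c) ?_ ?_
      (by rw [hMY, det_mul, hY, mul_one])
    · rintro rfl
      exact hY1 (by simpa [hd] using hcd)
    · rintro rfl
      exact hXY (by simpa [hd] using hcd)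
  · exact .of_trace_sub_mul hM' hM'' hMM (tr'.trans tr.symm) (hdet'.trans hdet.symm)
      (hdet''.trans hdet.symm) hc hM'X

end Pencils

section TraceClasses

variable {F : Type*} [Field F]

theorem smul_eq_mulVec (g : SL(2, F)) (v : Fin 2 → F) : g • v = g.1 *ᵥ v := rfl

theorem not_exists_eq_scalar {g : SL(2, F)} (hg : g.1.trace ^ 2 ≠ 4) : ¬∃ d : F, g.1 = d • 1 := by
  rintro ⟨d, hd⟩
  have hdet := g.det_coe
  simp only [hd, det_smul, det_one, Fintype.card_fin, mul_one] at hdet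
  apply hg
  rw [hd, trace_smul, trace_one, Fintype.card_fin, smul_eq_mul]
  linear_combination 4 * hdet

theorem card_le_two_of_quadratic_eq_zero {T : Finset F} {t d : F}
    (hT : ∀ c ∈ T, c ^ 2 - t * c + d = 0) : #T ≤ 2 := by
  classical
  obtain rfl | ⟨c₀, h₀⟩ := T.eq_empty_or_nonempty
  · simp
  refine (card_le_card fun c hc ↦ ?_).trans (card_le_two (a := c₀) (b := t - c₀))
  have hfactor : (c - c₀) * (c - (t - c₀)) = 0 := by linear_combination hT c hc - hT c₀ h₀
  simpa only [mem_insert, mem_singleton, sub_eq_zero] using mul_eq_zero.mp hfactor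

theorem exists_parallel_of_eigenvector {M : Matrix (Fin 2) (Fin 2) F} (hM : ¬∃ d : F, M = d • 1) :
    ∃ v₁ v₂ : Fin 2 → F, v₁ ≠ 0 ∧ v₂ ≠ 0 ∧
      ∀ v, area v (M *ᵥ v) = 0 → area v v₁ = 0 ∨ area v v₂ = 0 := by
  by_cases h₁ : ∃ v₁ : Fin 2 → F, v₁ ≠ 0 ∧ area v₁ (M *ᵥ v₁) = 0
  · obtain ⟨v₁, hv₁, hM₁⟩ := h₁
    by_cases h₂ : ∃ v₂ : Fin 2 → F, area v₂ (M *ᵥ v₂) = 0 ∧ area v₂ v₁ ≠ 0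
    · obtain ⟨v₂, hM₂, h₂₁⟩ := h₂
      refine ⟨v₁, v₂, hv₁, ?_, fun v hv ↦ ?_⟩
      · rintro rfl
        simp [area] at h₂₁
      · by_contra! h
        exact hM (exists_eq_scalar_of_three_eigenvectors hv hM₂ hM₁ h.2 h.1 h₂₁)
    · push Not at h₂
      exact ⟨v₁, v₁, hv₁, hv₁, fun v hv ↦ .inl (h₂ v hv)⟩
  · push Not at h₁
    refine ⟨1, 1, one_ne_zero, one_ne_zero, fun v hv ↦ .inl ?_⟩
    rw [not_imp_not.mp (h₁ v) hv]
    simp [area]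

theorem area_transvection_mulVec_sq {i j : Fin 2} (hij : i ≠ j) (x : F) (v : Fin 2 → F) :
    area v ((transvection hij x).1 *ᵥ v) ^ 2 = (x * v j ^ 2) ^ 2 := by
  simp only [area, mulVec_apply_fin_two]
  fin_cases i <;> fin_cases j <;>
    first | exact absurd rfl hij | (simp [transvection_coe]; ring)

variable [DecidableEq F] {H A : Finset SL(2, F)} {v : Fin 2 → F} {t : F} {s : ℕ}

theorem exists_area_mulVec_ne_zero (hs : H⁻¹ = H) (hgen : Subgroup.closure (H : Set SL(2, F)) = ⊤)
    (hv : v ≠ 0) : ∃ h ∈ H, area v (h.1 *ᵥ v) ≠ 0 := by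
  by_contra! hcon
  have hall (x : SL(2, F)) : area v (x.1 *ᵥ v) = 0 := by
    refine closure_induction_of_inv_eq hs hgen (P := fun x ↦ area v (x.1 *ᵥ v) = 0) ?_
      (fun h hh x hx ↦ ?_) x
    · rw [Matrix.SpecialLinearGroup.coe_one, one_mulVec, area_self]
    · exact area_mulVec_mul hv (hcon h hh) hx
  refine hv (funext fun j ↦ ?_)
  obtain ⟨i, hij⟩ := exists_ne j
  have hsq := area_transvection_mulVec_sq hij 1 v
  rw [hall, one_mul, zero_pow two_ne_zero] at hsq
  exact eq_zero_of_pow_eq_zero (eq_zero_of_pow_eq_zero hsq.symm)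

theorem card_filter_smul_eq_self_sq_le (hs : H⁻¹ = H)
    (hgen : Subgroup.closure (H : Set SL(2, F)) = ⊤) (hv : v ≠ 0) (k : ℕ) :
    #{g ∈ H ^ k | g • v = v} ^ 2 ≤ #(H ^ (2 * k + 2)) := by
  obtain ⟨h, hh, hhv⟩ := exists_area_mulVec_ne_zero hs hgen hv
  set A := {g ∈ H ^ k | g • v = v}
  set B := A.image (MulAut.conj h)
  have hAB : A * B ⊆ H ^ (2 * k + 2) := by
    refine mul_subset_iff.mpr fun a ha b hb ↦ ?_
    obtain ⟨c, hc, rfl⟩ := mem_image.mp hb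
    have hh1 : h ∈ H ^ 1 := by rwa [pow_one]
    exact mem_pow_of_mem (mem_filter.mp ha).1 (mem_pow_of_mem (mem_pow_of_mem hh1
      (mem_filter.mp hc).1 rfl) (inv_mem_pow hs hh1) rfl) (by ring)
  have hinter : A⁻¹ * A ∩ (B * B⁻¹) ⊆ {1} := by
    intro x hx
    obtain ⟨hxA, hxB⟩ := mem_inter.mp hx
    have hAv (a) (ha : a ∈ A) : a ∈ MulAction.stabilizer SL(2, F) v := (mem_filter.mp ha).2
    have hBv (b) (hb : b ∈ B) : b ∈ MulAction.stabilizer SL(2, F) (h • v) := by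
      obtain ⟨a, ha, rfl⟩ := mem_image.mp hb
      rw [MulAut.conj_apply, MulAction.mem_stabilizer_iff, mul_smul, inv_smul_smul,
        mul_smul, hAv a ha]
    obtain ⟨a, ha, a', ha', rfl⟩ := mem_mul.mp hxA
    obtain ⟨b, hb, b', hb', hx⟩ := mem_mul.mp hxB
    have hv' := mul_mem (inv_mem_iff.mp (hAv _ (mem_inv'.mp ha))) (hAv a' ha')
    have hhv' := mul_mem (hBv b hb) (inv_mem_iff.mp (hBv _ (mem_inv'.mp hb')))
    exact mem_singleton.mpr (Subtype.ext (eq_one_of_mulVec_eq_self hhv hv' (hx ▸ hhv')))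
  calc #A ^ 2 = #A * #B := by rw [sq, card_image_of_injective _ (MulEquiv.injective _)]
    _ ≤ #(A * B) * #(A⁻¹ * A ∩ (B * B⁻¹)) := card_mul_card_le A B
    _ ≤ #(H ^ (2 * k + 2)) * 1 := Nat.mul_le_mul (card_le_card hAB) (card_le_card hinter)
    _ = #(H ^ (2 * k + 2)) := mul_one _

theorem card_filter_eigenvector_le (hA : ∀ a ∈ A, a.1.trace = t) (hv : v ≠ 0)
    (hs : #{g ∈ A⁻¹ * A | g • v = v} ≤ s) : #{a ∈ A | area v (a.1 *ᵥ v) = 0} ≤ 2 * s := by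
  have heig (a : SL(2, F)) : ∃ c : F, area v (a.1 *ᵥ v) = 0 → a.1 *ᵥ v = c • v := by
    by_cases h : area v (a.1 *ᵥ v) = 0
    · exact (exists_eq_smul_of_area_eq_zero hv h).imp fun c hc _ ↦ hc
    · exact ⟨0, fun h' ↦ absurd h' h⟩
  choose c hc using heig
  set E := {a ∈ A | area v (a.1 *ᵥ v) = 0}
  have hroots : #(E.image c) ≤ 2 := by
    refine card_le_two_of_quadratic_eq_zero (t := t) (d := 1) (forall_mem_image.mpr fun a ha ↦ ?_)
    obtain ⟨haA, ha⟩ := mem_filter.mp ha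
    simpa only [a.det_coe, hA a haA] using sq_sub_trace_mul_add_det_eq_zero hv (hc a ha)
  have hfiber (a) (ha : a ∈ E) (b) (hb : b ∈ E) (hab : c a = c b) :
      a⁻¹ * b ∈ {g ∈ A⁻¹ * A | g • v = v} := by
    obtain ⟨haA, ha⟩ := mem_filter.mp ha
    obtain ⟨hbA, hb⟩ := mem_filter.mp hb
    refine mem_filter.mpr ⟨mul_mem_mul (inv_mem_inv haA) hbA, ?_⟩
    rw [mul_smul, smul_eq_mulVec b, hc b hb, ← hab, ← hc a ha, ← smul_eq_mulVec, inv_smul_smul]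
  exact (card_le_card_mul_of_fiber (fun a ha ↦ mem_image_of_mem c ha) hfiber).trans
    (Nat.mul_le_mul hroots hs)

open scoped Classical in
theorem card_filter_haveCommonEigenvector_le (hA : ∀ a ∈ A, a.1.trace = t)
    (hs : ∀ v : Fin 2 → F, v ≠ 0 → #{g ∈ A⁻¹ * A | g • v = v} ≤ s) {M : Matrix (Fin 2) (Fin 2) F}
    (hM : ¬∃ d : F, M = d • 1) : #{a ∈ A | HaveCommonEigenvector M a.1} ≤ 4 * s := by
  obtain ⟨v₁, v₂, hv₁, hv₂, hpar⟩ := exists_parallel_of_eigenvector hM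
  have hsub : {a ∈ A | HaveCommonEigenvector M a.1} ⊆
      {a ∈ A | area v₁ (a.1 *ᵥ v₁) = 0} ∪ {a ∈ A | area v₂ (a.1 *ᵥ v₂) = 0} := by
    rw [← filter_or]
    refine monotone_filter_right A fun a _ ⟨v, hv, hMv, hav⟩ ↦ ?_
    exact (hpar v hMv).imp (area_mulVec_eq_zero_of_parallel hv · hav)
      (area_mulVec_eq_zero_of_parallel hv · hav)
  have h₁ := card_filter_eigenvector_le hA hv₁ (hs v₁ hv₁)
  have h₂ := card_filter_eigenvector_le hA hv₂ (hs v₂ hv₂)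
  have hcard := (card_le_card hsub).trans (card_union_le _ _)
  lia

open scoped Classical in
theorem card_filter_not_haveCommonEigenvector_le_two (ht : t ≠ 0) (hA : ∀ a ∈ A, a.1.trace = t)
    {x y : SL(2, F)} (hx : x ≠ 1) (hy : y ≠ 1) (hxy : y ≠ x) :
    #{b ∈ A | b * x ∈ A ∧ b * y ∈ A ∧ ¬HaveCommonEigenvector b.1 (b * x).1} ≤ 2 := by
  by_contra! hcard
  obtain ⟨b, b', b'', hb, hb', hb'', hne', hne'', hne⟩ := two_lt_card_iff.mp hcard
  rw [mem_filter] at hb hb' hb''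
  refine hb.2.2.2 (haveCommonEigenvector_mul_of_trace_eq ht b.det_coe b'.det_coe b''.det_coe
    x.det_coe y.det_coe ?_ (Subtype.coe_ne_coe.mpr hne'.symm) (Subtype.coe_ne_coe.mpr hne''.symm)
    (Subtype.coe_ne_coe.mpr hne.symm) (Subtype.coe_ne_coe.mpr hx) (Subtype.coe_ne_coe.mpr hy)
    (Subtype.coe_ne_coe.mpr hxy))
  rintro K (rfl | rfl | rfl)
  exacts [⟨hA _ hb.1, hA _ hb.2.1, hA _ hb.2.2.1⟩, ⟨hA _ hb'.1, hA _ hb'.2.1, hA _ hb'.2.2.1⟩,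
    ⟨hA _ hb''.1, hA _ hb''.2.1, hA _ hb''.2.2.1⟩]

-- Counts triples `(b, a, c)` in `A` through the map `(b, a, c) ↦ (b⁻¹ a, b⁻¹ c)`.
theorem card_mul_card_sub_mul_card_sub_le (ht0 : t ≠ 0) (ht : t ^ 2 ≠ 4)
    (hA : ∀ a ∈ A, a.1.trace = t)
    (hs : ∀ v : Fin 2 → F, v ≠ 0 → #{g ∈ A⁻¹ * A | g • v = v} ≤ s) :
    #A * ((#A - (4 * s + 1)) * (#A - 2)) ≤ #(A⁻¹ * A) ^ 2 * 2 := by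
  classical
  rw [sq, ← card_product]
  refine card_mul_le_card_mul (fun b (x : SL(2, F) × SL(2, F)) ↦ x.1 ≠ 1 ∧ x.2 ≠ 1 ∧ x.2 ≠ x.1 ∧
    b * x.1 ∈ A ∧ b * x.2 ∈ A ∧ ¬HaveCommonEigenvector b.1 (b * x.1).1) (fun b hb ↦ ?_) ?_
  · set E := {a ∈ A | HaveCommonEigenvector b.1 a.1}
    have hE : #(E ∪ {b}) ≤ 4 * s + 1 := (card_union_le _ _).trans <| Nat.add_le_add_right
      (card_filter_haveCommonEigenvector_le hA hs (not_exists_eq_scalar (hA b hb ▸ ht))) 1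
    set T := (A \ (E ∪ {b})) ×ˢ A.erase b \ (A \ (E ∪ {b})).diag
    have hT : (#A - (4 * s + 1)) * (#A - 2) ≤ #T := calc
      _ ≤ #(A \ (E ∪ {b})) * (#A - 2) := Nat.mul_le_mul_right _
        ((Nat.sub_le_sub_left hE _).trans (le_card_sdiff _ _))
      _ = #((A \ (E ∪ {b})) ×ˢ A.erase b) - #(A \ (E ∪ {b})).diag := by
        rw [card_product, card_erase_of_mem hb, diag_card, ← Nat.mul_sub_one, Nat.sub_sub]
      _ ≤ #T := le_card_sdiff _ _
    refine hT.trans (card_le_card_of_injOn (fun x ↦ (b⁻¹ * x.1, b⁻¹ * x.2)) ?_ ?_)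
    · rintro ⟨a, c⟩ hac
      simp only [T, E, coe_sdiff, mem_coe, mem_sdiff, Set.mem_sdiff, mem_product, mem_erase,
        mem_diag, mem_union, mem_filter, mem_singleton, not_or, not_and] at hac
      obtain ⟨⟨⟨ha, haE, hab⟩, hcb, hc⟩, hca⟩ := hac
      simp only [mem_coe, mem_bipartiteAbove, mem_product, mul_inv_cancel_left, ne_eq,
        inv_mul_eq_one, mul_right_inj]
      exact ⟨⟨mul_mem_mul (inv_mem_inv hb) ha, mul_mem_mul (inv_mem_inv hb) hc⟩, Ne.symm hab,
        Ne.symm hcb, fun h ↦ hca ⟨ha, haE, hab⟩ h.symm, ha, hc, haE ha⟩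
    · rintro ⟨a, c⟩ - ⟨a', c'⟩ - h
      simpa only [Prod.mk.injEq, mul_right_inj] using h
  · rintro ⟨x, y⟩ -
    by_cases hne : x ≠ 1 ∧ y ≠ 1 ∧ y ≠ x
    · refine (card_le_card (monotone_filter_right A fun b _ hb ↦ ?_)).trans
        (card_filter_not_haveCommonEigenvector_le_two ht0 hA hne.1 hne.2.1 hne.2.2)
      exact hb.2.2.2
    · rw [bipartiteBelow, filter_false_of_mem (fun b _ hb ↦ hne ⟨hb.1, hb.2.1, hb.2.2.1⟩)]
      exact Nat.zero_le _

theorem pow_three_le_of_mul_sub_le {a s p q : ℕ}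
    (h : a * ((a - (4 * s + 1)) * (a - 2)) ≤ p ^ 2 * 2) (hs : 1 ≤ s) (hsq : s ^ 2 ≤ q)
    (hpq : p ≤ q) : a ^ 3 ≤ 1728 * q ^ 2 := by
  obtain has | has := le_or_gt a (12 * s)
  · calc a ^ 3 ≤ (12 * s) ^ 3 := Nat.pow_le_pow_left has 3
      _ = 1728 * (s ^ 3 * 1) := by ring
      _ ≤ 1728 * (s ^ 3 * s) := Nat.mul_le_mul_left _ (Nat.mul_le_mul_left _ hs)
      _ = 1728 * (s ^ 2) ^ 2 := by ring
      _ ≤ 1728 * q ^ 2 := Nat.mul_le_mul_left _ (Nat.pow_le_pow_left hsq 2)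
  · have h₁ : a ≤ 2 * (a - (4 * s + 1)) := by lia
    have h₂ : a ≤ 2 * (a - 2) := by lia
    calc a ^ 3 = a * (a * a) := by ring
      _ ≤ a * ((2 * (a - (4 * s + 1))) * (2 * (a - 2))) :=
        Nat.mul_le_mul_left _ (Nat.mul_le_mul h₁ h₂)
      _ = 4 * (a * ((a - (4 * s + 1)) * (a - 2))) := by ring
      _ ≤ 4 * (p ^ 2 * 2) := Nat.mul_le_mul_left _ h
      _ ≤ 4 * (q ^ 2 * 2) :=
        Nat.mul_le_mul_left _ (Nat.mul_le_mul_right _ (Nat.pow_le_pow_left hpq 2))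
      _ ≤ 1728 * q ^ 2 := by lia

theorem card_filter_trace_pow_three_le (hs : H⁻¹ = H) (h1 : 1 ∈ H)
    (hgen : Subgroup.closure (H : Set SL(2, F)) = ⊤) (ht0 : t ≠ 0) (ht : t ^ 2 ≠ 4) (k : ℕ) :
    #{g ∈ H ^ k | g.1.trace = t} ^ 3 ≤ 1728 * #(H ^ (4 * k + 2)) ^ 2 := by
  set A := {g ∈ H ^ k | g.1.trace = t}
  have hAH : A ⊆ H ^ k := filter_subset _ _
  have hP : A⁻¹ * A ⊆ H ^ (2 * k) := by
    rw [two_mul, pow_add]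
    exact mul_subset_mul (inv_subset_inv hAH |>.trans (inv_pow_eq hs k).subset) hAH
  have hstab (v : Fin 2 → F) (hv : v ≠ 0) :
      #{g ∈ A⁻¹ * A | g • v = v} ≤ (#(H ^ (4 * k + 2))).sqrt := by
    refine (card_le_card (filter_subset_filter _ hP)).trans (Nat.le_sqrt'.mpr ?_)
    exact (card_filter_smul_eq_self_sq_le hs hgen hv (2 * k)).trans_eq (by ring_nf)
  refine pow_three_le_of_mul_sub_le (card_mul_card_sub_mul_card_sub_le ht0 ht
    (fun a ha ↦ (mem_filter.mp ha).2) hstab) ?_ (Nat.sqrt_le' _) ?_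
  · exact Nat.le_sqrt'.mpr (card_pos.mpr ⟨1, one_mem_pow h1⟩)
  · exact (card_le_card hP).trans (card_le_card (pow_subset_pow_right h1 (by lia)))

end TraceClasses

section Tori

variable {F : Type*} [Field F] {g x y : SL(2, F)}

/-- A regular semisimple element of nonzero trace. Its centralizer is a maximal torus, and its
conjugacy class is one to which the trace class bound `card_filter_trace_pow_three_le` applies. -/
def IsGeneric (g : SL(2, F)) : Prop := g.1.trace ≠ 0 ∧ g.1.trace ^ 2 ≠ 4

theorem trace_conj (a g : SL(2, F)) : (a * g * a⁻¹).1.trace = g.1.trace := by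
  change (a.1 * g.1 * (a⁻¹).1).trace = _
  rw [trace_mul_cycle, ← Matrix.SpecialLinearGroup.coe_mul, inv_mul_cancel,
    Matrix.SpecialLinearGroup.coe_one, one_mul]

theorem IsGeneric.conj (hg : IsGeneric g) (a : SL(2, F)) : IsGeneric (a * g * a⁻¹) := by
  rwa [IsGeneric, trace_conj]

theorem trace_mem_of_not_isGeneric [DecidableEq F] (hg : ¬IsGeneric g) :
    g.1.trace ∈ ({0, 2, -2} : Finset F) := by
  rw [IsGeneric, not_and_or, not_not, not_not, show (4 : F) = 2 ^ 2 by norm_num,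
    sq_eq_sq_iff_eq_or_eq_neg] at hg
  simpa only [mem_insert, mem_singleton] using hg

theorem commute_of_commute (hg : g.1.trace ^ 2 ≠ 4) (hx : Commute x g) (hy : Commute y g) :
    Commute x y := by
  have hg' := not_exists_eq_scalar hg
  obtain ⟨a, b, hab⟩ := exists_eq_smul_add_scalar_of_commute hg' (congrArg Subtype.val hx.eq)
  obtain ⟨c, d, hcd⟩ := exists_eq_smul_add_scalar_of_commute hg' (congrArg Subtype.val hy.eq)
  apply Subtype.ext
  change x.1 * y.1 = y.1 * x.1
  rw [hab, hcd]
  simp only [mul_add, add_mul, Matrix.mul_smul, Matrix.smul_mul, mul_one, one_mul]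
  module

theorem four_sub_trace_sq_of_eq_smul_add {c d : F} (h : x.1 = c • g.1 + d • 1) :
    4 - x.1.trace ^ 2 = c ^ 2 * (4 - g.1.trace ^ 2) := by
  have hdet := x.det_coe
  have hg := g.det_coe
  rw [h, det_fin_two] at hdet
  rw [det_fin_two] at hg
  rw [h, trace_fin_two, trace_fin_two]
  simp only [Matrix.add_apply, Matrix.smul_apply, one_apply_eq, smul_eq_mul, mul_one, mul_zero,
    add_zero, ne_eq, zero_ne_one, one_ne_zero, not_false_eq_true, one_apply_ne] at hdet ⊢
  linear_combination 4 * c ^ 2 * hg - 4 * hdet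

open scoped Classical in
theorem card_filter_commute_trace_eq_le_two [DecidableEq F] (h2 : (2 : F) ≠ 0)
    (hg : g.1.trace ^ 2 ≠ 4) (K : Finset SL(2, F)) (t : F) :
    #{x ∈ K | Commute x g ∧ x.1.trace = t} ≤ 2 := by
  have hcoord (x : SL(2, F)) : ∃ c d : F, Commute x g → x.1 = c • g.1 + d • 1 := by
    by_cases hx : Commute x g
    · obtain ⟨c, d, h⟩ := exists_eq_smul_add_scalar_of_commute (not_exists_eq_scalar hg)
        (congrArg Subtype.val hx.eq)
      exact ⟨c, d, fun _ ↦ h⟩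
    · exact ⟨0, 0, fun h ↦ absurd h hx⟩
  choose c d hcd using hcoord
  have hg0 : 4 - g.1.trace ^ 2 ≠ 0 := sub_ne_zero.mpr hg.symm
  rw [← card_image_of_injOn (f := c) fun x hx y hy hxy ↦ ?_]
  · refine card_le_two_of_quadratic_eq_zero (t := 0)
      (d := -((4 - t ^ 2) / (4 - g.1.trace ^ 2))) fun b hb ↦ ?_
    obtain ⟨x, hx, rfl⟩ := mem_image.mp hb
    obtain ⟨-, hxg, rfl⟩ := mem_filter.mp hx
    rw [four_sub_trace_sq_of_eq_smul_add (hcd x hxg), mul_div_cancel_right₀ _ hg0]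
    ring
  · obtain ⟨-, hxg, hxt⟩ := mem_filter.mp hx
    obtain ⟨-, hyg, hyt⟩ := mem_filter.mp hy
    have hd : d x = d y := by
      apply mul_left_cancel₀ h2
      have htr := hxt.trans hyt.symm
      rw [hcd x hxg, hcd y hyg, hxy] at htr
      simp only [trace_add, trace_smul, trace_one, Fintype.card_fin, smul_eq_mul] at htr
      push_cast at htr
      linear_combination htr
    exact Subtype.ext (by rw [hcd x hxg, hcd y hyg, hxy, hd])

open scoped Classical in
theorem card_filter_commute_not_isGeneric_le (h2 : (2 : F) ≠ 0) (hg : g.1.trace ^ 2 ≠ 4)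
    (K : Finset SL(2, F)) : #{x ∈ K | Commute x g ∧ ¬IsGeneric x} ≤ 6 := by
  refine (card_le_mul_card_image_of_maps_to (f := fun x ↦ x.1.trace)
    (t := ({0, 2, -2} : Finset F)) (fun x hx ↦ ?_) 2 fun t _ ↦ ?_).trans
    (Nat.mul_le_mul_left 2 card_le_three)
  · exact trace_mem_of_not_isGeneric (mem_filter.mp hx).2.2
  · refine (card_le_card fun x hx ↦ ?_).trans (card_filter_commute_trace_eq_le_two h2 hg K t)
    simp only [mem_filter] at hx ⊢
    tauto

open scoped Classical in
theorem card_filter_commute_le [Fintype F] (h2 : (2 : F) ≠ 0) (hg : g.1.trace ^ 2 ≠ 4)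
    (K : Finset SL(2, F)) : #{x ∈ K | Commute x g} ≤ 2 * Fintype.card F := by
  refine card_le_mul_card_image_of_maps_to (f := fun x ↦ x.1.trace) (fun _ _ ↦ mem_univ _) 2
    fun t _ ↦ ?_
  rw [filter_filter]
  exact card_filter_commute_trace_eq_le_two h2 hg K t

end Tori

section Pivot

variable {F : Type*} [Field F] [DecidableEq F] {H : Finset SL(2, F)} {g : SL(2, F)} {M : ℕ}

open scoped Classical in
theorem card_pow_three_le_of_isGeneric (hs : H⁻¹ = H) (h1 : 1 ∈ H)
    (hgen : Subgroup.closure (H : Set SL(2, F)) = ⊤) (hg : g ∈ H ^ 2) (hgg : IsGeneric g) :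
    #H ^ 3 ≤ 1728 * #(H ^ 18) ^ 2 * #{x ∈ H ^ 2 | Commute x g} ^ 3 := by
  have horbit : #H ≤ #{x ∈ H ^ 4 | x.1.trace = g.1.trace} * #{x ∈ H ^ 2 | Commute x g} := by
    refine (card_le_card_mul_card_commute (g := g) fun h hh ↦ ?_).trans_eq (by rw [hs, ← sq H])
    refine mem_filter.mpr ⟨?_, trace_conj h g⟩
    have hh' : h⁻¹ ∈ H := hs ▸ inv_mem_inv hh
    rw [← pow_one H] at hh hh'
    exact mem_pow_of_mem (m := 3) (mem_pow_of_mem hh hg) hh'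
  calc #H ^ 3 ≤ _ := Nat.pow_le_pow_left horbit 3
    _ ≤ _ := by
      rw [mul_pow]
      exact Nat.mul_le_mul_right _ (card_filter_trace_pow_three_le hs h1 hgen hgg.1 hgg.2 4)

open scoped Classical in
theorem card_mul_le_card_pow_five_or_forall_exists_commute (h2 : (2 : F) ≠ 0) (hs : H⁻¹ = H)
    (hgen : Subgroup.closure (H : Set SL(2, F)) = ⊤) (hg : g ∈ H ^ 2) (hgg : IsGeneric g)
    (hM : ∀ y ∈ H ^ 2, IsGeneric y → M ≤ #{x ∈ H ^ 2 | Commute x y}) :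
    #H * M ≤ #(H ^ 5) * 6 ∨
      ∀ x : SL(2, F), ∃ y ∈ H ^ 2, IsGeneric y ∧ Commute y (x * g * x⁻¹) := by
  refine or_iff_not_imp_left.mpr fun hlt ↦
    closure_induction_of_inv_eq hs hgen ⟨g, hg, hgg, by simp⟩ ?_
  rintro h hh x ⟨y, hy, hyg, hyx⟩
  contrapose! hlt
  set z := h * x * g * (h * x)⁻¹
  have hz : z = h * (x * g * x⁻¹) * h⁻¹ := by simp only [z]; group
  set B := {u ∈ H ^ 4 | Commute u z}
  have hMB : M ≤ #B := by
    refine (hM y hy hyg).trans (card_le_card_of_injOn (fun u ↦ h * u * h⁻¹) (fun u hu ↦ ?_)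
      fun u _ v _ huv ↦ mul_left_cancel (mul_right_cancel huv))
    obtain ⟨hu, huy⟩ := mem_filter.mp hu
    have hh' : h⁻¹ ∈ H := hs ▸ inv_mem_inv hh
    rw [← pow_one H] at hh hh'
    refine mem_filter.mpr ⟨mem_pow_of_mem (m := 3) (mem_pow_of_mem hh hu) hh', ?_⟩
    rw [hz, Commute.conj_iff]
    exact commute_of_commute hyg.2 huy hyx.symm
  have hinter : #(H⁻¹ * H ∩ (B * B⁻¹)) ≤ 6 := by
    refine (card_le_card fun u hu ↦ ?_).trans
      (card_filter_commute_not_isGeneric_le h2 (hgg.conj (h * x)).2 (H ^ 2))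
    rw [hs, ← sq, mem_inter] at hu
    obtain ⟨b, hb, c, hc, rfl⟩ := mem_mul.mp hu.2
    have hbz : Commute b z := (mem_filter.mp hb).2
    have hcz : Commute c z := by simpa using ((mem_filter.mp (mem_inv'.mp hc)).2).inv_left
    exact mem_filter.mpr ⟨hu.1, hbz.mul_left hcz, fun hgen' ↦ hlt _ hu.1 hgen' (hbz.mul_left hcz)⟩
  have hprod : H * B ⊆ H ^ 5 := by
    rw [pow_succ']
    exact mul_subset_mul_left (filter_subset _ _)
  calc #H * M ≤ #H * #B := Nat.mul_le_mul_left _ hMB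
    _ ≤ #(H * B) * #(H⁻¹ * H ∩ (B * B⁻¹)) := card_mul_card_le H B
    _ ≤ #(H ^ 5) * 6 := Nat.mul_le_mul (card_le_card hprod) hinter

open scoped Classical in
theorem card_univ_mul_le_of_forall_exists_commute [Fintype F] (h2 : (2 : F) ≠ 0)
    (hgg : IsGeneric g) (hM : ∀ y ∈ H, IsGeneric y → M ≤ #{x ∈ H | Commute x y})
    (hall : ∀ x : SL(2, F), ∃ y ∈ H, IsGeneric y ∧ Commute y (x * g * x⁻¹)) :
    Fintype.card SL(2, F) * (M - 6) ≤ #H * (2 * (2 * Fintype.card F)) := by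
  refine card_mul_le_card_mul (s := univ)
    (fun x y ↦ IsGeneric y ∧ Commute (x * y * x⁻¹) g) (fun x _ ↦ ?_) fun y _ ↦ ?_
  · obtain ⟨y, hy, hyg, hyx⟩ := hall x⁻¹
    set z := x⁻¹ * g * x⁻¹⁻¹
    have hyz : #{u ∈ H | Commute u y} ≤ #{u ∈ H | Commute u z} :=
      card_le_card (monotone_filter_right _ fun u _ hu ↦ commute_of_commute hyg.2 hu hyx.symm)
    have hbad := card_filter_commute_not_isGeneric_le h2 (hgg.conj x⁻¹).2 H
    have hsplit := card_filter_add_card_filter_not (s := {u ∈ H | Commute u z}) IsGeneric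
    rw [filter_filter, filter_filter] at hsplit
    have hgood : #{u ∈ H | Commute u z ∧ IsGeneric u} ≤
        #(bipartiteAbove (fun x y ↦ IsGeneric y ∧ Commute (x * y * x⁻¹) g) H x) := by
      refine card_le_card (monotone_filter_right _ fun u _ hu ↦ ⟨hu.2, ?_⟩)
      simpa [z, mul_assoc] using (Commute.conj_iff x).mpr hu.1
    have := hM y hy hyg
    lia
  · by_cases hy : IsGeneric y
    · refine (card_le_card_mul_card_commute (g := y)
        (T := {z | Commute z g ∧ z.1.trace = y.1.trace}) fun x hx ↦ ?_).trans ?_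
      · exact mem_filter.mpr ⟨mem_univ _, (mem_filter.mp hx).2.2, trace_conj x y⟩
      · exact Nat.mul_le_mul (card_filter_commute_trace_eq_le_two h2 hgg.2 univ _)
          (card_filter_commute_le h2 hy.2 _)
    · rw [bipartiteBelow, filter_false_of_mem fun x _ hx ↦ hy hx.1]
      exact Nat.zero_le _

end Pivot

section CardSpecialLinearGroup

variable {F : Type*} [Field F] [Fintype F] [DecidableEq F]

theorem card_sq_mul_card_sub_one_le_card_specialLinearGroup :
    Fintype.card F ^ 2 * (Fintype.card F - 1) ≤ Fintype.card SL(2, F) := by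
  have hcard : Fintype.card (Fˣ × F × F) = Fintype.card F ^ 2 * (Fintype.card F - 1) := by
    rw [Fintype.card_prod, Fintype.card_prod, Fintype.card_units]
    ring
  rw [← hcard]
  refine Fintype.card_le_of_injective (fun z : Fˣ × F × F ↦
    (⟨!![(z.1 : F), z.2.1; z.2.2, (1 + z.2.1 * z.2.2) * (z.1 : F)⁻¹], by
      rw [det_fin_two_of, mul_left_comm, mul_inv_cancel₀ z.1.ne_zero]
      ring⟩ : SL(2, F))) ?_
  rintro ⟨a, b, c⟩ ⟨a', b', c'⟩ h
  have hentry (i j : Fin 2) := congrArg (fun g : SL(2, F) ↦ g.1 i j) h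
  exact Prod.ext (Units.ext (hentry 0 0)) (Prod.ext (hentry 0 1) (hentry 1 0))

theorem card_specialLinearGroup_le_card_pow_four :
    Fintype.card SL(2, F) ≤ Fintype.card F ^ 4 := by
  calc Fintype.card SL(2, F) ≤ Fintype.card (Fin 2 → Fin 2 → F) :=
        Fintype.card_le_of_injective _ Subtype.val_injective
    _ = Fintype.card F ^ 4 := by
        rw [Fintype.card_fun, Fintype.card_fun, ← pow_mul, Fintype.card_fin]

end CardSpecialLinearGroup

section Escape

variable {F : Type*} [Field F] {A B H : Finset SL(2, F)} {T : Finset F}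

theorem span_range_specialLinearGroup_coe :
    Submodule.span F (Set.range fun g : SL(2, F) ↦ g.1) = ⊤ := by
  refine eq_top_iff.mpr fun A _ ↦ ?_
  set V := Submodule.span F (Set.range fun g : SL(2, F) ↦ g.1)
  have hV {M : Matrix (Fin 2) (Fin 2) F} (hM : M.det = 1) : M ∈ V :=
    Submodule.subset_span ⟨⟨M, hM⟩, rfl⟩
  have h₁ : (1 : Matrix (Fin 2) (Fin 2) F) ∈ V := hV det_one
  have h₂ : !![1, 1; 0, 1] ∈ V := hV (by simp [det_fin_two_of])
  have h₃ : !![1, 0; 1, 1] ∈ V := hV (by simp [det_fin_two_of])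
  have h₄ : !![1, 1; 1, 2] ∈ V := hV (by rw [det_fin_two_of]; norm_num)
  have hA : A = A 0 0 • (1 : Matrix (Fin 2) (Fin 2) F) + A 0 1 • (!![1, 1; 0, 1] - 1) +
      A 1 0 • (!![1, 0; 1, 1] - 1) +
      (A 1 1 - A 0 0) • (!![1, 1; 1, 2] - !![1, 1; 0, 1] - !![1, 0; 1, 1] + 1) := by
    ext i j
    fin_cases i <;> fin_cases j <;> simp [sub_sub, one_add_one_eq_two]
  rw [hA]
  exact V.add_mem (V.add_mem (V.add_mem (V.smul_mem _ h₁) (V.smul_mem _ (V.sub_mem h₂ h₁)))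
    (V.smul_mem _ (V.sub_mem h₃ h₁)))
    (V.smul_mem _ (V.add_mem (V.sub_mem (V.sub_mem h₄ h₂) h₃) h₁))

theorem card_le_card_pow_four_of_trace_mul_mem
    (hB : Submodule.span F ((fun g : SL(2, F) ↦ g.1) '' B) = ⊤)
    (hT : ∀ b ∈ B, ∀ a ∈ A, (b * a).1.trace ∈ T) : #A ≤ #T ^ 4 := by
  classical
  obtain ⟨ι, b, hrange⟩ : ∃ (ι : Type _) (b : Module.Basis ι F (Matrix (Fin 2) (Fin 2) F)),
      Set.range b ⊆ (fun g : SL(2, F) ↦ g.1) '' B :=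
    ⟨_, Module.Basis.ofSpan hB.ge, Module.Basis.ofSpan_subset hB.ge⟩
  have := FiniteDimensional.fintypeBasisIndex b
  have hindex := Module.finrank_eq_card_basis b
  rw [Module.finrank_matrix, Module.finrank_self, Fintype.card_fin] at hindex
  calc #A ≤ #(Fintype.piFinset fun _ : ι ↦ T) := ?_
    _ = #T ^ 4 := by rw [Fintype.card_piFinset, prod_const, card_univ, ← hindex]
  refine card_le_card_of_injOn (fun (a : SL(2, F)) i ↦ (b i * a.1).trace)
    (fun a ha ↦ ?_) fun a _ a' _ h ↦ ?_
  · refine Fintype.mem_piFinset.mpr fun i ↦ ?_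
    obtain ⟨g, hg, hgi⟩ := hrange ⟨i, rfl⟩
    change (b i * a.1).trace ∈ T
    exact hgi ▸ hT g hg a ha
  · have hlin : traceLinearMap (Fin 2) F F ∘ₗ LinearMap.mulRight F a.1 =
        traceLinearMap (Fin 2) F F ∘ₗ LinearMap.mulRight F a'.1 := b.ext (congrFun h)
    exact Subtype.ext (ext_iff_trace_mul_left.mpr (LinearMap.congr_fun hlin))

variable [DecidableEq F]

theorem span_pow_eq_top_or_lt_finrank (hs : H⁻¹ = H) (h1 : 1 ∈ H)
    (hgen : Subgroup.closure (H : Set SL(2, F)) = ⊤) (k : ℕ) :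
    Submodule.span F ((fun g : SL(2, F) ↦ g.1) '' ↑(H ^ k)) = ⊤ ∨
      k < Module.finrank F (Submodule.span F ((fun g : SL(2, F) ↦ g.1) '' ↑(H ^ k))) := by
  set V := fun k ↦ Submodule.span F ((fun g : SL(2, F) ↦ g.1) '' ↑(H ^ k))
  have hone (k : ℕ) : (1 : SL(2, F)).1 ∈ V k :=
    Submodule.subset_span ⟨1, mod_cast one_mem_pow h1, rfl⟩
  change V k = ⊤ ∨ k < Module.finrank F (V k)
  induction k with
  | zero =>
    refine .inr (Nat.pos_of_ne_zero fun h0 ↦ ?_)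
    have h := hone 0
    rw [Submodule.finrank_eq_zero.mp h0, Submodule.mem_bot] at h
    exact one_ne_zero h
  | succ k ih =>
    have hle : V k ≤ V (k + 1) :=
      Submodule.span_mono (Set.image_mono (mod_cast pow_subset_pow_right h1 k.le_succ))
    rcases ih with h | h
    · exact .inl (top_le_iff.mp (h ▸ hle))
    by_cases heq : V k = V (k + 1)
    · left
      rw [← heq, ← top_le_iff, ← span_range_specialLinearGroup_coe, Submodule.span_le]
      rintro _ ⟨x, rfl⟩
      refine closure_induction_of_inv_eq (P := fun x ↦ x.1 ∈ V k) hs hgen (hone k)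
        (fun a ha x hx ↦ ?_) x
      have hmul : V k ≤ (V (k + 1)).comap (LinearMap.mulLeft F a.1) := by
        refine Submodule.span_le.mpr ?_
        rintro _ ⟨g, hg, rfl⟩
        exact Submodule.subset_span ⟨a * g, pow_succ' H k ▸ mod_cast mul_mem_mul ha hg, rfl⟩
      exact heq ▸ hmul hx
    · exact .inr (by have := Submodule.finrank_lt_finrank_of_lt (hle.lt_of_ne heq); lia)

theorem span_pow_three_eq_top (hs : H⁻¹ = H) (h1 : 1 ∈ H)
    (hgen : Subgroup.closure (H : Set SL(2, F)) = ⊤) :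
    Submodule.span F ((fun g : SL(2, F) ↦ g.1) '' ↑(H ^ 3)) = ⊤ := by
  refine (span_pow_eq_top_or_lt_finrank hs h1 hgen 3).elim id fun h ↦ ?_
  refine Submodule.eq_top_of_finrank_eq (le_antisymm (Submodule.finrank_le _) ?_)
  rw [Module.finrank_matrix, Module.finrank_self, Fintype.card_fin]
  exact h

theorem exists_isGeneric_mem_pow_four (hs : H⁻¹ = H) (h1 : 1 ∈ H)
    (hgen : Subgroup.closure (H : Set SL(2, F)) = ⊤) (hcard : 81 < #H) :
    ∃ g ∈ H ^ 4, IsGeneric g := by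
  contrapose! hcard
  refine (card_le_card_pow_four_of_trace_mul_mem (T := {0, 2, -2})
    (span_pow_three_eq_top hs h1 hgen) fun b hb a ha ↦ ?_).trans
    (Nat.pow_le_pow_left card_le_three 4)
  exact trace_mem_of_not_isGeneric (hcard _ (mem_pow_of_mem hb ((pow_one H).symm ▸ ha)))

end Escape

section GrowthArithmetic

variable {N R M q : ℕ}

theorem pow_le_of_pow_add_le {a j k r X : ℕ} (hN : 3 ^ r ≤ N) (hk : k ≤ r * j)
    (h : N ^ (a + j) ≤ 3 ^ k * X) : N ^ a ≤ X := by
  have hkj : 3 ^ k ≤ N ^ j := calc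
    3 ^ k ≤ (3 ^ r) ^ j := by
      rw [← pow_mul]
      exact Nat.pow_le_pow_right (by norm_num) hk
    _ ≤ N ^ j := Nat.pow_le_pow_left hN j
  refine Nat.le_of_mul_le_mul_left ?_ (pow_pos (by norm_num : 0 < 3) k)
  calc 3 ^ k * N ^ a ≤ N ^ j * N ^ a := Nat.mul_le_mul_right _ hkj
    _ = N ^ (a + j) := by rw [← pow_add, add_comm]
    _ ≤ 3 ^ k * X := h

theorem pow_le_pow_of_mul_le_mul_six (hN : 3 ^ 100 ≤ N) (h : N ^ 3 ≤ 1728 * R ^ 2 * M ^ 3)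
    (hM : N * M ≤ R * 6) : N ^ 101 ≤ R ^ 100 := by
  have hNR : N ^ 6 ≤ 3 ^ 12 * R ^ 5 := by
    calc N ^ 6 = N ^ 3 * N ^ 3 := by ring
      _ ≤ N ^ 3 * (1728 * R ^ 2 * M ^ 3) := by gcongr
      _ = 1728 * R ^ 2 * (N * M) ^ 3 := by ring
      _ ≤ 1728 * R ^ 2 * (R * 6) ^ 3 := by gcongr
      _ = 373248 * R ^ 5 := by ring
      _ ≤ 3 ^ 12 * R ^ 5 := by gcongr; norm_num
  apply pow_le_of_pow_add_le (j := 19) (k := 240) hN (by norm_num)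
  calc N ^ (101 + 19) = (N ^ 6) ^ 20 := by rw [← pow_mul]
    _ ≤ (3 ^ 12 * R ^ 5) ^ 20 := by gcongr
    _ = 3 ^ 240 * R ^ 100 := by rw [mul_pow, ← pow_mul, ← pow_mul]

theorem pow_le_pow_of_le_twelve (hN : 3 ^ 100 ≤ N) (h : N ^ 3 ≤ 1728 * R ^ 2 * M ^ 3)
    (hM : M ≤ 12) : N ^ 101 ≤ R ^ 100 := by
  have hNR : N ^ 3 ≤ 3 ^ 14 * R ^ 2 := by
    calc N ^ 3 ≤ 1728 * R ^ 2 * M ^ 3 := h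
      _ ≤ 1728 * R ^ 2 * 12 ^ 3 := by gcongr
      _ = 2985984 * R ^ 2 := by ring
      _ ≤ 3 ^ 14 * R ^ 2 := by gcongr; norm_num
  apply pow_le_of_pow_add_le (j := 49) (k := 700) hN (by norm_num)
  calc N ^ (101 + 49) = (N ^ 3) ^ 50 := by rw [← pow_mul]
    _ ≤ (3 ^ 14 * R ^ 2) ^ 50 := by gcongr
    _ = 3 ^ 700 * R ^ 100 := by rw [mul_pow, ← pow_mul, ← pow_mul]

theorem sq_mul_le_of_mul_sub_le (hq : 2 ≤ q) (hM : 12 ≤ M)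
    (h : q ^ 2 * (q - 1) * (M - 6) ≤ R * (2 * (2 * q))) : q ^ 2 * M ≤ 16 * R := by
  have hq' : q ≤ 2 * (q - 1) := by lia
  have hM' : M ≤ 2 * (M - 6) := by lia
  refine Nat.le_of_mul_le_mul_left (c := q) ?_ (by lia)
  calc q * (q ^ 2 * M) = q ^ 2 * q * M := by ring
    _ ≤ q ^ 2 * (2 * (q - 1)) * (2 * (M - 6)) := by gcongr
    _ = 4 * (q ^ 2 * (q - 1) * (M - 6)) := by ring
    _ ≤ 4 * (R * (2 * (2 * q))) := by gcongr
    _ = q * (16 * R) := by ring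

theorem pow_le_pow_of_sq_mul_le (hN : 3 ^ 100 ≤ N) (h : N ^ 3 ≤ 1728 * R ^ 2 * M ^ 3)
    (hM : q ^ 2 * M ≤ 16 * R) (hNq : N ^ 3 ≤ 64 * q ^ 8) : N ^ 101 ≤ R ^ 100 := by
  have hNqR : N ^ 3 * q ^ 6 ≤ 3 ^ 15 * R ^ 5 := by
    calc N ^ 3 * q ^ 6 ≤ (1728 * R ^ 2 * M ^ 3) * q ^ 6 := by gcongr
      _ = 1728 * R ^ 2 * (q ^ 2 * M) ^ 3 := by ring
      _ ≤ 1728 * R ^ 2 * (16 * R) ^ 3 := by gcongr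
      _ = 7077888 * R ^ 5 := by ring
      _ ≤ 3 ^ 15 * R ^ 5 := by gcongr; norm_num
  have hNR : N ^ 21 ≤ 3 ^ 72 * R ^ 20 := by
    calc N ^ 21 = N ^ 12 * (N ^ 3) ^ 3 := by ring
      _ ≤ N ^ 12 * (64 * q ^ 8) ^ 3 := by gcongr
      _ = 262144 * (N ^ 3 * q ^ 6) ^ 4 := by ring
      _ ≤ 3 ^ 12 * (3 ^ 15 * R ^ 5) ^ 4 := by gcongr; norm_num
      _ = 3 ^ 72 * R ^ 20 := by ring
  apply pow_le_of_pow_add_le (j := 4) (k := 360) hN (by norm_num)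
  calc N ^ (101 + 4) = (N ^ 21) ^ 5 := by rw [← pow_mul]
    _ ≤ (3 ^ 72 * R ^ 20) ^ 5 := by gcongr
    _ = 3 ^ 360 * R ^ 100 := by rw [mul_pow, ← pow_mul, ← pow_mul]

end GrowthArithmetic

section Growth

variable {F : Type*} [Field F] [Fintype F] [DecidableEq F] {H : Finset SL(2, F)}

theorem card_pow_le_card_pow_pow (h2 : (2 : F) ≠ 0) (hs : H⁻¹ = H) (h1 : 1 ∈ H)
    (hgen : Subgroup.closure (H : Set SL(2, F)) = ⊤) (hcard : 3 ^ 100 ≤ #H)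
    (hsmall : #H ^ 3 ≤ 64 * Fintype.card F ^ 8) {k : ℕ} (hk : 72 ≤ k) :
    #H ^ 101 ≤ #(H ^ k) ^ 100 := by
  classical
  obtain ⟨g₀, hg₀, hgg₀⟩ := exists_isGeneric_mem_pow_four hs h1 hgen (hcard.trans_lt' (by norm_num))
  set K := H ^ 4
  have hKs : K⁻¹ = K := inv_pow_eq hs 4
  have hK1 : 1 ∈ K := one_mem_pow h1
  have hKgen : Subgroup.closure (K : Set SL(2, F)) = ⊤ := by
    rw [coe_pow, Subgroup.closure_pow h1 four_ne_zero, hgen]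
  have hHK : #H ≤ #K := card_le_card_pow (by norm_num)
  have hKR {n : ℕ} (hn : n ≤ 18) : #(K ^ n) ≤ #(H ^ k) := by
    rw [← pow_mul]
    exact card_le_card (pow_subset_pow_right h1 (by lia))
  have hg₀' : g₀ ∈ K ^ 2 := subset_pow hK1 two_ne_zero hg₀
  obtain ⟨g, hg, hmin⟩ := exists_min_image {g ∈ K ^ 2 | IsGeneric g}
    (fun g ↦ #{x ∈ K ^ 2 | Commute x g}) ⟨g₀, mem_filter.mpr ⟨hg₀', hgg₀⟩⟩
  rw [mem_filter] at hg
  set M := #{x ∈ K ^ 2 | Commute x g}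
  have hM (y) (hy : y ∈ K ^ 2) (hyg : IsGeneric y) : M ≤ #{x ∈ K ^ 2 | Commute x y} :=
    hmin y (mem_filter.mpr ⟨hy, hyg⟩)
  have htorus : #H ^ 3 ≤ 1728 * #(H ^ k) ^ 2 * M ^ 3 := calc
    #H ^ 3 ≤ #K ^ 3 := Nat.pow_le_pow_left hHK 3
    _ ≤ 1728 * #(K ^ 18) ^ 2 * M ^ 3 := card_pow_three_le_of_isGeneric hKs hK1 hKgen hg.1 hg.2
    _ ≤ 1728 * #(H ^ k) ^ 2 * M ^ 3 :=
      Nat.mul_le_mul_right _ (Nat.mul_le_mul_left _ (Nat.pow_le_pow_left (hKR le_rfl) 2))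
  rcases card_mul_le_card_pow_five_or_forall_exists_commute h2 hKs hKgen hg₀' hgg₀ hM with h | h
  · refine pow_le_pow_of_mul_le_mul_six hcard htorus
      ((Nat.mul_le_mul_right _ hHK).trans (h.trans ?_))
    exact Nat.mul_le_mul_right _ (hKR (by norm_num))
  obtain hM12 | hM12 := le_total M 12
  · exact pow_le_pow_of_le_twelve hcard htorus hM12
  refine pow_le_pow_of_sq_mul_le hcard htorus
    (sq_mul_le_of_mul_sub_le Fintype.one_lt_card hM12 ?_) hsmall
  calc Fintype.card F ^ 2 * (Fintype.card F - 1) * (M - 6) ≤ Fintype.card SL(2, F) * (M - 6) :=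
        Nat.mul_le_mul_right _ card_sq_mul_card_sub_one_le_card_specialLinearGroup
    _ ≤ #(K ^ 2) * (2 * (2 * Fintype.card F)) :=
        card_univ_mul_le_of_forall_exists_commute h2 hgg₀ hM h
    _ ≤ #(H ^ k) * (2 * (2 * Fintype.card F)) := Nat.mul_le_mul_right _ (hKR (by norm_num))

theorem le_card_pow_three_or_mul_log_le (h2 : (2 : F) ≠ 0) (hs : H⁻¹ = H) (h1 : 1 ∈ H)
    (hgen : Subgroup.closure (H : Set SL(2, F)) = ⊤) (hcard : 3 ^ 100 ≤ #H) {k : ℕ} (hk : 72 ≤ k)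
    (j : ℕ) :
    64 * Fintype.card F ^ 8 ≤ #(H ^ k ^ j) ^ 3 ∨
      (101 / 100 : ℝ) ^ j * Real.log #H ≤ Real.log #(H ^ k ^ j) := by
  induction j with
  | zero => simp
  | succ j ih =>
    have hkj : k ^ j ≠ 0 := pow_ne_zero j (by lia)
    by_cases hbig : 64 * Fintype.card F ^ 8 ≤ #(H ^ k ^ j) ^ 3
    · refine .inl (hbig.trans (Nat.pow_le_pow_left (card_le_card ?_) 3))
      exact pow_subset_pow_right h1 (Nat.pow_le_pow_right (by lia) j.le_succ)
    right
    have hgrowth : #(H ^ k ^ j) ^ 101 ≤ #(H ^ k ^ (j + 1)) ^ 100 := by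
      rw [pow_succ k, pow_mul]
      refine card_pow_le_card_pow_pow h2 (inv_pow_eq hs _) (one_mem_pow h1) ?_
        (hcard.trans (card_le_card_pow hkj)) (not_le.mp hbig).le hk
      rw [coe_pow, Subgroup.closure_pow h1 hkj, hgen]
    have hpos : 0 < #(H ^ k ^ j) := card_pos.mpr ⟨1, one_mem_pow h1⟩
    have hlog : 101 * Real.log #(H ^ k ^ j) ≤ 100 * Real.log #(H ^ k ^ (j + 1)) := by
      have := Real.log_le_log (by positivity) (Nat.cast_le (α := ℝ).mpr hgrowth)
      simpa only [Nat.cast_pow, Real.log_pow, Nat.cast_ofNat] using this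
    rw [pow_succ]
    linarith [ih.resolve_left hbig]

omit [DecidableEq F] in
theorem le_card_of_pow_le_card (hcard : 3 ^ 100 ≤ #H) : 64 ≤ Fintype.card F := by
  classical
  by_contra! hq
  have := (card_le_univ H).trans card_specialLinearGroup_le_card_pow_four
  have := Nat.pow_le_pow_left hq.le 4
  lia

theorem pow_three_pow_eq_univ (h2 : (2 : F) ≠ 0) (hs : H⁻¹ = H) (h1 : 1 ∈ H)
    (hgen : Subgroup.closure (H : Set SL(2, F)) = ⊤) {j n : ℕ}
    (hj : 3 * Real.log (Fintype.card F) ≤ (101 / 100) ^ j * Real.log #H) (hn : 104 + 4 * j ≤ n) :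
    H ^ 3 ^ n = univ := by
  obtain ⟨r, hr⟩ : ∃ r : ℕ, r = 3 ^ 100 := ⟨_, rfl⟩
  have hr0 : r ≠ 0 := by rw [hr]; positivity
  suffices h : H ^ (r * (81 ^ j * 64)) = univ by
    refine univ_subset_iff.mp (h ▸ pow_subset_pow_right h1 ?_)
    calc r * (81 ^ j * 64) ≤ 3 ^ 100 * ((3 ^ 4) ^ j * 3 ^ 4) := by
          rw [hr]
          exact Nat.mul_le_mul_left _ (Nat.mul_le_mul_left _ (by norm_num))
      _ = 3 ^ (104 + 4 * j) := by rw [← pow_mul, ← pow_add, ← pow_add]; congr 1; ring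
      _ ≤ 3 ^ n := Nat.pow_le_pow_right (by norm_num) hn
  rcases pow_eq_univ_or_lt_card hs h1 hgen r with h | h
  · exact univ_subset_iff.mp
      (h ▸ pow_subset_pow_right h1 (Nat.le_mul_of_pos_right r (by positivity)))
  rw [pow_mul, pow_mul]
  refine pow_eq_univ_of_le_card_pow (inv_pow_eq (inv_pow_eq hs r) _)
    (one_mem_pow (one_mem_pow h1)) ?_
  have hgen' : Subgroup.closure ((H ^ r : Finset SL(2, F)) : Set SL(2, F)) = ⊤ := by
    rw [coe_pow, Subgroup.closure_pow h1 hr0, hgen]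
  refine (le_card_pow_three_or_mul_log_le h2 (inv_pow_eq hs r) (one_mem_pow h1) hgen' (hr ▸ h.le)
    (k := 81) (by norm_num) j).elim id fun hlog ↦ ?_
  have hq : 64 ≤ Fintype.card F := le_card_of_pow_le_card (hr ▸ h.le)
  have hpos : 0 < #H := card_pos.mpr ⟨1, h1⟩
  have hpos' : 0 < #((H ^ r) ^ 81 ^ j) := card_pos.mpr ⟨1, one_mem_pow (one_mem_pow h1)⟩
  have hlog' : 3 * Real.log (Fintype.card F) ≤ Real.log #((H ^ r) ^ 81 ^ j) := by
    refine hj.trans (le_trans ?_ hlog)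
    gcongr
    exact subset_pow h1 hr0
  rw [← Nat.cast_ofNat (n := 3), ← Real.log_pow,
    Real.log_le_log_iff (by positivity) (by positivity)] at hlog'
  calc 64 * Fintype.card F ^ 8 ≤ Fintype.card F * Fintype.card F ^ 8 := Nat.mul_le_mul_right _ hq
    _ = (Fintype.card F ^ 3) ^ 3 := by ring
    _ ≤ #((H ^ r) ^ 81 ^ j) ^ 3 := Nat.pow_le_pow_left (mod_cast hlog') 3

end Growth

section OperatorNorm

variable {S : Finset SL(2, ℤ)} {D : ℝ}

theorem sl2zOpNorm_mul_le (g h : SL(2, ℤ)) :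
    sl2zOpNorm (g * h) ≤ sl2zOpNorm g * sl2zOpNorm h := by
  have hmap : (g * h).1.map (Int.cast : ℤ → ℝ) = g.1.map Int.cast * h.1.map Int.cast :=
    Matrix.map_mul (f := Int.castRingHom ℝ)
  rw [sl2zOpNorm, hmap, map_mul]
  exact norm_mul_le _ _

theorem sl2zOpNorm_one_le : sl2zOpNorm 1 ≤ 1 := by
  have hmap : (1 : SL(2, ℤ)).1.map (Int.cast : ℤ → ℝ) = 1 := by
    rw [Matrix.SpecialLinearGroup.coe_one, Matrix.map_one _ Int.cast_zero Int.cast_one]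
  rw [sl2zOpNorm, hmap, map_one]
  exact ContinuousLinearMap.norm_id_le

theorem abs_entry_le_sl2zOpNorm (g : SL(2, ℤ)) (i j : Fin 2) : |(g i j : ℝ)| ≤ sl2zOpNorm g := by
  set M := (g : Matrix (Fin 2) (Fin 2) ℤ).map (Int.cast : ℤ → ℝ) with hM
  have hentry : toEuclideanCLM (𝕜 := ℝ) M (EuclideanSpace.single j 1) i = g i j := by
    rw [ofLp_toEuclideanCLM]
    simp [hM]
  calc |(g i j : ℝ)| = ‖toEuclideanCLM (𝕜 := ℝ) M (EuclideanSpace.single j 1) i‖ := by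
        rw [hentry, Real.norm_eq_abs]
    _ ≤ ‖toEuclideanCLM (𝕜 := ℝ) M (EuclideanSpace.single j 1)‖ := PiLp.norm_apply_le _ i
    _ ≤ sl2zOpNorm g * ‖EuclideanSpace.single j (1 : ℝ)‖ := ContinuousLinearMap.le_opNorm _ _
    _ = sl2zOpNorm g := by rw [PiLp.norm_single, norm_one, mul_one]

theorem sl2zOpNorm_le_pow (hD : ∀ s ∈ S, sl2zOpNorm s ≤ D) {m : ℕ} {g : SL(2, ℤ)}
    (hg : g ∈ S ^ m) : sl2zOpNorm g ≤ D ^ m := by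
  induction m generalizing g with
  | zero =>
    rw [pow_zero, mem_one] at hg
    simpa [hg] using sl2zOpNorm_one_le
  | succ m ih =>
    rw [pow_succ] at hg ⊢
    obtain ⟨a, ha, s, hs, rfl⟩ := mem_mul.mp hg
    exact (sl2zOpNorm_mul_le a s).trans (mul_le_mul (ih ha) (hD s hs) (norm_nonneg _)
      ((norm_nonneg _).trans (ih ha)))

theorem card_le_of_abs_entry_le {T : Finset SL(2, ℤ)} {B : ℝ} (hB : 0 ≤ B)
    (hT : ∀ g ∈ T, ∀ i j, |(g i j : ℝ)| ≤ B) : #T ≤ (2 * B + 1) ^ 4 := by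
  set I := Icc (-⌊B⌋) ⌊B⌋
  have hI : (#I : ℝ) ≤ 2 * B + 1 := by
    have hfloor := Int.floor_nonneg.mpr hB
    have hcard : (#I : ℤ) = 2 * ⌊B⌋ + 1 := by
      rw [Int.card_Icc]
      lia
    have : (#I : ℝ) = 2 * ⌊B⌋ + 1 := mod_cast hcard
    linarith [Int.floor_le B]
  have hTI : #T ≤ #(Fintype.piFinset fun _ : Fin 2 ↦ Fintype.piFinset fun _ : Fin 2 ↦ I) := by
    refine card_le_card_of_injOn (fun g ↦ g.1) (fun g hg ↦ ?_) Subtype.val_injective.injOn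
    refine Fintype.mem_piFinset.mpr fun i ↦ Fintype.mem_piFinset.mpr fun j ↦ mem_Icc.mpr ?_
    obtain ⟨h₁, h₂⟩ := abs_le.mp (hT g hg i j)
    exact ⟨neg_le.mp (Int.le_floor.mpr (by push_cast; linarith)), Int.le_floor.mpr h₂⟩
  calc (#T : ℝ) ≤ #I ^ 4 := by
        rw [Fintype.card_piFinset_const, Fintype.card_piFinset_const, ← pow_mul] at hTI
        exact_mod_cast hTI
    _ ≤ (2 * B + 1) ^ 4 := by gcongr

theorem one_lt_and_le_pow_four_of_forall_pow_le {κ : ℝ} (hD : 0 ≤ D) (hκ : 3 ≤ κ)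
    (h : ∀ m : ℕ, κ ^ m ≤ (2 * D ^ m + 1) ^ 4) : 1 < D ∧ κ ≤ D ^ 4 := by
  have hD1 : 1 < D := by
    by_contra! hD1
    have : (3 : ℝ) ^ 5 ≤ 3 ^ 4 := calc
      (3 : ℝ) ^ 5 ≤ κ ^ 5 := by gcongr
      _ ≤ (2 * D ^ 5 + 1) ^ 4 := h 5
      _ ≤ 3 ^ 4 := by
        gcongr
        linarith [pow_le_one₀ hD hD1 (n := 5)]
    norm_num at this
  refine ⟨hD1, ?_⟩
  by_contra! hlt
  have hD4 : 0 < D ^ 4 := by positivity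
  obtain ⟨m, hm⟩ := pow_unbounded_of_one_lt 81 ((one_lt_div hD4).mpr hlt)
  rw [div_pow, lt_div_iff₀ (by positivity)] at hm
  refine hm.not_ge ?_
  calc κ ^ m ≤ (2 * D ^ m + 1) ^ 4 := h m
    _ ≤ (2 * D ^ m + D ^ m) ^ 4 := by
      gcongr
      exact one_le_pow₀ hD1.le
    _ = 81 * (D ^ 4) ^ m := by ring

theorem one_lt_and_card_sub_one_le_pow_four_of_free (hcard : 4 ≤ #S) (hs : S⁻¹ = S)
    (hfree : ∀ l, l ≠ [] → IsReducedWord S l → l.prod ≠ 1)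
    (hD : ∀ s ∈ S, sl2zOpNorm s ≤ D) : 1 < D ∧ (#S - 1 : ℕ) ≤ D ^ 4 := by
  obtain ⟨s, hsS⟩ := card_pos.mp (by lia : 0 < #S)
  have hD0 : 0 ≤ D := (norm_nonneg _).trans (hD s hsS)
  refine one_lt_and_le_pow_four_of_forall_pow_le hD0 (mod_cast (by lia : 3 ≤ #S - 1)) fun m ↦ ?_
  calc ((#S - 1 : ℕ) : ℝ) ^ m ≤ #(S ^ m) := mod_cast pow_le_card_pow_of_free hs hfree m
    _ ≤ (2 * D ^ m + 1) ^ 4 := card_le_of_abs_entry_le (by positivity) fun g hg i j ↦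
      (abs_entry_le_sl2zOpNorm g i j).trans (sl2zOpNorm_le_pow hD hg)

end OperatorNorm

section Reduction

variable {S : Finset SL(2, ℤ)} {D : ℝ} {p : ℕ}

theorem injOn_map_intCastRingHom_of_odd (hp : Odd p) :
    Set.InjOn (SpecialLinearGroup.map (Int.castRingHom (ZMod p)))
      {g : SL(2, ℤ) | ∀ i j, |(g i j : ℝ)| ≤ p / 2} := by
  have hlt {g : SL(2, ℤ)} (hg : ∀ i j, |(g i j : ℝ)| ≤ p / 2) (i j) : 2 * |g i j| < (p : ℤ) := by
    obtain ⟨k, rfl⟩ := hp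
    have hle : 2 * |(g i j : ℝ)| ≤ (2 * k + 1 : ℕ) := by linarith [hg i j]
    have : 2 * |g i j| ≤ (2 * k + 1 : ℕ) := mod_cast hle
    lia
  intro g hg h hh hgh
  ext i j
  have hcast : ((g i j : ℤ) : ZMod p) = (h i j : ℤ) := by
    simpa using congrArg (fun x : SL(2, ZMod p) ↦ x i j) hgh
  have hdvd := (ZMod.intCast_eq_intCast_iff_dvd_sub _ _ _).mp hcast
  have hzero := Int.eq_zero_of_abs_lt_dvd hdvd
    (by linarith [abs_sub (h i j) (g i j), hlt hg i j, hlt hh i j])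
  exact (sub_eq_zero.mp hzero).symm

theorem pow_le_card_image_union_one_pow (hs : S⁻¹ = S)
    (hfree : ∀ l, l ≠ [] → IsReducedWord S l → l.prod ≠ 1)
    (hD : ∀ s ∈ S, sl2zOpNorm s ≤ D) (hp : Odd p) {m : ℕ} (hm : D ^ m ≤ p / 2) :
    (#S - 1) ^ m ≤
      #((S.image (SpecialLinearGroup.map (Int.castRingHom (ZMod p))) ∪ {1}) ^ m) := by
  set φ := SpecialLinearGroup.map (n := Fin 2) (Int.castRingHom (ZMod p))
  have hinj : Set.InjOn φ (S ^ m : Finset SL(2, ℤ)) :=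
    (injOn_map_intCastRingHom_of_odd hp).mono fun g hg i j ↦
      (abs_entry_le_sl2zOpNorm g i j).trans ((sl2zOpNorm_le_pow hD hg).trans hm)
  calc (#S - 1) ^ m ≤ #(S ^ m) := pow_le_card_pow_of_free hs hfree m
    _ = #((S.image φ) ^ m) := by rw [← image_pow, card_image_of_injOn hinj]
    _ ≤ #((S.image φ ∪ {1}) ^ m) := card_le_card (pow_subset_pow_left subset_union_left)

theorem exists_pow_le_half_and_pow_three_le {x : ℝ} (hD : 1 < D) (hx : 16 ≤ x) (hDx : D ^ 2 ≤ x) :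
    ∃ m : ℕ, m ≠ 0 ∧ D ^ m ≤ x / 2 ∧ x ^ 3 ≤ D ^ (8 * m) := by
  obtain ⟨m, hm, hm'⟩ := exists_nat_pow_near (by linarith : 1 ≤ x / 2) hD
  have hm0 : m ≠ 0 := by
    rintro rfl
    nlinarith
  refine ⟨m, hm0, hm, ?_⟩
  calc x ^ 3 ≤ (x / 2) ^ 4 := by nlinarith [pow_pos (by linarith : 0 < x) 3]
    _ ≤ (D ^ (m + 1)) ^ 4 := by gcongr
    _ = D ^ (4 * (m + 1)) := by rw [← pow_mul, mul_comm]
    _ ≤ D ^ (8 * m) := pow_le_pow_right₀ hD.le (by lia)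

theorem exists_le_pow_and_le_ceil {y : ℝ} (hy : 2 ≤ y) :
    ∃ j : ℕ, y ≤ (101 / 100) ^ j ∧ 104 + 4 * j ≤ ⌈Real.log y / Real.log (1 + 1 / 3024)⌉₊ := by
  set l := Real.log (1 + 1 / 3024)
  set A := Real.log y / l
  have hl : 0 < l := Real.log_pos (by norm_num)
  have hAl : A * l = Real.log y := div_mul_cancel₀ _ hl.ne'
  have hA : 2000 ≤ A := by
    refine (le_div_iff₀ hl).mpr ?_
    have hl' : l ≤ 1 / 3024 := (Real.log_le_sub_one_of_pos (by norm_num)).trans (by norm_num)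
    linarith [Real.log_two_gt_d9, Real.log_le_log two_pos hy]
  -- `24` steps at rate `1 + 1/3024` are worth at most one at rate `101/100`, which multiplies the
  -- length by `3 ^ 4`; the margin absorbs the initial `104`.
  have h24 : 24 * l ≤ Real.log (101 / 100) := by
    rw [← Nat.cast_ofNat (n := 24), ← Real.log_pow]
    exact Real.log_le_log (by norm_num) (by norm_num)
  refine ⟨⌈A / 24⌉₊, ?_, ?_⟩
  · rw [← Real.log_le_log_iff (by linarith) (by positivity), Real.log_pow, ← hAl]
    calc A * l = A / 24 * (24 * l) := by ring
      _ ≤ ⌈A / 24⌉₊ * Real.log (101 / 100) :=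
        mul_le_mul (Nat.le_ceil _) h24 (by positivity) (by positivity)
  · have hceil := Nat.ceil_lt_add_one (by positivity : 0 ≤ A / 24)
    have : ((104 + 4 * ⌈A / 24⌉₊ : ℕ) : ℝ) ≤ ⌈A⌉₊ := by
      push_cast
      linarith [Nat.le_ceil A]
    exact_mod_cast this

end Reduction

section Diameter

variable {S : Finset SL(2, ℤ)} {D : ℝ} {p : ℕ} [Fact p.Prime]

theorem exists_pow_le_half_and_pow_pow_eq_univ (hcard : 4 ≤ #S) (hs : S⁻¹ = S)
    (hfree : ∀ l, l ≠ [] → IsReducedWord S l → l.prod ≠ 1)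
    (hD : ∀ s ∈ S, sl2zOpNorm s ≤ D) (hp : 16 ≤ p) (hDp : D ^ 2 ≤ p)
    (hgen : Subgroup.closure ((S.image (SpecialLinearGroup.map (Int.castRingHom (ZMod p))) :
      Finset SL(2, ZMod p)) : Set SL(2, ZMod p)) = ⊤) :
    ∃ m : ℕ, D ^ m ≤ p / 2 ∧
      ((S.image (SpecialLinearGroup.map (Int.castRingHom (ZMod p))) ∪ {1}) ^ m) ^
        3 ^ ⌈Real.log (8 * Real.log D / Real.log (#S - 1 : ℕ)) / Real.log (1 + 1 / 3024)⌉₊ =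
      univ := by
  obtain ⟨hD1, hSD⟩ := one_lt_and_card_sub_one_le_pow_four_of_free hcard hs hfree hD
  obtain ⟨m, hm0, hm, hpm⟩ := exists_pow_le_half_and_pow_three_le hD1 (mod_cast hp) hDp
  refine ⟨m, hm, ?_⟩
  set B := S.image (SpecialLinearGroup.map (Int.castRingHom (ZMod p))) ∪ {1}
  have hB1 : 1 ∈ B := mem_union_right _ (mem_singleton_self 1)
  have hBs : B⁻¹ = B := inv_image_union_one hs _
  have hBgen : Subgroup.closure ((B ^ m : Finset _) : Set SL(2, ZMod p)) = ⊤ := by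
    rw [coe_pow, Subgroup.closure_pow hB1 hm0, ← top_le_iff, ← hgen]
    exact Subgroup.closure_mono (mod_cast subset_union_left)
  have hp2 : p ≠ 2 := by lia
  have h2 : (2 : ZMod p) ≠ 0 := Ring.two_ne_zero (by rwa [ZMod.ringChar_zmod_n])
  have hlogS : 0 < Real.log (#S - 1 : ℕ) := Real.log_pos (mod_cast (by lia : 1 < #S - 1))
  have hS0 : (0 : ℝ) < (#S - 1 : ℕ) := mod_cast (by lia : 0 < #S - 1)
  have hlogSD : Real.log (#S - 1 : ℕ) ≤ 4 * Real.log D := by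
    simpa only [Real.log_pow, Nat.cast_ofNat] using Real.log_le_log hS0 hSD
  have hlogB : m * Real.log (#S - 1 : ℕ) ≤ Real.log #(B ^ m) := by
    rw [← Real.log_pow]
    exact Real.log_le_log (by positivity) (mod_cast
      pow_le_card_image_union_one_pow hs hfree hD (Nat.Prime.odd_of_ne_two Fact.out hp2) hm)
  have hlogp : 3 * Real.log p ≤ 8 * m * Real.log D := by
    have hp0 : (0 : ℝ) < p ^ 3 := by positivity
    simpa only [Real.log_pow, Nat.cast_mul, Nat.cast_ofNat] using Real.log_le_log hp0 hpm
  obtain ⟨j, hj, hjn⟩ := exists_le_pow_and_le_ceil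
    (y := 8 * Real.log D / Real.log (#S - 1 : ℕ)) ((le_div_iff₀ hlogS).mpr (by linarith))
  refine pow_three_pow_eq_univ h2 (inv_pow_eq hBs m) (one_mem_pow hB1) hBgen ?_ hjn
  rw [ZMod.card]
  calc 3 * Real.log p ≤ 8 * m * Real.log D := hlogp
    _ = 8 * Real.log D / Real.log (#S - 1 : ℕ) * (m * Real.log (#S - 1 : ℕ)) := by field_simp
    _ ≤ (101 / 100) ^ j * Real.log #(B ^ m) := mul_le_mul hj hlogB (by positivity) (by positivity)

end Diameter

end SL2Growth

/-- **Diameter bounds for Zariski-dense subgroups (Corollary `cor-diameter`).**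
Let `S ⊆ SL₂(ℤ)` be a finite symmetric set, `|S| ≥ 4`, freely generating a free group of
rank `|S|/2`. Put `Δ = max_{s∈S} ‖s‖`, `τ = 1/log Δ`, `δ = 1/3024`,
`δ₂ = τ·log(|S|−1)/8` and `A = log(1/δ₂)/log(1+δ)`. Then for every prime `p ≥ 17` with
`p > exp(2/τ)` such that `S mod p` generates `SL₂(𝔽_p)`, there is `n` with
`(n : ℝ) ≤ 3^(max(⌈A⌉,0))·τ·log(p/2)` and `((S mod p) ∪ {1})^(n) = SL₂(𝔽_p)`. -/
theorem stmt_3 (S : Finset (Matrix.SpecialLinearGroup (Fin 2) ℤ))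
    (hcard : 4 ≤ S.card)
    (hsym : ∀ s ∈ S, s⁻¹ ∈ S)
    (hfree : ∀ l : List (Matrix.SpecialLinearGroup (Fin 2) ℤ),
      l ≠ [] → (∀ x ∈ l, x ∈ S) →
      l.Chain' (fun a b => a * b ≠ 1) → l.prod ≠ 1)
    (τ : ℝ)
    (hτ : τ = 1 / Real.log (S.sup' (Finset.card_pos.mp (by omega)) sl2zOpNorm))
    (A : ℝ)
    (hA : A = Real.log (1 / (τ * Real.log ((S.card : ℝ) - 1) / 8)) /
      Real.log (1 + 1 / 3024))
    (p : ℕ) [Fact p.Prime] (hp17 : 17 ≤ p) (hpτ : (p : ℝ) > Real.exp (2 / τ))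
    (hgen : Subgroup.closure
        ((S.image (Matrix.SpecialLinearGroup.map (Int.castRingHom (ZMod p))) :
          Finset (Matrix.SpecialLinearGroup (Fin 2) (ZMod p))) :
          Set (Matrix.SpecialLinearGroup (Fin 2) (ZMod p))) = ⊤) :
    ∃ n : ℕ,
      (n : ℝ) ≤ (3 : ℝ) ^ (max ⌈A⌉ 0) * τ * Real.log ((p : ℝ) / 2) ∧
      ((S.image (Matrix.SpecialLinearGroup.map (Int.castRingHom (ZMod p))) ∪ {1}) ^ n :
        Finset (Matrix.SpecialLinearGroup (Fin 2) (ZMod p))) = Finset.univ := by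
  set D := S.sup' (Finset.card_pos.mp (by omega)) sl2zOpNorm
  have hD : ∀ s ∈ S, sl2zOpNorm s ≤ D := fun s hs ↦ Finset.le_sup' sl2zOpNorm hs
  have hs : S⁻¹ = S := Finset.ext fun s ↦
    Finset.mem_inv'.trans ⟨fun h ↦ inv_inv s ▸ hsym _ h, hsym s⟩
  have hfree' : ∀ l, l ≠ [] → SL2Growth.IsReducedWord S l → l.prod ≠ 1 :=
    fun l hl hred ↦ hfree l hl hred.1 hred.2
  obtain ⟨hD1, -⟩ := SL2Growth.one_lt_and_card_sub_one_le_pow_four_of_free hcard hs hfree' hD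
  have hlogD : 0 < Real.log D := Real.log_pos hD1
  have hDp : D ^ 2 ≤ p := by
    rw [hτ, div_div_eq_mul_div, div_one, mul_comm, Real.exp_mul, Real.exp_log (by positivity)]
      at hpτ
    exact_mod_cast hpτ.le
  have hA' : A = Real.log (8 * Real.log D / Real.log (S.card - 1 : ℕ)) /
      Real.log (1 + 1 / 3024) := by
    rw [hA, hτ, Nat.cast_pred (by omega)]
    field_simp
  obtain ⟨m, hm, huniv⟩ := SL2Growth.exists_pow_le_half_and_pow_pow_eq_univ hcard hs hfree' hD
    (by omega) hDp hgen
  refine ⟨m * 3 ^ ⌈A⌉₊, ?_, by rwa [pow_mul, hA']⟩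
  have hmτ : (m : ℝ) ≤ τ * Real.log (p / 2) := by
    rw [hτ, one_div, inv_mul_eq_div, le_div_iff₀ hlogD, ← Real.log_pow]
    exact Real.log_le_log (by positivity) hm
  rw [← Int.toNat_eq_max, Int.ceil_toNat, zpow_natCast, mul_assoc, mul_comm]
  push_cast
  gcongr
end

section
/- Let p be a prime with p ≠ 3 and let S_p ⊂ SL₂(𝔽_p) be the set consisting of the reductions modulo p of the four integer matrices [[1,3],[0,1]], [[1,−3],[0,1]], [[1,0],[3,1]], [[1,0],[−3,1]]. Then there exists a natural number n with (n : ℝ) ≤ 2^5572 · log |SL₂(𝔽_p)| such that (S_p ∪ {1})^(n) = SL₂(𝔽_p); in particular S_p generates SL₂(𝔽_p) and the diameter of the corresponding Cayley graph is at most 2^5572 · log |SL₂(𝔽_p)|. -/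
open Pointwise

/-- The Lubotzky generators in `SL₂(ℤ)`. -/
def lubotzkySet : Finset (Matrix.SpecialLinearGroup (Fin 2) ℤ) :=
  { ⟨!![1, 3; 0, 1], by norm_num [Matrix.det_fin_two_of]⟩,
    ⟨!![1, -3; 0, 1], by norm_num [Matrix.det_fin_two_of]⟩,
    ⟨!![1, 0; 3, 1], by norm_num [Matrix.det_fin_two_of]⟩,
    ⟨!![1, 0; -3, 1], by norm_num [Matrix.det_fin_two_of]⟩ }

/-!
Let `w` be the Weyl element. Words in the letters `upperShear (3 * k) * w`, `1 ≤ |k| ≤ 5`, have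
pairwise different first columns, and there are at least `X ^ (17 / 16)` such columns of size
`O(X)`. Taking `X` a small multiple of `p`, the pigeonhole principle on the slope of the column
modulo `p` gives more than `p ^ (1 / 32)` words of length `O(log p)` whose first columns are
pairwise proportional over `ZMod p`. If the columns of `g` and `h` have ratio `x`, then `g⁻¹ * h`
conjugates `upperShear y` to `upperShear (x ^ 2 * y)`; the letter `w` is not a generator, but it
normalises the generating set and so costs nothing in a conjugation. Hence multiplication by
`x ^ 2` raises the length of unipotent matrices by `O(log p)` only.

The elements `x` for which multiplication by `x` raises this length at most affinely are closed
under sums and products, at a bounded cost. A sum-product argument in `ZMod p` squares, up to a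
factor `2`, the size of a set of such elements, so after five rounds they exhaust `ZMod p`, and
every upper unipotent matrix has length `O(log p)`. Finally every matrix of determinant one is a
product of four unipotent ones. For `p < 2 ^ 256` the trivial bound `4 * p` is enough.
-/

open Finset Matrix.SpecialLinearGroup
open scoped MatrixGroups

section Normalizer

variable {G : Type*} [Group G] {S : Set G} {g h : G} {m n : ℕ}

theorem conj_mem_pow_of_mem_normalizer (hg : g ∈ Subgroup.normalizer S) (hh : h ∈ S ^ n) :
    g * h * g⁻¹ ∈ S ^ n := by
  rw [← Subgroup.mem_normalizer_iff_conj_image_eq.1 hg, ← Set.image_pow]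
  exact Set.mem_image_of_mem _ hh

theorem commute_pow_normalizer (S : Set G) (n : ℕ) :
    Commute (S ^ n) (Subgroup.normalizer S : Set G) := by
  refine Commute.pow_left (Set.ext fun x => ⟨?_, ?_⟩) n
  · rintro ⟨s, hs, z, hz, rfl⟩
    exact ⟨z, hz, z⁻¹ * s * z, (Subgroup.mem_set_normalizer_iff''.1 hz s).1 hs, by group⟩
  · rintro ⟨z, hz, s, hs, rfl⟩
    exact ⟨z * s * z⁻¹, (hz s).1 hs, z, hz, by group⟩

theorem mul_mem_pow_mul_normalizer (hg : g ∈ S ^ m * (Subgroup.normalizer S : Set G))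
    (hh : h ∈ S ^ n * (Subgroup.normalizer S : Set G)) :
    g * h ∈ S ^ (m + n) * (Subgroup.normalizer S : Set G) := by
  have hmul := Set.mul_mem_mul hg hh
  rwa [(commute_pow_normalizer S n).symm.mul_mul_mul_comm, ← pow_add, coe_mul_coe] at hmul

theorem inv_mem_pow_mul_normalizer (hS : S⁻¹ = S)
    (hg : g ∈ S ^ n * (Subgroup.normalizer S : Set G)) :
    g⁻¹ ∈ S ^ n * (Subgroup.normalizer S : Set G) := by
  have hinv := Set.inv_mem_inv.2 hg
  rwa [mul_inv_rev, ← inv_pow, hS, inv_coe_set, ← (commute_pow_normalizer S n).eq] at hinv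

theorem conj_mem_pow_of_mem_pow_mul_normalizer (hS : S⁻¹ = S)
    (hg : g ∈ S ^ m * (Subgroup.normalizer S : Set G)) (hh : h ∈ S ^ n) :
    g * h * g⁻¹ ∈ S ^ (2 * m + n) := by
  obtain ⟨s, hs, z, hz, rfl⟩ := hg
  have hs' : s⁻¹ ∈ S ^ m := by rw [← hS, inv_pow]; exact Set.inv_mem_inv.2 hs
  have hconj := conj_mem_pow_of_mem_normalizer hz hh
  have hmem := Set.mul_mem_mul (Set.mul_mem_mul hs hconj) hs'
  rw [← pow_add, ← pow_add] at hmem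
  convert hmem using 1
  · congr 1; ring
  · group

end Normalizer

section SL2

variable {R : Type*} [CommRing R]

/-- The upper unipotent matrix `[[1, x], [0, 1]]`. -/
abbrev upperShear (x : R) : SL(2, R) := transvection zero_ne_one x

/-- The lower unipotent matrix `[[1, 0], [x, 1]]`. -/
abbrev lowerShear (x : R) : SL(2, R) := transvection one_ne_zero x

/-- The Weyl element `[[0, -1], [1, 0]]`, which exchanges the upper and the lower unipotent
matrices. -/
def weylElement : SL(2, R) := ⟨!![0, -1; 1, 0], by simp [Matrix.det_fin_two_of]⟩

theorem coe_upperShear (x : R) : (upperShear x : Matrix (Fin 2) (Fin 2) R) = !![1, x; 0, 1] := by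
  ext i j; fin_cases i <;> fin_cases j <;> simp [transvection_coe]

theorem coe_lowerShear (x : R) : (lowerShear x : Matrix (Fin 2) (Fin 2) R) = !![1, 0; x, 1] := by
  ext i j; fin_cases i <;> fin_cases j <;> simp [transvection_coe]

theorem coe_weylElement :
    ((weylElement : SL(2, R)) : Matrix (Fin 2) (Fin 2) R) = !![0, -1; 1, 0] := rfl

theorem upperShear_injective : Function.Injective (upperShear : R → SL(2, R)) := fun x y hxy => by
  simpa [coe_upperShear] using congrArg (fun g : SL(2, R) => g 0 1) hxy

theorem upperShear_add (x y : R) : upperShear (x + y) = upperShear x * upperShear y :=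
  transvection_add _ x y

theorem upperShear_neg (x : R) : upperShear (-x) = (upperShear x)⁻¹ :=
  (transvection_inv _ x).symm

theorem upperShear_natCast_mul (n : ℕ) (x : R) : upperShear (n * x) = upperShear x ^ n := by
  induction n with
  | zero => simp
  | succ n ih => rw [Nat.cast_succ, add_mul, one_mul, upperShear_add, ih, pow_succ]

theorem map_upperShear {R' : Type*} [CommRing R'] (f : R →+* R') (x : R) :
    Matrix.SpecialLinearGroup.map f (upperShear x) = upperShear (f x) := by
  refine Matrix.SpecialLinearGroup.ext _ _ fun i j => ?_
  rw [map_apply_coe, coe_upperShear, coe_upperShear]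
  fin_cases i <;> fin_cases j <;> simp

theorem map_lowerShear {R' : Type*} [CommRing R'] (f : R →+* R') (x : R) :
    Matrix.SpecialLinearGroup.map f (lowerShear x) = lowerShear (f x) := by
  refine Matrix.SpecialLinearGroup.ext _ _ fun i j => ?_
  rw [map_apply_coe, coe_lowerShear, coe_lowerShear]
  fin_cases i <;> fin_cases j <;> simp

theorem weylElement_mul_upperShear (x : R) :
    weylElement * upperShear x = lowerShear (-x) * weylElement := by
  refine Matrix.SpecialLinearGroup.ext _ _ fun i j => ?_
  rw [Matrix.SpecialLinearGroup.coe_mul, Matrix.SpecialLinearGroup.coe_mul, coe_upperShear,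
    coe_lowerShear, coe_weylElement]
  simp

theorem weylElement_mul_lowerShear (x : R) :
    weylElement * lowerShear x = upperShear (-x) * weylElement := by
  refine Matrix.SpecialLinearGroup.ext _ _ fun i j => ?_
  rw [Matrix.SpecialLinearGroup.coe_mul, Matrix.SpecialLinearGroup.coe_mul, coe_upperShear,
    coe_lowerShear, coe_weylElement]
  simp

theorem coe_conj_upperShear (g : SL(2, R)) (y : R) :
    ((g * upperShear y * g⁻¹ : SL(2, R)) : Matrix (Fin 2) (Fin 2) R) =
      !![1 - g 0 0 * g 1 0 * y, g 0 0 ^ 2 * y; -(g 1 0 ^ 2 * y), 1 + g 0 0 * g 1 0 * y] := by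
  have hdet := g.det_coe
  rw [Matrix.det_fin_two] at hdet
  rw [Matrix.SpecialLinearGroup.coe_mul, Matrix.SpecialLinearGroup.coe_mul, coe_upperShear,
    Matrix.SpecialLinearGroup.coe_inv, Matrix.adjugate_fin_two]
  ext i j
  fin_cases i <;> fin_cases j <;>
    simp only [Fin.zero_eta, Fin.mk_one, Matrix.mul_apply, Fin.sum_univ_two, Matrix.of_apply,
      Matrix.cons_val', Matrix.cons_val_fin_one, Matrix.cons_val_zero, Matrix.cons_val_one]
  · linear_combination hdet
  · ring
  · ring
  · linear_combination hdet

theorem inv_mul_mul_upperShear {g h : SL(2, R)} {x : R} (h₀ : h 0 0 = x * g 0 0)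
    (h₁ : h 1 0 = x * g 1 0) (y : R) :
    g⁻¹ * h * upperShear y * (g⁻¹ * h)⁻¹ = upperShear (x ^ 2 * y) := by
  have hconj : h * upperShear y * h⁻¹ = g * upperShear (x ^ 2 * y) * g⁻¹ := by
    refine Subtype.ext ?_
    rw [coe_conj_upperShear, coe_conj_upperShear, h₀, h₁]
    ring_nf
  calc g⁻¹ * h * upperShear y * (g⁻¹ * h)⁻¹
    _ = g⁻¹ * (h * upperShear y * h⁻¹) * g := by group
    _ = upperShear (x ^ 2 * y) := by rw [hconj]; group

theorem coe_upperShear_mul_lowerShear_mul_upperShear (a b c : R) :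
    ((upperShear a * lowerShear b * upperShear c : SL(2, R)) : Matrix (Fin 2) (Fin 2) R) =
      !![1 + a * b, (1 + a * b) * c + a; b, b * c + 1] := by
  rw [Matrix.SpecialLinearGroup.coe_mul, Matrix.SpecialLinearGroup.coe_mul, coe_upperShear,
    coe_upperShear, coe_lowerShear]
  simp

theorem exists_eq_upperShear_mul_lowerShear_mul_upperShear {F : Type*} [Field F] {g : SL(2, F)}
    (hg : g 1 0 ≠ 0) :
    ∃ a b c : F, g = upperShear a * lowerShear b * upperShear c := by
  refine ⟨(g 0 0 - 1) / g 1 0, g 1 0, (g 1 1 - 1) / g 1 0, Subtype.ext ?_⟩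
  have hdet := g.det_coe
  rw [Matrix.det_fin_two] at hdet
  have h₀₀ : g 0 0 = 1 + (g 0 0 - 1) / g 1 0 * g 1 0 := by
    rw [div_mul_cancel₀ _ hg, add_sub_cancel]
  have h₁₁ : g 1 1 = g 1 0 * ((g 1 1 - 1) / g 1 0) + 1 := by
    rw [mul_div_cancel₀ _ hg, sub_add_cancel]
  have h₀₁ : g 0 1 = g 0 0 * ((g 1 1 - 1) / g 1 0) + (g 0 0 - 1) / g 1 0 := by
    field_simp
    linear_combination -hdet
  rw [coe_upperShear_mul_lowerShear_mul_upperShear, ← h₀₀, ← h₁₁, ← h₀₁]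
  exact Matrix.eta_fin_two _

theorem exists_eq_lowerShear_mul_upperShear_mul_lowerShear_mul_upperShear {F : Type*} [Field F]
    (g : SL(2, F)) :
    ∃ a b c d : F, g = lowerShear a * upperShear b * lowerShear c * upperShear d := by
  obtain ⟨s, hs⟩ : ∃ s : F, (lowerShear (-s) * g) 1 0 ≠ 0 := by
    by_cases hg : g 1 0 = 0
    · refine ⟨-1, fun h => ?_⟩
      have hdet := Matrix.det_fin_two (g : Matrix (Fin 2) (Fin 2) F)
      rw [det_coe] at hdet
      have h₀₀ : g 0 0 = 0 := by simpa [coe_lowerShear, Matrix.mul_apply, hg] using h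
      simp [h₀₀, hg] at hdet
    · exact ⟨0, by simpa using hg⟩
  obtain ⟨b, c, d, hbcd⟩ := exists_eq_upperShear_mul_lowerShear_mul_upperShear hs
  refine ⟨s, b, c, d, ?_⟩
  rw [mul_assoc, mul_assoc, ← mul_assoc (upperShear b), ← hbcd, ← mul_assoc, ← transvection_add]
  simp

end SL2

section Generators

variable {R : Type*} [CommRing R]

/-- The identity together with the upper and lower unipotent matrices of parameter `±t`. -/
def elementaryGenerators (t : R) : Set SL(2, R) :=
  {1, upperShear t, upperShear (-t), lowerShear t, lowerShear (-t)}

theorem one_mem_elementaryGenerators (t : R) : 1 ∈ elementaryGenerators t := Or.inl rfl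

theorem inv_elementaryGenerators (t : R) :
    (elementaryGenerators t)⁻¹ = elementaryGenerators t := by
  ext g
  simp only [elementaryGenerators, Set.mem_inv, Set.mem_insert_iff, Set.mem_singleton_iff,
    inv_eq_iff_eq_inv, inv_one, transvection_inv, neg_neg]
  tauto

theorem weylElement_mem_normalizer (t : R) :
    weylElement ∈ Subgroup.normalizer (elementaryGenerators t) := by
  have hfin : (elementaryGenerators t).Finite := by simp [elementaryGenerators]
  have hupper (x : R) : weylElement * upperShear x * weylElement⁻¹ = lowerShear (-x) :=
    mul_inv_eq_of_eq_mul (weylElement_mul_upperShear x)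
  have hlower (x : R) : weylElement * lowerShear x * weylElement⁻¹ = upperShear (-x) :=
    mul_inv_eq_of_eq_mul (weylElement_mul_lowerShear x)
  have := hfin.to_subtype
  refine Subgroup.mem_normalizer_fintype ?_
  rintro _ (rfl | rfl | rfl | rfl | rfl) <;> simp [hupper, hlower, elementaryGenerators]

theorem upperShear_intCast_mul_mem_pow (k : ℤ) (t : R) :
    upperShear (k * t) ∈ elementaryGenerators t ^ k.natAbs := by
  have hpow {s : R} (hs : upperShear s ∈ elementaryGenerators t) (n : ℕ) :
      upperShear (n * s) ∈ elementaryGenerators t ^ n := by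
    rw [upperShear_natCast_mul]
    exact Set.pow_mem_pow hs
  obtain ⟨n, rfl | rfl⟩ := k.eq_nat_or_neg
  · simpa using hpow (s := t) (by simp [elementaryGenerators]) n
  · simpa using hpow (s := -t) (by simp [elementaryGenerators]) n

theorem elementaryGenerators_pow_eq_univ {F : Type*} [Field F] {t : F} {m : ℕ}
    (hupper : ∀ x : F, upperShear x ∈ elementaryGenerators t ^ m) :
    elementaryGenerators t ^ (4 * m) = Set.univ := by
  have hlower (x : F) : lowerShear x ∈ elementaryGenerators t ^ m := by
    have hconj := conj_mem_pow_of_mem_normalizer (weylElement_mem_normalizer t) (hupper (-x))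
    rwa [weylElement_mul_upperShear, mul_inv_cancel_right, neg_neg] at hconj
  refine Set.eq_univ_of_forall fun g => ?_
  obtain ⟨a, b, c, d, rfl⟩ := exists_eq_lowerShear_mul_upperShear_mul_lowerShear_mul_upperShear g
  have hmem := Set.mul_mem_mul (Set.mul_mem_mul (Set.mul_mem_mul (hlower a) (hupper b)) (hlower c))
    (hupper d)
  simp only [← pow_add] at hmem
  convert hmem using 2
  ring

theorem lubotzkySet_eq :
    lubotzkySet = {upperShear 3, upperShear (-3), lowerShear 3, lowerShear (-3)} := by
  decide

theorem coe_image_map_lubotzkySet_union_one [DecidableEq R] :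
    ((lubotzkySet.image (Matrix.SpecialLinearGroup.map (Int.castRingHom R)) ∪ {1} :
      Finset SL(2, R)) : Set SL(2, R)) = elementaryGenerators (3 : R) := by
  simp only [lubotzkySet_eq, elementaryGenerators]
  ext g
  simp only [image_insert, image_singleton, map_upperShear, map_lowerShear, map_neg, map_ofNat,
    coe_union, coe_insert, coe_singleton, Set.mem_union, Set.mem_insert_iff,
    Set.mem_singleton_iff]
  tauto

end Generators

section LengthFiltration

/-- An increasing filtration of an additive group by symmetric sets, compatible with addition;
`ball n` plays the role of the set of elements of length at most `n`. -/
structure LengthFiltration (R : Type*) [AddCommGroup R] where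
  ball : ℕ → Set R
  ball_mono : Monotone ball
  add_mem {m n : ℕ} {x y : R} : x ∈ ball m → y ∈ ball n → x + y ∈ ball (m + n)
  neg_mem {n : ℕ} {x : R} : x ∈ ball n → -x ∈ ball n

namespace LengthFiltration

variable {R : Type*} [Ring R] {B : LengthFiltration R} {l l' L L' : ℕ} {x y : R}

/-- Multiplication by `x` raises the length at most affinely, from `m` to `l * (m + L)`. -/
def Dilates (B : LengthFiltration R) (l L : ℕ) (x : R) : Prop :=
  ∀ ⦃m y⦄, y ∈ B.ball m → x * y ∈ B.ball (l * (m + L))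

theorem Dilates.add (hx : B.Dilates l L x) (hy : B.Dilates l' L y) :
    B.Dilates (l + l') L (x + y) := fun m z hz => by
  rw [add_mul, add_mul]
  exact B.add_mem (hx hz) (hy hz)

theorem Dilates.neg (hx : B.Dilates l L x) : B.Dilates l L (-x) := fun m z hz => by
  rw [neg_mul]
  exact B.neg_mem (hx hz)

theorem Dilates.sub (hx : B.Dilates l L x) (hy : B.Dilates l' L y) :
    B.Dilates (l + l') L (x - y) := by
  rw [sub_eq_add_neg]
  exact hx.add hy.neg

theorem Dilates.mul (hl' : 1 ≤ l') (hx : B.Dilates l L x) (hy : B.Dilates l' L' y) :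
    B.Dilates (l * l') (L + L') (x * y) := fun m z hz => by
  rw [mul_assoc, mul_assoc]
  refine B.ball_mono ?_ (hx (hy hz))
  gcongr
  nlinarith

theorem Dilates.mono (hx : B.Dilates l L x) (hl : l ≤ l') (hL : L ≤ L') : B.Dilates l' L' x :=
  fun _ _ hz => B.ball_mono (by gcongr) (hx hz)

end LengthFiltration

/-- The filtration of the ring by the word length of the upper unipotent matrices with respect to
`elementaryGenerators t`. -/
def unipotentFiltration {R : Type*} [CommRing R] (t : R) : LengthFiltration R where
  ball n := {x | upperShear x ∈ elementaryGenerators t ^ n}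
  ball_mono _ _ hmn _ hx := Set.pow_subset_pow_right (one_mem_elementaryGenerators t) hmn hx
  add_mem hx hy := by
    rw [Set.mem_ofPred_eq, upperShear_add, pow_add]
    exact Set.mul_mem_mul hx hy
  neg_mem {n x} hx := by
    rw [Set.mem_ofPred_eq, upperShear_neg, ← inv_elementaryGenerators, inv_pow]
    exact Set.inv_mem_inv.2 hx

theorem mem_ball_unipotentFiltration {R : Type*} [CommRing R] {t x : R} {n : ℕ} :
    x ∈ (unipotentFiltration t).ball n ↔ upperShear x ∈ elementaryGenerators t ^ n := Iff.rfl

end LengthFiltration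

section Projection

theorem card_sq_le_card_image_mul_card_collisions {α β : Type*} [DecidableEq β] (S : Finset α)
    (f : α → β) : #S ^ 2 ≤ #(S.image f) * #{q ∈ S ×ˢ S | f q.1 = f q.2} := by
  have hcollisions : #{q ∈ S ×ˢ S | f q.1 = f q.2} = ∑ b ∈ S.image f, #{a ∈ S | f a = b} ^ 2 := by
    have hmaps : ∀ q ∈ {q ∈ S ×ˢ S | f q.1 = f q.2}, f q.1 ∈ S.image f := by
      simp only [mem_filter, mem_product]
      exact fun q hq => mem_image_of_mem f hq.1.1
    rw [card_eq_sum_card_fiberwise hmaps]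
    refine sum_congr rfl fun b _ => ?_
    rw [sq, ← card_product]
    congr 1
    ext q
    simp only [mem_filter, mem_product]
    grind
  rw [hcollisions, card_eq_sum_card_image f S]
  exact sq_sum_le_card_mul_sum_sq

variable {F : Type*} [Field F] [Fintype F] [DecidableEq F]

-- Two distinct points of the plane have the same image for at most one slope.
theorem sum_card_collisions_le (S : Finset (F × F)) :
    ∑ ξ : F, #{q ∈ S ×ˢ S | q.1.1 + ξ * q.1.2 = q.2.1 + ξ * q.2.2} ≤
      Fintype.card F * #S + #S ^ 2 := by
  have hslopes (q : (F × F) × F × F) : #{ξ : F | q.1.1 + ξ * q.1.2 = q.2.1 + ξ * q.2.2} ≤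
      (if q.1 = q.2 then Fintype.card F else 0) + 1 := by
    split_ifs with hq
    · exact (card_le_univ _).trans (Nat.le_succ _)
    · rw [zero_add, card_le_one]
      simp only [mem_filter, mem_univ, true_and]
      intro ξ hξ η hη
      by_contra hne
      have h₂ : q.1.2 = q.2.2 :=
        mul_left_cancel₀ (sub_ne_zero.2 hne) (by linear_combination hξ - hη)
      exact hq (Prod.ext (by simpa [h₂] using hξ) h₂)
  calc ∑ ξ : F, #{q ∈ S ×ˢ S | q.1.1 + ξ * q.1.2 = q.2.1 + ξ * q.2.2}
    _ = ∑ q ∈ S ×ˢ S, #{ξ : F | q.1.1 + ξ * q.1.2 = q.2.1 + ξ * q.2.2} :=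
      sum_card_bipartiteAbove_eq_sum_card_bipartiteBelow
        (fun (ξ : F) (q : (F × F) × F × F) => q.1.1 + ξ * q.1.2 = q.2.1 + ξ * q.2.2)
    _ ≤ ∑ q ∈ S ×ˢ S, ((if q.1 = q.2 then Fintype.card F else 0) + 1) :=
      sum_le_sum fun q _ => hslopes q
    _ = Fintype.card F * #S + #S ^ 2 := by
      rw [sum_add_distrib, sum_product]
      simp [sq, mul_comm]

theorem exists_min_card_le_two_mul_card_image (S : Finset (F × F)) :
    ∃ ξ : F, min #S (Fintype.card F) ≤ 2 * #(S.image fun v => v.1 + ξ * v.2) := by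
  set q := Fintype.card F
  obtain ⟨ξ, -, hξ⟩ : ∃ ξ ∈ (univ : Finset F),
      q * #{v ∈ S ×ˢ S | v.1.1 + ξ * v.1.2 = v.2.1 + ξ * v.2.2} ≤ q * #S + #S ^ 2 := by
    refine exists_le_of_sum_le univ_nonempty ?_
    rw [← mul_sum, sum_const, card_univ, smul_eq_mul]
    exact Nat.mul_le_mul_left q (sum_card_collisions_le S)
  refine ⟨ξ, ?_⟩
  set I := #(S.image fun v => v.1 + ξ * v.2)
  obtain hS | hS := Nat.eq_zero_or_pos #S
  · simp [hS]
  have hle : #S * q ≤ I * (#S + q) := by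
    refine Nat.le_of_mul_le_mul_right ?_ hS
    calc #S * q * #S = q * #S ^ 2 := by ring
      _ ≤ q * (I * #{v ∈ S ×ˢ S | v.1.1 + ξ * v.1.2 = v.2.1 + ξ * v.2.2}) :=
        Nat.mul_le_mul_left q (card_sq_le_card_image_mul_card_collisions S _)
      _ ≤ I * (q * #S + #S ^ 2) := by
        rw [Nat.mul_left_comm]
        exact Nat.mul_le_mul_left I hξ
      _ = I * (#S + q) * #S := by ring
  refine Nat.le_of_mul_le_mul_right ?_ (lt_max_of_lt_left hS : 0 < max #S q)
  rw [min_mul_max]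
  calc #S * q ≤ I * (#S + q) := hle
    _ ≤ I * (max #S q + max #S q) := by gcongr <;> simp
    _ = 2 * I * max #S q := by ring

end Projection

section SumProduct

section Field

variable {F : Type*} [Field F] {A : Finset F} {ξ : F}

/-- The set of slopes of the lines through two points of `A × A`, the vertical ones excluded; they
are the slopes `ξ` for which `(x, y) ↦ x + ξ y` fails to be injective on `A × A`. -/
def differenceQuotients (A : Finset F) : Set F :=
  {ξ | ∃ a ∈ A, ∃ b ∈ A, ∃ c ∈ A, ∃ d ∈ A, c ≠ d ∧ ξ = (a - b) / (c - d)}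

theorem zero_mem_differenceQuotients (hA : 1 < #A) : 0 ∈ differenceQuotients A := by
  obtain ⟨c, hc, d, hd, hcd⟩ := one_lt_card.1 hA
  exact ⟨c, hc, c, hc, c, hc, d, hd, hcd, by simp⟩

variable [DecidableEq F]

theorem image_add_mul_product (A : Finset F) (ξ : F) :
    (A ×ˢ A).image (fun v => v.1 + ξ * v.2) = A + ξ • A := by
  ext x
  simp [mem_add, mem_smul_finset, and_assoc]

theorem card_add_smul_of_notMem_differenceQuotients (hξ : ξ ∉ differenceQuotients A) :
    #(A + ξ • A) = #A ^ 2 := by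
  rw [← image_add_mul_product, sq, ← card_product]
  refine card_image_of_injOn ?_
  rintro ⟨x, y⟩ hxy ⟨x', y'⟩ hxy' heq
  simp only [coe_product, Set.mem_prod, mem_coe] at hxy hxy' heq
  obtain rfl : y = y' := by
    by_contra hne
    refine hξ ⟨x', hxy'.1, x, hxy.1, y, hxy.2, y', hxy'.2, hne, ?_⟩
    rw [eq_div_iff (sub_ne_zero.2 hne)]
    linear_combination heq
  simpa using heq

end Field

theorem exists_mem_add_one_notMem {n : ℕ} [NeZero n] {Q : Set (ZMod n)} (h₀ : 0 ∈ Q)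
    (hQ : Q ≠ Set.univ) : ∃ ξ ∈ Q, ξ + 1 ∉ Q := by
  by_contra! hsucc
  have hnat (k : ℕ) : (k : ZMod n) ∈ Q := by
    induction k with
    | zero => simpa using h₀
    | succ k ih => simpa using hsucc _ ih
  refine hQ (Set.eq_univ_of_forall fun x => ?_)
  rw [← ZMod.natCast_zmod_val x]
  exact hnat _

variable {p : ℕ} [Fact p.Prime] {A : Finset (ZMod p)}

-- If every slope is a difference quotient, average over the slopes; otherwise some difference
-- quotient `ξ` has a successor `ξ + 1` that is none.
theorem exists_min_sq_card_le_two_mul_card_add_smul (hA : 1 < #A) :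
    ∃ ξ ∈ differenceQuotients A, ∃ e ∈ ({0, 1} : Set (ZMod p)),
      min (#A ^ 2) p ≤ 2 * #(A + (ξ + e) • A) := by
  by_cases hQ : differenceQuotients A = Set.univ
  · obtain ⟨ξ, hξ⟩ := exists_min_card_le_two_mul_card_image (A ×ˢ A)
    rw [card_product, ← sq, ZMod.card, image_add_mul_product] at hξ
    exact ⟨ξ, hQ ▸ Set.mem_univ ξ, 0, Or.inl rfl, by rwa [add_zero]⟩
  · obtain ⟨ξ, hξ, hξ₁⟩ := exists_mem_add_one_notMem (zero_mem_differenceQuotients hA) hQ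
    refine ⟨ξ, hξ, 1, Or.inr rfl, ?_⟩
    rw [card_add_smul_of_notMem_differenceQuotients hξ₁]
    omega

theorem exists_min_sq_card_le_two_mul_card_smul_add_smul (hA : 1 < #A) :
    ∃ a ∈ A, ∃ b ∈ A, ∃ c ∈ A, ∃ d ∈ A, ∃ e ∈ ({0, c - d} : Set (ZMod p)),
      min (#A ^ 2) p ≤ 2 * #((c - d) • A + (a - b + e) • A) := by
  obtain ⟨_, ⟨a, ha, b, hb, c, hc, d, hd, hcd, rfl⟩, e, he, hle⟩ :=
    exists_min_sq_card_le_two_mul_card_add_smul hA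
  have hcd₀ : c - d ≠ 0 := sub_ne_zero.2 hcd
  refine ⟨a, ha, b, hb, c, hc, d, hd, (c - d) * e, ?_, ?_⟩
  · obtain rfl | rfl := he <;> simp
  · rwa [← card_smul_finset₀ hcd₀ (A + _), smul_add, smul_smul, mul_add, mul_div_cancel₀ _ hcd₀]
      at hle

end SumProduct

section Growth

theorem add_self_eq_univ_of_card_lt_two_mul_card {G : Type*} [AddGroup G] [Fintype G]
    [DecidableEq G] {A : Finset G} (hA : Fintype.card G < 2 * #A) : A + A = univ := by
  refine eq_univ_of_forall fun x => ?_
  have hcard : #(univ : Finset G) < #A + #(A.image (x - ·)) := by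
    rw [card_image_of_injective A sub_right_injective, card_univ, ← two_mul]
    exact hA
  obtain ⟨y, hy⟩ :=
    inter_nonempty_of_card_lt_card_add_card (subset_univ A) (subset_univ _) hcard
  obtain ⟨hyA, z, hz, rfl⟩ := by simpa only [mem_inter, mem_image] using hy
  exact mem_add.2 ⟨x - z, hyA, z, hz, sub_add_cancel x z⟩

variable {p : ℕ} [Fact p.Prime] {A : Finset (ZMod p)} {B : LengthFiltration (ZMod p)} {l L : ℕ}

namespace LengthFiltration

theorem dilates_of_le_two_mul_card (hp : p ≠ 2) (hA : p ≤ 2 * #A)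
    (hdil : ∀ x ∈ A, B.Dilates l L x) (x : ZMod p) : B.Dilates (2 * l) L x := by
  have hodd := (Fact.out : p.Prime).eq_two_or_odd.resolve_left hp
  have hlt : Fintype.card (ZMod p) < 2 * #A := by rw [ZMod.card]; omega
  have hx : x ∈ A + A := by rw [add_self_eq_univ_of_card_lt_two_mul_card hlt]; exact mem_univ x
  obtain ⟨y, hy, z, hz, rfl⟩ := mem_add.1 hx
  rw [two_mul]
  exact (hdil y hy).add (hdil z hz)

theorem exists_min_sq_card_le_two_mul_card_and_dilates (hl : 1 ≤ l) (hA : 1 < #A)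
    (hdil : ∀ x ∈ A, B.Dilates l L x) :
    ∃ A' : Finset (ZMod p), min (#A ^ 2) p ≤ 2 * #A' ∧
      ∀ x ∈ A', B.Dilates (6 * l ^ 2) (2 * L) x := by
  obtain ⟨a, ha, b, hb, c, hc, d, hd, e, he, hle⟩ :=
    exists_min_sq_card_le_two_mul_card_smul_add_smul hA
  refine ⟨_, hle, fun x hx => ?_⟩
  simp only [mem_add, mem_smul_finset, smul_eq_mul] at hx
  obtain ⟨_, ⟨y, hy, rfl⟩, _, ⟨z, hz, rfl⟩, rfl⟩ := hx
  have hcd := (hdil c hc).sub (hdil d hd)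
  have habe : B.Dilates (4 * l) L (a - b + e) := by
    have hab := (hdil a ha).sub (hdil b hb)
    obtain rfl | rfl := he
    · rw [add_zero]
      exact hab.mono (by omega) le_rfl
    · exact (hab.add hcd).mono (by omega) le_rfl
  convert (hcd.mul hl (hdil y hy)).add (habe.mul hl (hdil z hz)) using 1 <;> ring

theorem dilates_of_le_card_div_two_pow (hp : p ≠ 2) (k : ℕ) (hl : 1 ≤ l)
    (hA : (p : ℝ) ≤ (#A / 2) ^ 2 ^ k) (hdil : ∀ x ∈ A, B.Dilates l L x) (x : ZMod p) :
    B.Dilates (2 * (6 * l) ^ 2 ^ k) (2 ^ k * L) x := by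
  induction k generalizing A l L with
  | zero =>
    have hle : (p : ℝ) ≤ 2 * #A := by rw [pow_zero, pow_one] at hA; linarith
    exact (dilates_of_le_two_mul_card hp (mod_cast hle) hdil x).mono (by simp; omega) (by simp)
  | succ k ih =>
    have hA₁ : 1 < #A := by
      by_contra! h
      have hle : ((#A : ℝ) / 2) ^ 2 ^ (k + 1) ≤ 1 := by
        refine pow_le_one₀ (by positivity) ?_
        have : (#A : ℝ) ≤ 1 := mod_cast h
        linarith
      exact absurd (hA.trans hle) (not_le.2 (mod_cast (Fact.out : p.Prime).one_lt))
    obtain ⟨A', hA', hdil'⟩ := exists_min_sq_card_le_two_mul_card_and_dilates hl hA₁ hdil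
    obtain hmin | hmin := min_choice (#A ^ 2) p <;> rw [hmin] at hA'
    · have hA'₂ : (p : ℝ) ≤ (#A' / 2) ^ 2 ^ k := by
        have : ((#A : ℝ) / 2) ^ 2 ≤ #A' / 2 := by
          have : (#A : ℝ) ^ 2 ≤ 2 * #A' := mod_cast hA'
          linarith
        rw [pow_succ', pow_mul] at hA
        exact hA.trans (by gcongr)
      have hbase : 6 * (6 * l ^ 2) = (6 * l) ^ 2 := by ring
      have hall := ih (by nlinarith) hA'₂ hdil'
      rwa [hbase, ← pow_mul, ← pow_succ', ← mul_assoc, ← pow_succ] at hall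
    · have hl_le : 6 * l ^ 2 ≤ (6 * l) ^ 2 ^ (k + 1) := calc
        6 * l ^ 2 ≤ (6 * l) ^ 2 := by nlinarith
        _ ≤ (6 * l) ^ 2 ^ (k + 1) :=
          Nat.pow_le_pow_right (by omega) (Nat.le_self_pow k.succ_ne_zero 2)
      have hL_le : 2 * L ≤ 2 ^ (k + 1) * L :=
        Nat.mul_le_mul_right L (Nat.le_self_pow k.succ_ne_zero 2)
      exact (dilates_of_le_two_mul_card hp hA' hdil' x).mono (Nat.mul_le_mul_left 2 hl_le) hL_le

end LengthFiltration

end Growth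

section ColumnVectors

/-- The exponents `k` of the letters `upperShear (3 * k) * weylElement` in the words considered. -/
def wordExponents : Finset ℤ := {-5, -4, -3, -2, -1, 1, 2, 3, 4, 5}

/-- The action of `upperShear (3 * k) * weylElement` on column vectors. -/
def columnStep (k : ℤ) (w : ℤ × ℤ) : ℤ × ℤ := (3 * k * w.1 - w.2, w.1)

/-- First columns of the words in at most `n` letters `upperShear (3 * k) * weylElement` with
`k ∈ wordExponents`. A letter multiplies the size of a vector by less than `3 * |k| + 1`, and the
budget `X` for the size is divided by that factor at each letter; words stop when it drops to `1`.
-/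
noncomputable def columnVectors : ℕ → ℝ → Finset (ℤ × ℤ)
  | 0, _ => {(1, 0)}
  | n + 1, X =>
    if X ≤ 1 then {(1, 0)}
    else wordExponents.biUnion fun k => (columnVectors n (X / (3 * |k| + 1))).image (columnStep k)

theorem one_le_abs_of_mem_wordExponents {k : ℤ} (hk : k ∈ wordExponents) : 1 ≤ |k| := by
  revert k; decide

theorem abs_le_of_mem_wordExponents {k : ℤ} (hk : k ∈ wordExponents) : |k| ≤ 5 := by
  revert k; decide

theorem columnStep_injective (k : ℤ) : Function.Injective (columnStep k) := by
  rintro ⟨a, b⟩ ⟨a', b'⟩ h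
  simp only [columnStep, Prod.mk.injEq] at h
  obtain ⟨h, rfl⟩ := h
  simpa using h

theorem columnVectors_induction {P : ℕ → ℝ → ℤ × ℤ → Prop} (base : ∀ n X, P n X (1, 0))
    (step : ∀ n X k w, 1 < X → k ∈ wordExponents → P n (X / (3 * |k| + 1)) w →
      P (n + 1) X (columnStep k w))
    {n : ℕ} {X : ℝ} {w : ℤ × ℤ} (hw : w ∈ columnVectors n X) : P n X w := by
  induction n generalizing X w with
  | zero =>
    obtain rfl := mem_singleton.1 hw
    exact base 0 X
  | succ n ih =>
    rw [columnVectors] at hw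
    split_ifs at hw with hX
    · obtain rfl := mem_singleton.1 hw
      exact base _ X
    · simp only [mem_biUnion, mem_image] at hw
      obtain ⟨k, hk, w, hw, rfl⟩ := hw
      exact step n X k w (not_le.1 hX) hk (ih hw)

theorem abs_snd_columnStep_lt {k : ℤ} {w : ℤ × ℤ} (hk : k ∈ wordExponents) (hw : |w.2| < |w.1|) :
    |(columnStep k w).2| < |(columnStep k w).1| := by
  have hk₁ := one_le_abs_of_mem_wordExponents hk
  calc |w.1| < 3 * |k| * |w.1| - |w.2| := by nlinarith [abs_nonneg w.1, abs_nonneg w.2]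
    _ = |3 * k * w.1| - |w.2| := by
      rw [abs_mul, abs_mul, abs_of_nonneg (by norm_num : (0 : ℤ) ≤ 3)]
    _ ≤ |3 * k * w.1 - w.2| := abs_sub_abs_le_abs_sub _ _

theorem abs_snd_lt_abs_fst_of_mem_columnVectors {n : ℕ} {X : ℝ} {w : ℤ × ℤ}
    (hw : w ∈ columnVectors n X) : |w.2| < |w.1| :=
  columnVectors_induction (P := fun _ _ w => |w.2| < |w.1|) (fun _ _ => by simp)
    (fun _ _ _ _ _ hk hlt => abs_snd_columnStep_lt hk hlt) hw

theorem abs_fst_columnStep_le {k : ℤ} {w : ℤ × ℤ} (hw : |w.2| ≤ |w.1|) :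
    |(columnStep k w).1| ≤ (3 * |k| + 1) * |w.1| := by
  calc |3 * k * w.1 - w.2| ≤ |3 * k * w.1| + |w.2| := abs_sub _ _
    _ = 3 * |k| * |w.1| + |w.2| := by
      rw [abs_mul, abs_mul, abs_of_nonneg (by norm_num : (0 : ℤ) ≤ 3)]
    _ ≤ (3 * |k| + 1) * |w.1| := by linarith

theorem abs_fst_le_of_mem_columnVectors {n : ℕ} {X : ℝ} {w : ℤ × ℤ} (hX : 1 / 16 ≤ X)
    (hw : w ∈ columnVectors n X) : |w.1| ≤ 16 * X := by
  refine (columnVectors_induction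
    (P := fun _ X w => |w.2| < |w.1| ∧ (1 / 16 ≤ X → |w.1| ≤ 16 * X)) ?_ ?_ hw).2 hX
  · intro _ X
    refine ⟨by simp, fun hX => ?_⟩
    norm_num
    linarith
  · rintro _ X k w hX₁ hk ⟨hlt, hle⟩
    refine ⟨abs_snd_columnStep_lt hk hlt, fun _ => ?_⟩
    have hk₁ : (1 : ℝ) ≤ |k| := mod_cast one_le_abs_of_mem_wordExponents hk
    have hk₅ : |k| ≤ (5 : ℝ) := mod_cast abs_le_of_mem_wordExponents hk
    have hdiv : 1 / 16 ≤ X / (3 * |k| + 1) := by gcongr; linarith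
    calc (↑|(columnStep k w).1| : ℝ)
      _ ≤ (3 * |k| + 1) * |w.1| := mod_cast abs_fst_columnStep_le hlt.le
      _ ≤ (3 * |k| + 1) * (16 * (X / (3 * |k| + 1))) := by gcongr; exact hle hdiv
      _ = 16 * X := by field_simp

theorem eq_of_columnStep_eq_columnStep {k k' : ℤ} {w w' : ℤ × ℤ} (hw : |w.2| < |w.1|)
    (hw' : |w'.2| < |w'.1|) (h : columnStep k w = columnStep k' w') : k = k' := by
  simp only [columnStep, Prod.mk.injEq] at h
  obtain ⟨hfst, hsnd⟩ := h
  rw [← hsnd] at hfst hw'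
  by_contra hne
  have hk : 1 ≤ |k - k'| := Int.one_le_abs (sub_ne_zero.2 hne)
  have heq : 3 * |k - k'| * |w.1| = |w.2 - w'.2| := by
    rw [← abs_of_nonneg (by norm_num : (0 : ℤ) ≤ 3), ← abs_mul, ← abs_mul]
    congr 1
    linear_combination hfst
  nlinarith [abs_sub w.2 w'.2, abs_nonneg w.1]

theorem card_columnVectors_succ (n : ℕ) {X : ℝ} (hX : 1 < X) :
    #(columnVectors (n + 1) X) = ∑ k ∈ wordExponents, #(columnVectors n (X / (3 * |k| + 1))) := by
  rw [columnVectors, if_neg hX.not_ge, card_biUnion]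
  · exact sum_congr rfl fun k _ => card_image_of_injective _ (columnStep_injective k)
  · intro k _ k' _ hne
    simp only [disjoint_left, mem_image]
    rintro _ ⟨w, hw, rfl⟩ ⟨w', hw', heq⟩
    exact hne (eq_of_columnStep_eq_columnStep (abs_snd_lt_abs_fst_of_mem_columnVectors hw)
      (abs_snd_lt_abs_fst_of_mem_columnVectors hw') heq.symm)

theorem five_sixths_mul_inv_le_rpow {m : ℝ} (hm : 0 < m) (hm' : m ≤ 16) :
    5 / 6 * m⁻¹ ≤ m ^ (-(17 / 16) : ℝ) := by
  have hroot : m ^ (1 / 16 : ℝ) ≤ 6 / 5 := by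
    calc m ^ (1 / 16 : ℝ) ≤ ((6 / 5) ^ (16 : ℕ)) ^ (1 / 16 : ℝ) := by
          refine Real.rpow_le_rpow hm.le (hm'.trans ?_) (by norm_num)
          norm_num
      _ = 6 / 5 := by
        exact_mod_cast one_div (16 : ℝ) ▸ Real.pow_rpow_inv_natCast (by norm_num) (by norm_num)
  calc 5 / 6 * m⁻¹ = (m * (6 / 5))⁻¹ := by rw [mul_inv]; ring
    _ ≤ (m * m ^ (1 / 16 : ℝ))⁻¹ := by gcongr
    _ = m ^ (-(17 / 16) : ℝ) := by
      rw [Real.rpow_neg hm.le, ← Real.rpow_one_add' hm.le (by norm_num)]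
      norm_num

-- The reciprocals of the ten numbers `3 * |k| + 1` sum to about `1.26`, which leaves room for the
-- exponent `17 / 16`.
theorem one_le_sum_wordExponents_rpow :
    1 ≤ ∑ k ∈ wordExponents, (3 * |k| + 1 : ℝ) ^ (-(17 / 16) : ℝ) := by
  calc (1 : ℝ) ≤ ∑ k ∈ wordExponents, 5 / 6 * (3 * |k| + 1 : ℝ)⁻¹ := by
        simp [wordExponents]
        norm_num
    _ ≤ ∑ k ∈ wordExponents, (3 * |k| + 1 : ℝ) ^ (-(17 / 16) : ℝ) := by
      refine sum_le_sum fun k hk => five_sixths_mul_inv_le_rpow (by positivity) ?_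
      have hk₅ : |k| ≤ (5 : ℝ) := mod_cast abs_le_of_mem_wordExponents hk
      linarith

theorem rpow_le_card_columnVectors {n : ℕ} {X : ℝ} (hX : 0 < X) (hX' : X ≤ 4 ^ n) :
    X ^ (17 / 16 : ℝ) ≤ #(columnVectors n X) := by
  induction n generalizing X with
  | zero => simpa [columnVectors] using Real.rpow_le_one hX.le hX' (by norm_num)
  | succ n ih =>
    obtain hX₁ | hX₁ := le_or_gt X 1
    · simpa [columnVectors, hX₁] using Real.rpow_le_one hX.le hX₁ (by norm_num)
    rw [card_columnVectors_succ n hX₁, Nat.cast_sum]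
    calc X ^ (17 / 16 : ℝ)
      _ ≤ X ^ (17 / 16 : ℝ) * ∑ k ∈ wordExponents, (3 * |k| + 1 : ℝ) ^ (-(17 / 16) : ℝ) :=
        le_mul_of_one_le_right (by positivity) one_le_sum_wordExponents_rpow
      _ = ∑ k ∈ wordExponents, (X / (3 * |k| + 1)) ^ (17 / 16 : ℝ) := by
        rw [mul_sum]
        refine sum_congr rfl fun k _ => ?_
        rw [Real.div_rpow hX.le (by positivity), Real.rpow_neg (by positivity), ← div_eq_mul_inv]
      _ ≤ ∑ k ∈ wordExponents, (#(columnVectors n (X / (3 * |k| + 1))) : ℝ) := by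
        refine sum_le_sum fun k hk => ih (by positivity) ?_
        have hk₁ : (1 : ℝ) ≤ |k| := mod_cast one_le_abs_of_mem_wordExponents hk
        rw [div_le_iff₀ (by positivity)]
        calc X ≤ 4 ^ n * 4 := by rwa [← pow_succ]
          _ ≤ 4 ^ n * (3 * |k| + 1) := by gcongr; linarith

theorem exists_mem_pow_mul_normalizer_of_mem_columnVectors (R : Type*) [CommRing R] {n : ℕ} {X : ℝ}
    {w : ℤ × ℤ} (hw : w ∈ columnVectors n X) :
    ∃ g ∈ elementaryGenerators (3 : R) ^ (5 * n) *
        (Subgroup.normalizer (elementaryGenerators (3 : R)) : Set SL(2, R)),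
      g 0 0 = w.1 ∧ g 1 0 = w.2 := by
  refine columnVectors_induction (P := fun n _ w =>
    ∃ g ∈ elementaryGenerators (3 : R) ^ (5 * n) *
        (Subgroup.normalizer (elementaryGenerators (3 : R)) : Set SL(2, R)),
      g 0 0 = w.1 ∧ g 1 0 = w.2) ?_ ?_ hw
  · exact fun n _ => ⟨1, ⟨1, Set.one_mem_pow (one_mem_elementaryGenerators 3), 1, one_mem _,
      one_mul 1⟩, by simp⟩
  · rintro n _ k w - hk ⟨g, hg, hg₀, hg₁⟩
    have hshear : upperShear (k * 3 : R) ∈ elementaryGenerators (3 : R) ^ 5 :=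
      Set.pow_subset_pow_right (one_mem_elementaryGenerators 3)
        (by have := abs_le.1 (abs_le_of_mem_wordExponents hk); omega)
        (upperShear_intCast_mul_mem_pow k 3)
    refine ⟨upperShear (k * 3 : R) * weylElement * g, ?_, ?_⟩
    · rw [mul_add_one, add_comm]
      exact mul_mem_pow_mul_normalizer
        (Set.mul_mem_mul hshear (weylElement_mem_normalizer 3)) hg
    · simp [columnStep, coe_upperShear, coe_weylElement, Matrix.mul_apply, hg₀, hg₁]
      ring

end ColumnVectors

section DilatingSet

theorem eq_of_intCast_zmod_eq {n : ℕ} {a b : ℤ} (hlt : |a| + |b| < n) (h : (a : ZMod n) = b) :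
    a = b := by
  rw [← sub_eq_zero, ← Int.cast_sub, ZMod.intCast_zmod_eq_zero_iff_dvd] at h
  exact sub_eq_zero.1 (Int.eq_zero_of_abs_lt_dvd h ((abs_sub a b).trans_lt hlt))

theorem card_le_two_mul_card_image_sq {R : Type*} [CommRing R] [NoZeroDivisors R] [DecidableEq R]
    (A : Finset R) : #A ≤ 2 * #(A.image (· ^ 2)) := by
  refine card_le_mul_card_image A 2 fun b hb => ?_
  obtain ⟨x, -, rfl⟩ := mem_image.1 hb
  refine (card_le_card fun y hy => ?_).trans (card_le_two (a := x) (b := -x))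
  simpa using sq_eq_sq_iff_eq_or_eq_neg.1 (mem_filter.1 hy).2

theorem dilates_sq_of_col_eq {R : Type*} [CommRing R] {t x : R} {m : ℕ} {g h : SL(2, R)}
    (hg : g ∈ elementaryGenerators t ^ m *
      (Subgroup.normalizer (elementaryGenerators t) : Set SL(2, R)))
    (hh : h ∈ elementaryGenerators t ^ m *
      (Subgroup.normalizer (elementaryGenerators t) : Set SL(2, R)))
    (h₀ : h 0 0 = x * g 0 0) (h₁ : h 1 0 = x * g 1 0) :
    (unipotentFiltration t).Dilates 1 (4 * m) (x ^ 2) := by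
  have hS := inv_elementaryGenerators t
  intro k y hy
  have hmem := conj_mem_pow_of_mem_pow_mul_normalizer hS
    (mul_mem_pow_mul_normalizer (inv_mem_pow_mul_normalizer hS hg) hh) hy
  rw [inv_mul_mul_upperShear h₀ h₁] at hmem
  rw [mem_ball_unipotentFiltration]
  convert hmem using 2
  ring

variable {p : ℕ} [Fact p.Prime]

theorem exists_common_slope {V : Finset (ℤ × ℤ)} (hV : ∀ w ∈ V, |w.2| < |w.1|)
    (hVp : ∀ w ∈ V, 3 * |w.1| ≤ p) {r : ℝ} (hr : p * r ≤ #V) :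
    ∃ W ⊆ V, r ≤ #W ∧ Set.InjOn (fun w : ℤ × ℤ => (w.1 : ZMod p)) W ∧
      ∃ t : ZMod p, ∀ w ∈ W, (w.1 : ZMod p) ≠ 0 ∧ (w.2 : ZMod p) = t * w.1 := by
  have hne : ∀ w ∈ V, (w.1 : ZMod p) ≠ 0 := fun w hw h₀ => by
    have hlt := hV w hw
    have hle := hVp w hw
    have hpos := (abs_nonneg w.2).trans_lt hlt
    have hzero : w.1 = 0 :=
      eq_of_intCast_zmod_eq (n := p) (by rw [abs_zero]; omega) (by rw [h₀, Int.cast_zero])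
    exact hpos.ne' (abs_eq_zero.2 hzero)
  obtain ⟨t, -, ht⟩ := exists_le_card_fiber_of_nsmul_le_card_of_maps_to
    (s := V) (t := (univ : Finset (ZMod p))) (f := fun w => (w.2 : ZMod p) / w.1) (b := r)
    (fun _ _ => mem_univ _) univ_nonempty (by simpa [ZMod.card] using hr)
  have hslope : ∀ w ∈ V.filter fun w => (w.2 : ZMod p) / w.1 = t,
      (w.1 : ZMod p) ≠ 0 ∧ (w.2 : ZMod p) = t * w.1 := fun w hw => by
    obtain ⟨hwV, hwt⟩ := mem_filter.1 hw
    exact ⟨hne w hwV, (div_eq_iff (hne w hwV)).1 hwt⟩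
  refine ⟨_, filter_subset _ V, ht, fun w hw w' hw' h => ?_, t, hslope⟩
  have hwV := (mem_filter.1 hw).1
  have hwV' := (mem_filter.1 hw').1
  have := abs_nonneg w.2
  have := hV w hwV
  have := hV w' hwV'
  have := hVp w hwV
  have := hVp w' hwV'
  refine Prod.ext (eq_of_intCast_zmod_eq (n := p) (by omega) h)
    (eq_of_intCast_zmod_eq (n := p) (by omega) ?_)
  rw [(hslope w hw).2, (hslope w' hw').2]
  exact congrArg (t * ·) h

theorem four_mul_rpow_le_div_rpow {x : ℝ} (hx : 2 ^ 256 ≤ x) :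
    x * (4 * x ^ (1 / 32 : ℝ)) ≤ (x / 48) ^ (17 / 16 : ℝ) := by
  have hx₀ : 0 < x := lt_of_lt_of_le (by positivity) hx
  have hroot : 2 ^ 8 ≤ x ^ (1 / 32 : ℝ) := by
    rw [one_div, Real.le_rpow_inv_iff_of_pos (by positivity) hx₀.le (by norm_num)]
    exact_mod_cast (pow_mul (2 : ℝ) 8 32).symm.le.trans hx
  have h48 : (48 : ℝ) ^ (17 / 16 : ℝ) ≤ 64 := by
    rw [div_eq_mul_inv, Real.rpow_mul (by norm_num),
      Real.rpow_inv_le_iff_of_pos (by positivity) (by norm_num) (by norm_num)]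
    norm_num
  rw [Real.div_rpow hx₀.le (by norm_num), le_div_iff₀ (by positivity)]
  calc x * (4 * x ^ (1 / 32 : ℝ)) * 48 ^ (17 / 16 : ℝ)
    _ ≤ x * (4 * x ^ (1 / 32 : ℝ)) * 64 := by gcongr
    _ = x * (x ^ (1 / 32 : ℝ) * 2 ^ 8) := by ring
    _ ≤ x * (x ^ (1 / 32 : ℝ) * x ^ (1 / 32 : ℝ)) := by gcongr
    _ = x ^ (17 / 16 : ℝ) := by
      rw [← Real.rpow_add hx₀, ← Real.rpow_one_add' hx₀.le (by norm_num)]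
      norm_num

theorem exists_dilates_one_of_pow_le {n : ℕ} (hp : 2 ^ 256 ≤ p) (hn : p ≤ 48 * 4 ^ n) :
    ∃ A : Finset (ZMod p), (p : ℝ) ≤ (#A / 2) ^ 32 ∧
      ∀ x ∈ A, (unipotentFiltration (3 : ZMod p)).Dilates 1 (20 * n) x := by
  have hp' : (2 : ℝ) ^ 256 ≤ p := mod_cast hp
  have hp₀ : (0 : ℝ) < p := lt_of_lt_of_le (by positivity) hp'
  have hX : (1 : ℝ) / 16 ≤ p / 48 := by
    have : (2 : ℝ) ^ 2 ≤ p := (pow_le_pow_right₀ (by norm_num) (by norm_num)).trans hp'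
    linarith only [this]
  have hX' : (p : ℝ) / 48 ≤ 4 ^ n := by
    rw [div_le_iff₀' (by norm_num)]
    exact_mod_cast hn
  obtain ⟨W, hWV, hW, hinj, t, ht⟩ := exists_common_slope (p := p)
    (V := columnVectors n (p / 48)) (fun w => abs_snd_lt_abs_fst_of_mem_columnVectors)
    (fun w hw => by
      have := abs_fst_le_of_mem_columnVectors hX hw
      rw [← Int.cast_le (R := ℝ)]
      push_cast at this ⊢
      linarith)
    ((four_mul_rpow_le_div_rpow hp').trans (rpow_le_card_columnVectors (by positivity) hX'))
  obtain ⟨w₀, hw₀⟩ : W.Nonempty :=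
    card_pos.1 (Nat.cast_pos.1 (lt_of_lt_of_le (by positivity) hW))
  obtain ⟨g₀, hg₀, hg₀₀, hg₀₁⟩ :=
    exists_mem_pow_mul_normalizer_of_mem_columnVectors (ZMod p) (hWV hw₀)
  obtain ⟨hne, ht₀⟩ := ht w₀ hw₀
  refine ⟨(W.image fun w => (w.1 / w₀.1 : ZMod p)).image (· ^ 2), ?_, fun x hx => ?_⟩
  · have hcard := card_le_two_mul_card_image_sq (W.image fun w => (w.1 / w₀.1 : ZMod p))
    rw [card_image_of_injOn fun w hw w' hw' h => hinj hw hw' ((div_left_inj' hne).1 h)] at hcard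
    have hcard' := (Nat.cast_le (α := ℝ)).2 hcard
    rw [Nat.cast_mul, Nat.cast_ofNat] at hcard'
    calc (p : ℝ) = (p ^ (1 / 32 : ℝ)) ^ 32 := by
          rw [one_div]
          exact_mod_cast (Real.rpow_inv_natCast_pow hp₀.le (n := 32) (by norm_num)).symm
      _ ≤ _ := by gcongr; linarith only [hW, hcard']
  · simp only [mem_image, exists_exists_and_eq_and] at hx
    obtain ⟨w, hw, rfl⟩ := hx
    obtain ⟨g, hg, hg₁, hg₂⟩ :=
      exists_mem_pow_mul_normalizer_of_mem_columnVectors (ZMod p) (hWV hw)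
    refine (dilates_sq_of_col_eq hg₀ hg ?_ ?_).mono le_rfl (by omega)
    · rw [hg₁, hg₀₀, div_mul_cancel₀ _ hne]
    · rw [hg₂, hg₀₁, ht₀, (ht w hw).2, mul_left_comm, div_mul_cancel₀ _ hne]

end DilatingSet

section Diameter

theorem elementaryGenerators_pow_eq_univ_of_dilates {F : Type*} [Field F] {t : F} {l L : ℕ}
    (ht : t ≠ 0) (hdil : ∀ x : F, (unipotentFiltration t).Dilates l L x) :
    elementaryGenerators t ^ (4 * (l * (1 + L))) = Set.univ := by
  have hone : t ∈ (unipotentFiltration t).ball 1 := by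
    rw [mem_ball_unipotentFiltration, pow_one]
    exact Or.inr (Or.inl rfl)
  refine elementaryGenerators_pow_eq_univ fun x => ?_
  have hx := hdil (x / t) hone
  rwa [div_mul_cancel₀ x ht, mem_ball_unipotentFiltration] at hx

variable {p : ℕ} [Fact p.Prime]

theorem elementaryGenerators_pow_four_mul_eq_univ {t : ZMod p} (ht : t ≠ 0) :
    elementaryGenerators t ^ (4 * p) = Set.univ := by
  refine elementaryGenerators_pow_eq_univ fun x => ?_
  have hx := upperShear_intCast_mul_mem_pow ((x / t).val : ℤ) t
  rw [Int.cast_natCast, ZMod.natCast_zmod_val, div_mul_cancel₀ x ht, Int.natAbs_natCast] at hx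
  exact Set.pow_subset_pow_right (one_mem_elementaryGenerators t) (ZMod.val_lt _).le hx

theorem one_half_le_log_of_prime : 1 / 2 ≤ Real.log p := by
  have hlog : Real.log 2 ≤ Real.log p :=
    Real.log_le_log two_pos (mod_cast (Fact.out : p.Prime).two_le)
  linarith [Real.log_two_gt_d9]

theorem exists_elementaryGenerators_three_pow_eq_univ_of_pow_le (hp : 2 ^ 256 ≤ p)
    (h₃ : (3 : ZMod p) ≠ 0) :
    ∃ n : ℕ, (n : ℝ) ≤ 2 ^ 97 * Real.log p ∧ elementaryGenerators (3 : ZMod p) ^ n = Set.univ := by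
  have hp₂ : 2 < p := (lt_self_pow₀ one_lt_two (by norm_num)).trans_le hp
  set n := Nat.log 2 p
  have hpn : p ≤ 48 * 4 ^ n := by
    calc p ≤ 2 ^ n * 2 := (Nat.lt_pow_succ_log_self one_lt_two p).le
      _ ≤ 4 ^ n * 48 := by gcongr <;> norm_num
      _ = 48 * 4 ^ n := mul_comm _ _
  obtain ⟨A, hA, hdil⟩ := exists_dilates_one_of_pow_le hp hpn
  refine ⟨_, ?_, elementaryGenerators_pow_eq_univ_of_dilates h₃
    (LengthFiltration.dilates_of_le_card_div_two_pow hp₂.ne' 5 le_rfl hA hdil)⟩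
  have hn : (n : ℝ) ≤ 2 * Real.log p := by
    have hpow : Real.log (2 ^ n) ≤ Real.log p := Real.log_le_log (by positivity)
      (mod_cast Nat.pow_log_le_self 2 (Fact.out : p.Prime).ne_zero)
    rw [Real.log_pow] at hpow
    nlinarith only [hpow, Real.log_two_gt_d9, (Nat.cast_nonneg n : (0 : ℝ) ≤ n)]
  calc ((4 * (2 * (6 * 1) ^ 2 ^ 5 * (1 + 2 ^ 5 * (20 * n))) : ℕ) : ℝ)
    _ = 8 * 6 ^ 32 * (1 + 640 * n) := by push_cast; ring
    _ ≤ 8 * 2 ^ 83 * (2 ^ 11 * Real.log p) := by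
      gcongr
      · norm_num
      · linarith only [hn, one_half_le_log_of_prime (p := p)]
    _ = 2 ^ 97 * Real.log p := by ring

theorem exists_elementaryGenerators_three_pow_eq_univ (hp : p ≠ 3) :
    ∃ n : ℕ, (n : ℝ) ≤ 2 ^ 259 * Real.log p ∧
      elementaryGenerators (3 : ZMod p) ^ n = Set.univ := by
  have h₃ : (3 : ZMod p) ≠ 0 := fun h => by
    have hdvd : p ∣ 3 := (ZMod.natCast_eq_zero_iff 3 p).1 (mod_cast h)
    exact hp ((Nat.prime_dvd_prime_iff_eq Fact.out Nat.prime_three).1 hdvd)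
  have hlog := one_half_le_log_of_prime (p := p)
  obtain hlt | hle := lt_or_ge p (2 ^ 256)
  · refine ⟨4 * p, ?_, elementaryGenerators_pow_four_mul_eq_univ h₃⟩
    calc ((4 * p : ℕ) : ℝ) = 4 * p := by push_cast; rfl
      _ ≤ 4 * 2 ^ 256 := by gcongr; exact_mod_cast hlt.le
      _ = 2 ^ 3 * 2 ^ 256 * (1 / 2) := by ring
      _ = 2 ^ 259 * (1 / 2) := by rw [← pow_add]
      _ ≤ 2 ^ 259 * Real.log p := by gcongr
  · obtain ⟨n, hn, hpow⟩ := exists_elementaryGenerators_three_pow_eq_univ_of_pow_le hle h₃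
    refine ⟨n, hn.trans ?_, hpow⟩
    gcongr
    · exact one_le_two
    · norm_num

theorem log_le_log_card_specialLinearGroup :
    Real.log p ≤ Real.log (Fintype.card SL(2, ZMod p)) := by
  have hcard := Fintype.card_le_of_injective _ (upperShear_injective (R := ZMod p))
  rw [ZMod.card] at hcard
  exact Real.log_le_log (mod_cast (Fact.out : p.Prime).pos) (mod_cast hcard)

end Diameter

theorem stmt_4_general (p : ℕ) [Fact p.Prime] (hp3 : p ≠ 3) :
    ∃ n : ℕ, (n : ℝ) ≤ 2 ^ 259 * Real.log p ∧
      ((lubotzkySet.image (Matrix.SpecialLinearGroup.map (Int.castRingHom (ZMod p))) ∪ {1}) ^ n :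
        Finset SL(2, ZMod p)) = univ := by
  obtain ⟨n, hn, hpow⟩ := exists_elementaryGenerators_three_pow_eq_univ hp3
  refine ⟨n, hn, coe_injective ?_⟩
  rw [Finset.coe_pow, coe_image_map_lubotzkySet_union_one, hpow, coe_univ]

/-- **Diameter bound for the Lubotzky group (Corollary `cor-lubotzky`).** For any prime
`p ≠ 3`, letting `S_p ⊆ SL₂(𝔽_p)` be the reductions mod `p` of the four matrices
`[[1,±3],[0,1]]`, `[[1,0],[±3,1]]`, there is `n` with `(n : ℝ) ≤ 2^5572·log |SL₂(𝔽_p)|`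
and `(S_p ∪ {1})^(n) = SL₂(𝔽_p)`; in particular `S_p` generates `SL₂(𝔽_p)` and the Cayley
graph `C(SL₂(𝔽_p), S_p)` has diameter at most `2^5572·log |SL₂(𝔽_p)|`. -/
theorem stmt_4 (p : ℕ) [Fact p.Prime] (hp3 : p ≠ 3) :
    ∃ n : ℕ,
      (n : ℝ) ≤ 2 ^ 5572 *
        Real.log (Fintype.card (Matrix.SpecialLinearGroup (Fin 2) (ZMod p))) ∧
      ((lubotzkySet.image (Matrix.SpecialLinearGroup.map (Int.castRingHom (ZMod p))) ∪ {1}) ^ n :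
        Finset (Matrix.SpecialLinearGroup (Fin 2) (ZMod p))) = Finset.univ := by
  obtain ⟨n, hn, hpow⟩ := stmt_4_general p hp3
  exact ⟨n, hn.trans (mul_le_mul (pow_le_pow_right₀ one_le_two (by norm_num))
    log_le_log_card_specialLinearGroup (Real.log_natCast_nonneg p) (by positivity)), hpow⟩
end
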